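/- arXiv:math/9910160 — 2 statements merged into one kernel-verified Lean document; each statement's English description precedes it below -/
import Mathlib

section
/- There is an absolute constant C such that for every n ≥ 1, every n-dimensional real normed space X that has type 2 with constant T ≥ 1, and every continuous function f : B_X → ℝ with ω₃(f;B_X) ≤ 1, there exists a function φ(x) = c + x*(x) + q(x), where c ∈ ℝ, x* is a linear functional and q a quadratic form on X, with sup_{x∈B_X} |f(x) − φ(x)| ≤ C T² log(n+1). (Upper bound of Theorem 4.5: w₃(X) ≤ C T₂(X)² log(n+1).) -/
open Finset

/-- `diffBound m K f c` says that the `m`-th modulus of smoothness of `f` on `K` is at most `c`,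
i.e. `|Δ_h^m f(x)| ≤ c` whenever `x, x+h, …, x+mh ∈ K`. -/
def diffBound {E : Type*} [AddCommGroup E] [Module ℝ E] (m : ℕ) (K : Set E) (f : E → ℝ)
    (c : ℝ) : Prop :=
  ∀ x h : E, (∀ j : ℕ, j ≤ m → x + (j : ℝ) • h ∈ K) →
    |∑ j ∈ Finset.range (m + 1), (-1 : ℝ) ^ (m - j) * (m.choose j : ℝ) * f (x + (j : ℝ) • h)| ≤ c

/-- `X` has (Rademacher) type 2 with constant `T`. -/
def HasType2Const (X : Type*) [NormedAddCommGroup X] [NormedSpace ℝ X] (T : ℝ) : Prop :=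
  ∀ (k : ℕ) (x : Fin k → X),
    Real.sqrt ((∑ ε : Fin k → Bool, ‖∑ i, (if ε i then (1 : ℝ) else -1) • x i‖ ^ 2) / 2 ^ k) ≤
      T * Real.sqrt (∑ i, ‖x i‖ ^ 2)

/-! Up to the constant `f 0`, a function `f` with small third differences is the sum of its odd and
even parts. A mixed third difference shows that near the origin the odd part is almost additive and
the even part almost satisfies the parallelogram law, so both are close to functions on all of `X`
that are homogeneous of degrees 1 and 2. By the Hahn–Banach and Helly theorems, a function `F` on
the unit ball is within `M` of a linear (quadratic) form as soon as `|∑ aᵢ F (xᵢ)| ≤ M ∑ |aᵢ|` for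
all `aᵢ` and at most `n + 1` (`n² + 1`) points `xᵢ` such that `∑ aᵢ L (xᵢ) = 0` for every such form
`L`.

For the linear form, summing along a binary tree gives this bound with a loss of `log n`. For the
quadratic form, let `y` consist of the `√|aᵢ| xᵢ` with `aᵢ > 0` and `z` of those with `aᵢ < 0`: the
Gaussian vectors `∑ gᵢ yᵢ` and `∑ gᵢ zᵢ` have the same covariance, hence the same law, so `F` has
the same mean on both. That mean differs little from `∑ F (yᵢ)`, respectively `∑ F (zᵢ)`: when the
sum is split in two, the parallelogram law and a sign change of one half bound the error by Gaussian
second moments, which type 2 controls, and a binary tree repeats this `O(log n)` times.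
-/

section UniformApproximation

lemma map_eq_zero_of_bddBelow_image {𝕜 E : Type*} [Field 𝕜] [LinearOrder 𝕜] [IsStrictOrderedRing 𝕜]
    [AddCommGroup E] [Module 𝕜 E] (f : Module.Dual 𝕜 E) {V : Submodule 𝕜 E}
    (hf : BddBelow (f '' V)) {z : E} (hz : z ∈ V) : f z = 0 := by
  obtain ⟨v, hv⟩ := hf
  by_contra hne
  have hlt := hv ⟨((v - 1) / f z) • z, V.smul_mem _ hz, rfl⟩
  rw [map_smul, smul_eq_mul, div_mul_cancel₀ _ hne] at hlt
  linarith

lemma exists_forall_abs_sub_le_mul_sum_eq {ι : Type*} [Fintype ι] (a b : ι → ℝ) {M : ℝ}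
    (hM : 0 ≤ M) :
    ∃ z : ι → ℝ, (∀ i, |z i - b i| ≤ M) ∧
      ∑ i, a i * z i = ∑ i, a i * b i + M * ∑ i, |a i| := by
  refine ⟨fun i => b i + M * SignType.sign (a i), fun i => ?_, ?_⟩
  · rw [add_sub_cancel_left, abs_mul, abs_of_nonneg hM]
    refine mul_le_of_le_one_right hM ?_
    rcases lt_trichotomy (a i) 0 with h | h | h <;> simp [h]
  · simp_rw [mul_sum, ← sum_add_distrib, ← self_mul_sign]
    exact sum_congr rfl fun i _ => by ring

lemma exists_mem_forall_abs_sub_le_of_fintype {ι : Type*} [Fintype ι] (V : Submodule ℝ (ι → ℝ))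
    (b : ι → ℝ) {M : ℝ} (hM : 0 ≤ M)
    (hdual : ∀ a : ι → ℝ, (∀ w ∈ V, ∑ i, a i * w i = 0) → |∑ i, a i * b i| ≤ M * ∑ i, |a i|) :
    ∃ w ∈ V, ∀ i, |b i - w i| ≤ M := by
  classical
  by_contra! hfar
  have hdisj : Disjoint (Metric.closedBall b M) (V : Set (ι → ℝ)) := by
    refine Set.disjoint_left.2 fun w hw hwV => ?_
    obtain ⟨i, hi⟩ := hfar w hwV
    rw [Metric.mem_closedBall, dist_comm, dist_pi_le_iff hM] at hw
    exact hi.not_ge (hw i)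
  obtain ⟨f, u, v, hball, huv, hV⟩ := geometric_hahn_banach_compact_closed
    (convex_closedBall b M) (isCompact_closedBall b M) V.convex
    (Submodule.closed_of_finiteDimensional V) hdisj
  let a : ι → ℝ := fun i => f fun j => if i = j then 1 else 0
  have hf : ∀ z, f z = ∑ i, a i * z i := fun z => by
    simpa only [smul_eq_mul, mul_comm] using! LinearMap.pi_apply_eq_sum_univ f.toLinearMap z
  have hv : v < 0 := by simpa only [map_zero] using hV 0 V.zero_mem
  have hperp : ∀ w ∈ V, ∑ i, a i * w i = 0 := fun w hw => hf w ▸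
    map_eq_zero_of_bddBelow_image f.toLinearMap
      ⟨v, Set.forall_mem_image.2 fun z hz => (hV z hz).le⟩ hw
  obtain ⟨z, hz, hsum⟩ := exists_forall_abs_sub_le_mul_sum_eq a b hM
  have hzu := hball z ((dist_pi_le_iff hM).2 hz)
  rw [hf, hsum] at hzu
  linarith [neg_le_of_abs_le (hdual a hperp)]

open Filter Topology in
lemma exists_mem_forall_abs_sub_le_of_finset {S : Type*} (V : Submodule ℝ (S → ℝ))
    [FiniteDimensional ℝ V] (b : S → ℝ) {M : ℝ}
    (hfin : ∀ I : Finset S, ∃ w ∈ V, ∀ s ∈ I, |b s - w s| ≤ M) :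
    ∃ w ∈ V, ∀ s, |b s - w s| ≤ M := by
  classical
  choose w hwV hw using hfin
  let U : Ultrafilter (Finset S) := Ultrafilter.of atTop
  have hlim : ∀ s, ∃ l, |b s - l| ≤ M ∧ Tendsto (fun I => w I s) U (𝓝 l) := fun s => by
    have hev : ∀ᶠ I in (U : Filter (Finset S)), w I s ∈ Metric.closedBall (b s) M :=
      Ultrafilter.of_le atTop ((eventually_finset_mem_atTop s).mono fun I hI => by
        rw [Metric.mem_closedBall']
        exact hw I s hI)
    obtain ⟨l, hl, hUl⟩ := (isCompact_closedBall (b s) M).ultrafilter_le_nhds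
      (U.map fun I => w I s) (le_principal_iff.2 hev)
    exact ⟨l, Metric.mem_closedBall'.1 hl, hUl⟩
  choose l hl hUl using hlim
  exact ⟨l, (Submodule.closed_of_finiteDimensional V).mem_of_tendsto (tendsto_pi_nhds.2 hUl)
    (Eventually.of_forall hwV), hl⟩

theorem exists_mem_forall_abs_sub_le {S : Type*} (V : Submodule ℝ (S → ℝ))
    [FiniteDimensional ℝ V] (b : S → ℝ) {M : ℝ} (hM : 0 ≤ M)
    (hdual : ∀ J : Finset S, #J ≤ Module.finrank ℝ V + 1 → ∀ a : J → ℝ,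
      (∀ w ∈ V, ∑ s : J, a s * w s = 0) → |∑ s : J, a s * b s| ≤ M * ∑ s : J, |a s|) :
    ∃ w ∈ V, ∀ s, |b s - w s| ≤ M := by
  refine exists_mem_forall_abs_sub_le_of_finset V b fun I => ?_
  let near : S → Set V := fun s =>
    (LinearMap.proj s ∘ₗ V.subtype) ⁻¹' Metric.closedBall (b s) M
  have hconvex : ∀ s ∈ I, Convex ℝ (near s) := fun s _ =>
    (convex_closedBall (b s) M).linear_preimage _
  obtain ⟨w, hw⟩ := Convex.helly_theorem' hconvex fun J _ hJ => by
    let restrictJ : (S → ℝ) →ₗ[ℝ] (J → ℝ) := LinearMap.funLeft ℝ ℝ Subtype.val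
    obtain ⟨_, ⟨w, hwV, rfl⟩, hw⟩ := exists_mem_forall_abs_sub_le_of_fintype (V.map restrictJ)
      (fun s : J => b s) hM fun a ha => hdual J hJ a fun w hw => ha _ ⟨w, hw, rfl⟩
    exact ⟨⟨w, hwV⟩, Set.mem_iInter₂.2 fun s hs => Metric.mem_closedBall'.2 (hw ⟨s, hs⟩)⟩
  exact ⟨w, w.2, fun s hs => Metric.mem_closedBall'.1 (Set.mem_iInter₂.1 hw s hs)⟩

end UniformApproximation

section DyadicSplitting

lemma abs_sub_sum_singleton_le_of_card_le_two_pow {ι : Type*} [DecidableEq ι] {φ : Finset ι → ℝ}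
    {w : ι → ℝ} (hφ : ∀ A B, Disjoint A B → |φ (A ∪ B) - φ A - φ B| ≤ ∑ i ∈ A ∪ B, w i)
    (k : ℕ) {A : Finset ι} (hA : #A ≤ 2 ^ k) : |φ A - ∑ i ∈ A, φ {i}| ≤ k * ∑ i ∈ A, w i := by
  induction k generalizing A with
  | zero =>
    have hempty : φ ∅ = 0 := by simpa using hφ ∅ ∅ (disjoint_empty_left ∅)
    obtain hA | ⟨i, rfl⟩ := Nat.le_one_iff_eq_zero_or_eq_one.1 hA |>.imp_right card_eq_one.1
    · simp [card_eq_zero.1 hA, hempty]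
    · simp
  | succ k ih =>
    obtain ⟨B, hBA, hB⟩ := exists_subset_card_eq (min_le_left #A (2 ^ k))
    have hC : #(A \ B) ≤ 2 ^ k := by
      rw [card_sdiff_of_subset hBA, hB]
      omega
    have hsplit := hφ B (A \ B) disjoint_sdiff
    rw [union_sdiff_of_subset hBA] at hsplit
    calc |φ A - ∑ i ∈ A, φ {i}|
        = |(φ A - φ B - φ (A \ B)) + (φ B - ∑ i ∈ B, φ {i})
            + (φ (A \ B) - ∑ i ∈ A \ B, φ {i})| := by
          rw [← sum_sdiff hBA]
          ring_nf
      _ ≤ ∑ i ∈ A, w i + k * ∑ i ∈ B, w i + k * ∑ i ∈ A \ B, w i :=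
          (abs_add_three _ _ _).trans <| by
            gcongr
            exacts [ih (hB.trans_le (min_le_right _ _)), ih hC]
      _ = (k + 1 : ℕ) * ∑ i ∈ A, w i := by
          rw [← sum_sdiff hBA]
          push_cast
          ring

end DyadicSplitting

lemma HasType2Const.sum_norm_sum_sq_le {X : Type*} [NormedAddCommGroup X] [NormedSpace ℝ X] {T : ℝ}
    (hX : HasType2Const X T) {ι : Type*} [Fintype ι] [DecidableEq ι] (x : ι → X) :
    ∑ ε : ι → Bool, ‖∑ i, (if ε i then (1 : ℝ) else -1) • x i‖ ^ 2 ≤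
      2 ^ Fintype.card ι * (T ^ 2 * ∑ i, ‖x i‖ ^ 2) := by
  let e := Fintype.equivFin ι
  have hfin := (Real.sqrt_le_iff.1 (hX _ (x ∘ e.symm))).2
  rw [mul_pow, Real.sq_sqrt (by positivity), div_le_iff₀' (by positivity)] at hfin
  refine (Eq.le ?_).trans (hfin.trans_eq ?_)
  · refine Fintype.sum_equiv (e.arrowCongr (Equiv.refl Bool)) _ _ fun ε => ?_
    congr 2
    exact Fintype.sum_equiv e _ _ fun i => by simp
  · congr 2
    exact (Fintype.sum_equiv e _ _ fun i => by simp).symm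

section GaussianSums

open MeasureTheory ProbabilityTheory

variable {ι : Type*} [Fintype ι] {X : Type*} [NormedAddCommGroup X] [NormedSpace ℝ X]

/-- The linear map `g ↦ ∑ gᵢ xᵢ`, to be evaluated at a standard Gaussian vector `g`. -/
noncomputable def gaussianSum (x : ι → X) : EuclideanSpace ℝ ι →L[ℝ] X :=
  ∑ i, (EuclideanSpace.proj i : EuclideanSpace ℝ ι →L[ℝ] ℝ).smulRight (x i)

/-- The expectation of `F (∑ gᵢ xᵢ)` over independent standard Gaussian variables `gᵢ`. -/
noncomputable def gaussianMean (F : X → ℝ) (x : ι → X) : ℝ :=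
  ∫ g, F (gaussianSum x g) ∂stdGaussian (EuclideanSpace ℝ ι)

lemma gaussianSum_apply (x : ι → X) (g : EuclideanSpace ℝ ι) :
    gaussianSum x g = ∑ i, g i • x i := by
  simp [gaussianSum]

lemma gaussianSum_add (x y : ι → X) : gaussianSum (x + y) = gaussianSum x + gaussianSum y := by
  ext g
  simp [gaussianSum_apply, sum_add_distrib]

lemma gaussianSum_sub (x y : ι → X) : gaussianSum (x - y) = gaussianSum x - gaussianSum y := by
  ext g
  simp [gaussianSum_apply, smul_sub]

lemma norm_comp_gaussianSum_sq (x : ι → X) (l : StrongDual ℝ X) :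
    ‖l.comp (gaussianSum x)‖ ^ 2 = ∑ i, l (x i) ^ 2 := by
  classical
  rw [(EuclideanSpace.basisFun ι ℝ).norm_dual]
  refine sum_congr rfl fun i _ => ?_
  simp [gaussianSum_apply]

lemma integral_eval_sq_stdGaussian (i : ι) :
    ∫ g, g i ^ 2 ∂stdGaussian (EuclideanSpace ℝ ι) = 1 := by
  classical
  let coord : StrongDual ℝ (EuclideanSpace ℝ ι) := EuclideanSpace.proj i
  have hvar := variance_dual_stdGaussian coord
  rw [variance_of_integral_eq_zero (by fun_prop) (integral_strongDual_stdGaussian coord),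
    (EuclideanSpace.basisFun ι ℝ).norm_dual] at hvar
  simpa [coord, Pi.single_apply] using hvar

lemma integrable_eval_sq_stdGaussian (i : ι) :
    Integrable (fun g => g i ^ 2) (stdGaussian (EuclideanSpace ℝ ι)) :=
  Integrable.of_integral_ne_zero (by simp [integral_eval_sq_stdGaussian])

lemma gaussianMean_indicator_singleton {F : X → ℝ} (hhom : ∀ (s : ℝ) x, F (s • x) = s ^ 2 * F x)
    (x : ι → X) (i : ι) : gaussianMean F (Set.indicator {i} x) = F (x i) := by
  classical
  have hsum : ∀ g, gaussianSum (Set.indicator {i} x) g = g i • x i := fun g => by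
    rw [gaussianSum_apply, Fintype.sum_eq_single i fun j hj => by simp [hj],
      Set.indicator_of_mem (Set.mem_singleton i)]
  simp only [gaussianMean, hsum, hhom, integral_mul_const, integral_eval_sq_stdGaussian, one_mul]

variable [MeasurableSpace X] [BorelSpace X]

lemma map_gaussianSum_eq [CompleteSpace X] [SecondCountableTopology X] {x y : ι → X}
    (h : ∀ l : StrongDual ℝ X, ∑ i, l (x i) ^ 2 = ∑ i, l (y i) ^ 2) :
    (stdGaussian (EuclideanSpace ℝ ι)).map (gaussianSum x) =
      (stdGaussian (EuclideanSpace ℝ ι)).map (gaussianSum y) := by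
  refine Measure.ext_of_charFunDual (funext fun l => ?_)
  have hnorm : ‖l.comp (gaussianSum x)‖ ^ 2 = ‖l.comp (gaussianSum y)‖ ^ 2 := by
    rw [norm_comp_gaussianSum_sq, norm_comp_gaussianSum_sq, h]
  simp only [charFunDual_map, charFunDual_stdGaussian]
  norm_cast
  rw [hnorm]

lemma gaussianMean_eq_of_sum_sq_eq [CompleteSpace X] [SecondCountableTopology X] {F : X → ℝ}
    (hF : Measurable F) {x y : ι → X}
    (h : ∀ l : StrongDual ℝ X, ∑ i, l (x i) ^ 2 = ∑ i, l (y i) ^ 2) :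
    gaussianMean F x = gaussianMean F y := by
  have hmap : ∀ z : ι → X, gaussianMean F z =
      ∫ u, F u ∂(stdGaussian (EuclideanSpace ℝ ι)).map (gaussianSum z) := fun z =>
    (integral_map (gaussianSum z).continuous.aemeasurable hF.aestronglyMeasurable).symm
  rw [hmap, hmap, map_gaussianSum_eq h]

lemma integrable_comp_gaussianSum {F : X → ℝ} (hF : Measurable F) {K : ℝ}
    (hK : ∀ x, |F x| ≤ K * ‖x‖ ^ 2) (x : ι → X) :
    Integrable (fun g => F (gaussianSum x g)) (stdGaussian (EuclideanSpace ℝ ι)) := by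
  have hsq : MemLp (gaussianSum x) 2 (stdGaussian (EuclideanSpace ℝ ι)) :=
    (gaussianSum x).comp_memLp' IsGaussian.memLp_two_id
  exact ((hsq.integrable_norm_pow two_ne_zero).const_mul K).mono'
    (hF.comp (gaussianSum x).continuous.measurable).aestronglyMeasurable
    (ae_of_all _ fun g => hK _)

lemma integrable_norm_gaussianSum_sq (x : ι → X) :
    Integrable (fun g => ‖gaussianSum x g‖ ^ 2) (stdGaussian (EuclideanSpace ℝ ι)) :=
  integrable_comp_gaussianSum (F := fun u => ‖u‖ ^ 2) (K := 1) (by fun_prop) (fun u => by simp) x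

theorem HasType2Const.gaussianMean_norm_sq_le [CompleteSpace X] [SecondCountableTopology X] {T : ℝ}
    (hX : HasType2Const X T) (x : ι → X) :
    gaussianMean (‖·‖ ^ 2) x ≤ T ^ 2 * ∑ i, ‖x i‖ ^ 2 := by
  classical
  let signed (ε : ι → Bool) (y : ι → X) : ι → X := fun i => (if ε i then (1 : ℝ) else -1) • y i
  have hsigned : ∀ ε, gaussianMean (‖·‖ ^ 2) (signed ε x) = gaussianMean (‖·‖ ^ 2) x := fun ε => by
    refine gaussianMean_eq_of_sum_sq_eq (by fun_prop) fun l => sum_congr rfl fun i _ => ?_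
    rcases Bool.eq_false_or_eq_true (ε i) with h | h <;> simp [signed, h]
  have hpointwise : ∀ g : EuclideanSpace ℝ ι, ∑ ε, ‖gaussianSum (signed ε x) g‖ ^ 2 ≤
      2 ^ Fintype.card ι * (T ^ 2 * ∑ i, g i ^ 2 * ‖x i‖ ^ 2) := fun g => by
    have := hX.sum_norm_sum_sq_le fun i => g i • x i
    simpa only [norm_smul, mul_pow, Real.norm_eq_abs, sq_abs, smul_comm _ (g _),
      ← gaussianSum_apply] using this
  refine le_of_mul_le_mul_left ?_ (by positivity : (0 : ℝ) < 2 ^ Fintype.card ι)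
  calc 2 ^ Fintype.card ι * gaussianMean (‖·‖ ^ 2) x
      = ∑ ε, gaussianMean (‖·‖ ^ 2) (signed ε x) := by simp [hsigned]
    _ = ∫ g, ∑ ε, ‖gaussianSum (signed ε x) g‖ ^ 2 ∂stdGaussian (EuclideanSpace ℝ ι) :=
        (integral_finsetSum _ fun ε _ => integrable_norm_gaussianSum_sq _).symm
    _ ≤ ∫ g, 2 ^ Fintype.card ι * (T ^ 2 * ∑ i, g i ^ 2 * ‖x i‖ ^ 2)
          ∂stdGaussian (EuclideanSpace ℝ ι) :=
        integral_mono (integrable_finsetSum _ fun ε _ => integrable_norm_gaussianSum_sq _)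
          (((integrable_finsetSum _ fun i _ =>
            (integrable_eval_sq_stdGaussian i).mul_const _).const_mul _).const_mul _) hpointwise
    _ = 2 ^ Fintype.card ι * (T ^ 2 * ∑ i, ‖x i‖ ^ 2) := by
        rw [integral_const_mul, integral_const_mul, integral_finsetSum _ fun i _ =>
          (integrable_eval_sq_stdGaussian i).mul_const _]
        simp only [integral_mul_const, integral_eval_sq_stdGaussian, one_mul]

end GaussianSums

section QuasiQuadratic

open MeasureTheory ProbabilityTheory

variable {X : Type*} [NormedAddCommGroup X]

/-- `F` satisfies the parallelogram law up to an error `D (‖u‖² + ‖v‖²)`. -/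
def IsQuasiQuadratic (D : ℝ) (F : X → ℝ) : Prop :=
  ∀ u v, |F (u + v) + F (u - v) - 2 * F u - 2 * F v| ≤ D * (‖u‖ ^ 2 + ‖v‖ ^ 2)

variable [NormedSpace ℝ X] [CompleteSpace X] [SecondCountableTopology X] [MeasurableSpace X]
  [BorelSpace X] {ι : Type*} [Fintype ι] {F : X → ℝ} {T D K : ℝ}

lemma gaussianMean_sub_eq_gaussianMean_add (hF : Measurable F) {x y : ι → X}
    (hxy : ∀ i, x i = 0 ∨ y i = 0) : gaussianMean F (x - y) = gaussianMean F (x + y) := by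
  refine gaussianMean_eq_of_sum_sq_eq hF fun l => sum_congr rfl fun i _ => ?_
  rcases hxy i with h | h <;> simp [h]

lemma HasType2Const.abs_gaussianMean_add_sub_sub_le (hX : HasType2Const X T) (hD : 0 ≤ D)
    (hF : Measurable F) (hK : ∀ x, |F x| ≤ K * ‖x‖ ^ 2) (hpar : IsQuasiQuadratic D F)
    {x y : ι → X} (hxy : ∀ i, x i = 0 ∨ y i = 0) :
    |gaussianMean F (x + y) - gaussianMean F x - gaussianMean F y| ≤
      D / 2 * T ^ 2 * (∑ i, ‖x i‖ ^ 2 + ∑ i, ‖y i‖ ^ 2) := by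
  let γ := stdGaussian (EuclideanSpace ℝ ι)
  have hint : ∀ z : ι → X, Integrable (fun g => F (gaussianSum z g)) γ :=
    integrable_comp_gaussianSum hF hK
  have hdefect : 2 * (gaussianMean F (x + y) - gaussianMean F x - gaussianMean F y) =
      ∫ g, (F (gaussianSum (x + y) g) + F (gaussianSum (x - y) g)
        - 2 * F (gaussianSum x g) - 2 * F (gaussianSum y g)) ∂γ := by
    rw [integral_sub (((hint _).fun_add (hint _)).sub' ((hint x).const_mul 2))
        ((hint y).const_mul 2),
      integral_sub ((hint _).fun_add (hint _)) ((hint x).const_mul 2),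
      integral_add (hint _) (hint _), integral_const_mul, integral_const_mul]
    change _ = gaussianMean F (x + y) + gaussianMean F (x - y) - 2 * gaussianMean F x
      - 2 * gaussianMean F y
    rw [gaussianMean_sub_eq_gaussianMean_add hF hxy]
    ring
  have hbound : 2 * |gaussianMean F (x + y) - gaussianMean F x - gaussianMean F y| ≤
      D * (T ^ 2 * ∑ i, ‖x i‖ ^ 2 + T ^ 2 * ∑ i, ‖y i‖ ^ 2) := by
    calc 2 * |gaussianMean F (x + y) - gaussianMean F x - gaussianMean F y|
        = |∫ g, (F (gaussianSum (x + y) g) + F (gaussianSum (x - y) g)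
            - 2 * F (gaussianSum x g) - 2 * F (gaussianSum y g)) ∂γ| := by
          rw [← hdefect, abs_mul, abs_two]
      _ ≤ ∫ g, D * (‖gaussianSum x g‖ ^ 2 + ‖gaussianSum y g‖ ^ 2) ∂γ := by
          rw [← Real.norm_eq_abs]
          refine norm_integral_le_of_norm_le (((integrable_norm_gaussianSum_sq x).fun_add
            (integrable_norm_gaussianSum_sq y)).const_mul D) (ae_of_all _ fun g => ?_)
          simpa only [gaussianSum_add, gaussianSum_sub] using!
            hpar (gaussianSum x g) (gaussianSum y g)
      _ = D * (gaussianMean (‖·‖ ^ 2) x + gaussianMean (‖·‖ ^ 2) y) := by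
          rw [integral_const_mul, integral_add (integrable_norm_gaussianSum_sq x)
            (integrable_norm_gaussianSum_sq y)]
          rfl
      _ ≤ D * (T ^ 2 * ∑ i, ‖x i‖ ^ 2 + T ^ 2 * ∑ i, ‖y i‖ ^ 2) := by
          gcongr <;> exact hX.gaussianMean_norm_sq_le _
  linarith

lemma HasType2Const.abs_gaussianMean_sub_sum_le (hX : HasType2Const X T) (hD : 0 ≤ D)
    (hF : Measurable F) (hK : ∀ x, |F x| ≤ K * ‖x‖ ^ 2) (hpar : IsQuasiQuadratic D F)
    (hhom : ∀ (s : ℝ) x, F (s • x) = s ^ 2 * F x) {k : ℕ} (hk : Fintype.card ι ≤ 2 ^ k)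
    (x : ι → X) :
    |gaussianMean F x - ∑ i, F (x i)| ≤ k * (D / 2 * T ^ 2 * ∑ i, ‖x i‖ ^ 2) := by
  classical
  have hsum : ∀ A : Finset ι, ∑ i, ‖Set.indicator A x i‖ ^ 2 = ∑ i ∈ A, ‖x i‖ ^ 2 := fun A => by
    rw [← sum_indicator_subset _ (subset_univ A)]
    refine sum_congr rfl fun i _ => ?_
    by_cases hi : i ∈ A <;> simp [hi]
  let φ : Finset ι → ℝ := fun A => gaussianMean F (Set.indicator (A : Set ι) x)
  have hsplit : ∀ A B, Disjoint A B →
      |φ (A ∪ B) - φ A - φ B| ≤ ∑ i ∈ A ∪ B, D / 2 * T ^ 2 * ‖x i‖ ^ 2 := by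
    intro A B hAB
    simp only [φ]
    rw [coe_union, Set.indicator_union_of_disjoint (disjoint_coe.2 hAB), ← mul_sum,
      sum_union hAB, ← hsum A, ← hsum B]
    refine hX.abs_gaussianMean_add_sub_sub_le hD hF hK hpar fun i => ?_
    by_cases hi : i ∈ A
    · exact .inr (Set.indicator_of_notMem (mem_coe.not.2 (disjoint_left.1 hAB hi)) x)
    · exact .inl (Set.indicator_of_notMem (mem_coe.not.2 hi) x)
  have htree := abs_sub_sum_singleton_le_of_card_le_two_pow hsplit k (card_univ.trans_le hk)
  simp only [φ, coe_univ, Set.indicator_univ, coe_singleton, gaussianMean_indicator_singleton hhom,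
    ← mul_sum] at htree
  exact htree

lemma HasType2Const.abs_sum_mul_le (hX : HasType2Const X T) (hD : 0 ≤ D)
    (hF : Measurable F) (hK : ∀ x, |F x| ≤ K * ‖x‖ ^ 2) (hpar : IsQuasiQuadratic D F)
    (hhom : ∀ (s : ℝ) x, F (s • x) = s ^ 2 * F x) {k : ℕ} (hk : Fintype.card ι ≤ 2 ^ k)
    {a : ι → ℝ} {x : ι → X} (ha : ∀ l : StrongDual ℝ X, ∑ i, a i * l (x i) ^ 2 = 0) :
    |∑ i, a i * F (x i)| ≤ k * (D / 2 * T ^ 2 * ∑ i, |a i| * ‖x i‖ ^ 2) := by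
  let y : ι → X := fun i => √(a i)⁺ • x i
  let z : ι → X := fun i => √(a i)⁻ • x i
  have hmean : gaussianMean F y = gaussianMean F z := by
    refine gaussianMean_eq_of_sum_sq_eq hF fun l => ?_
    rw [← sub_eq_zero, ← sum_sub_distrib, ← ha l]
    refine sum_congr rfl fun i _ => ?_
    simp only [y, z, map_smul, smul_eq_mul, mul_pow, Real.sq_sqrt (posPart_nonneg _),
      Real.sq_sqrt (negPart_nonneg _)]
    rw [← sub_mul, posPart_sub_negPart]
  have hF_sub : ∑ i, a i * F (x i) = ∑ i, F (y i) - ∑ i, F (z i) := by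
    rw [← sum_sub_distrib]
    refine sum_congr rfl fun i _ => ?_
    simp only [y, z, hhom, Real.sq_sqrt (posPart_nonneg _), Real.sq_sqrt (negPart_nonneg _)]
    rw [← sub_mul, posPart_sub_negPart]
  have hnorm_add : ∑ i, |a i| * ‖x i‖ ^ 2 = ∑ i, ‖y i‖ ^ 2 + ∑ i, ‖z i‖ ^ 2 := by
    rw [← sum_add_distrib]
    refine sum_congr rfl fun i _ => ?_
    simp only [y, z, norm_smul, mul_pow, Real.norm_eq_abs, sq_abs,
      Real.sq_sqrt (posPart_nonneg _), Real.sq_sqrt (negPart_nonneg _)]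
    rw [← add_mul, posPart_add_negPart]
  have hy := abs_le.1 (hX.abs_gaussianMean_sub_sum_le hD hF hK hpar hhom hk y)
  have hz := abs_le.1 (hX.abs_gaussianMean_sub_sum_le hD hF hK hpar hhom hk z)
  rw [hF_sub, hnorm_add, abs_le]
  constructor <;> linarith [hy.1, hy.2, hz.1, hz.2]

end QuasiQuadratic

lemma exists_forall_abs_sub_map_le {W S : Type*} [AddCommGroup W] [Module ℝ W]
    [FiniteDimensional ℝ W] (e : W →ₗ[ℝ] (S → ℝ)) (b : S → ℝ) {M : ℝ} (hM : 0 ≤ M)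
    (hdual : ∀ J : Finset S, #J ≤ Module.finrank ℝ W + 1 → ∀ a : J → ℝ,
      (∀ w, ∑ s : J, a s * e w s = 0) → |∑ s : J, a s * b s| ≤ M * ∑ s : J, |a s|) :
    ∃ w, ∀ s, |b s - e w s| ≤ M := by
  obtain ⟨_, ⟨w, rfl⟩, hw⟩ := exists_mem_forall_abs_sub_le (LinearMap.range e) b hM
    fun J hJ a ha => hdual J (hJ.trans (Nat.add_le_add_right e.finrank_range_le 1)) a
      fun w => ha _ ⟨w, rfl⟩
  exact ⟨w, hw⟩

section HomogeneousApproximation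

variable {X : Type*} [NormedAddCommGroup X]

/-- `F` satisfies Cauchy's functional equation up to an error `D (‖u‖ + ‖v‖)`. -/
def IsQuasiAdditive (D : ℝ) (F : X → ℝ) : Prop :=
  ∀ u v, |F (u + v) - F u - F v| ≤ D * (‖u‖ + ‖v‖)

variable {F : X → ℝ} {D : ℝ}

lemma IsQuasiAdditive.abs_sub_sum_le (hF : IsQuasiAdditive D F) (hD : 0 ≤ D) {ι : Type*}
    {A : Finset ι} {k : ℕ} (hk : #A ≤ 2 ^ k) (x : ι → X) :
    |F (∑ i ∈ A, x i) - ∑ i ∈ A, F (x i)| ≤ k * (D * ∑ i ∈ A, ‖x i‖) := by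
  classical
  let φ : Finset ι → ℝ := fun A => F (∑ i ∈ A, x i)
  have hsplit : ∀ A B, Disjoint A B → |φ (A ∪ B) - φ A - φ B| ≤ ∑ i ∈ A ∪ B, D * ‖x i‖ := by
    intro A B hAB
    simp only [φ]
    rw [sum_union hAB, ← mul_sum, sum_union hAB]
    refine (hF _ _).trans ?_
    gcongr <;> exact norm_sum_le _ _
  have htree := abs_sub_sum_singleton_le_of_card_le_two_pow hsplit k hk
  simp only [φ, sum_singleton, ← mul_sum] at htree
  exact htree

variable [NormedSpace ℝ X] [FiniteDimensional ℝ X]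

theorem IsQuasiAdditive.exists_dual_abs_sub_le (hF : IsQuasiAdditive D F) (hD : 0 ≤ D)
    (hhom : ∀ (s : ℝ) x, F (s • x) = s * F x) {k : ℕ} (hk : Module.finrank ℝ X + 1 ≤ 2 ^ k) :
    ∃ g : Module.Dual ℝ X, ∀ x ∈ Metric.closedBall (0 : X) 1, |F x - g x| ≤ k * D := by
  let S := Metric.closedBall (0 : X) 1
  let e : Module.Dual ℝ X →ₗ[ℝ] (S → ℝ) := LinearMap.pi fun x => LinearMap.applyₗ (x : X)
  obtain ⟨g, hg⟩ := exists_forall_abs_sub_map_le e (fun x : S => F x) (M := k * D) (by positivity)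
    fun J hJ a ha => by
      have hsum : ∑ x : J, a x • (x : X) = 0 :=
        (Module.forall_dual_apply_eq_zero_iff ℝ _).1 fun g => by
          simpa only [map_sum, map_smul] using! ha g
      have hF0 : F 0 = 0 := by simpa using hhom 0 0
      rw [Subspace.dual_finrank_eq] at hJ
      have htree := hF.abs_sub_sum_le hD (A := univ) (by simpa using hJ.trans hk)
        fun x : J => a x • (x : X)
      simp only [hsum, hF0, hhom, zero_sub, abs_neg, norm_smul, Real.norm_eq_abs] at htree
      refine htree.trans ?_
      rw [← mul_assoc]
      gcongr with x
      exact mul_le_of_le_one_right (abs_nonneg _) (mem_closedBall_zero_iff.1 x.1.2)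
  exact ⟨g, fun x hx => hg ⟨x, hx⟩⟩

theorem HasType2Const.exists_quadraticForm_abs_sub_le [MeasurableSpace X] [BorelSpace X]
    {T K : ℝ} (hX : HasType2Const X T) (hD : 0 ≤ D) (hF : Measurable F)
    (hK : ∀ x, |F x| ≤ K * ‖x‖ ^ 2) (hpar : IsQuasiQuadratic D F)
    (hhom : ∀ (s : ℝ) x, F (s • x) = s ^ 2 * F x) {k : ℕ}
    (hk : Module.finrank ℝ X * Module.finrank ℝ X + 1 ≤ 2 ^ k) :
    ∃ Q : QuadraticForm ℝ X, ∀ x ∈ Metric.closedBall (0 : X) 1,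
      |F x - Q x| ≤ k * (D / 2 * T ^ 2) := by
  have := FiniteDimensional.complete ℝ X
  have := FiniteDimensional.proper ℝ X
  let S := Metric.closedBall (0 : X) 1
  let e : (X →ₗ[ℝ] Module.Dual ℝ X) →ₗ[ℝ] (S → ℝ) :=
    LinearMap.pi fun x => LinearMap.applyₗ (x : X) ∘ₗ LinearMap.applyₗ (x : X)
  obtain ⟨B, hB⟩ := exists_forall_abs_sub_map_le (W := X →ₗ[ℝ] Module.Dual ℝ X) e
    (fun x : S => F x) (M := k * (D / 2 * T ^ 2)) (by positivity) fun J hJ a ha => by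
      have hdim : Module.finrank ℝ (X →ₗ[ℝ] Module.Dual ℝ X) =
          Module.finrank ℝ X * Module.finrank ℝ X := by
        rw [Module.finrank_linearMap ℝ ℝ X (Module.Dual ℝ X), Subspace.dual_finrank_eq]
      rw [hdim] at hJ
      refine (hX.abs_sum_mul_le hD hF hK hpar hhom (by simpa using hJ.trans hk)
        fun l => ?_).trans ?_
      · simpa only [pow_two] using! ha (LinearMap.BilinForm.linMulLin l.toLinearMap l.toLinearMap)
      · rw [← mul_assoc, ← mul_assoc]
        gcongr with x
        exact mul_le_of_le_one_right (abs_nonneg _)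
          (pow_le_one₀ (norm_nonneg _) (mem_closedBall_zero_iff.1 x.1.2))
  exact ⟨LinearMap.BilinMap.toQuadraticMap B, fun x hx => hB ⟨x, hx⟩⟩

end HomogeneousApproximation

section ThirdDifferences

lemma diffBound.nonneg {E : Type*} [AddCommGroup E] [Module ℝ E] {m : ℕ} {K : Set E} {f : E → ℝ}
    {δ : ℝ} (hf : diffBound m K f δ) (hK : K.Nonempty) : 0 ≤ δ := by
  obtain ⟨x, hx⟩ := hK
  exact (abs_nonneg _).trans (hf x 0 fun j _ => by simpa using hx)

lemma diffBound.abs_third_difference_le {E : Type*} [AddCommGroup E] [Module ℝ E] {K : Set E}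
    {f : E → ℝ} {δ : ℝ} (hf : diffBound 3 K f δ) (hK : Convex ℝ K) {x h p₁ p₂ p₃ : E}
    (h₁ : p₁ = x + h) (h₂ : p₂ = x + (2 : ℝ) • h) (h₃ : p₃ = x + (3 : ℝ) • h) (hx : x ∈ K)
    (hp₃ : p₃ ∈ K) : |f p₃ - 3 * f p₂ + 3 * f p₁ - f x| ≤ δ := by
  have hdiff := hf x h fun j hj => by
    have hj3 : (j : ℝ) ≤ 3 := mod_cast hj
    convert hK.add_smul_sub_mem hx hp₃ (t := j / 3) ⟨by positivity, by linarith⟩ using 1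
    rw [h₃]
    module
  convert hdiff using 2
  simp [sum_range_succ, ← h₁, ← h₂, ← h₃, Nat.choose]
  ring

variable {X : Type*} [NormedAddCommGroup X] [NormedSpace ℝ X] {f : X → ℝ} {δ : ℝ}

lemma norm_smul_add_smul_add_smul_le {a b c : X} {α β γ p q r : ℝ} (hα : |α| ≤ p) (hβ : |β| ≤ q)
    (hγ : |γ| ≤ r) : ‖α • a + β • b + γ • c‖ ≤ p * ‖a‖ + q * ‖b‖ + r * ‖c‖ := by
  refine norm_add₃_le.trans ?_
  simp only [norm_smul, Real.norm_eq_abs]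
  gcongr

-- In the alternating sum over `(s, t, u) ∈ {0, 1}³` of the third differences based at
-- `s a + t b + u c` with step `-(s a + t/2 b + u/3 c)`, each of the other three points misses one
-- of the parameters, so its contributions cancel.
lemma diffBound.abs_mixed_difference_le (hf : diffBound 3 (Metric.closedBall 0 1) f δ) {a b c : X}
    (habc : 2 * ‖a‖ + ‖b‖ + ‖c‖ ≤ 1) :
    |f (a + b + c) - f (a + b) - f (a + c) - f (b + c) + f a + f b + f c - f 0| ≤ 7 * δ := by
  have hdiff : ∀ {s t u : ℝ}, s ∈ Set.Icc 0 1 → t ∈ Set.Icc 0 1 → u ∈ Set.Icc 0 1 →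
      |f ((-2 * s) • a + (-t / 2) • b) - 3 * f ((-s) • a + (u / 3) • c)
        + 3 * f ((t / 2) • b + (2 * u / 3) • c) - f (s • a + t • b + u • c)| ≤ δ := by
    rintro s t u ⟨hs₀, hs₁⟩ ⟨ht₀, ht₁⟩ ⟨hu₀, hu₁⟩
    refine hf.abs_third_difference_le (convex_closedBall 0 1)
      (h := -(s • a + (t / 2) • b + (u / 3) • c)) (by module) (by module) (by module) ?_ ?_ <;>
      rw [mem_closedBall_zero_iff]
    · refine (norm_smul_add_smul_add_smul_le (p := 2) (q := 1) (r := 1) ?_ ?_ ?_).trans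
        (by linarith) <;> rw [abs_le] <;> constructor <;> linarith
    · rw [← add_zero (_ + _), ← zero_smul ℝ c]
      refine (norm_smul_add_smul_add_smul_le (p := 2) (q := 1) (r := 1) ?_ ?_ ?_).trans
        (by linarith) <;> rw [abs_le] <;> constructor <;> linarith
  have h0 : (0 : ℝ) ∈ Set.Icc 0 1 := by simp
  have h1 : (1 : ℝ) ∈ Set.Icc 0 1 := by simp
  have h₁ := hdiff h1 h0 h0
  have h₂ := hdiff h0 h1 h0
  have h₃ := hdiff h0 h0 h1
  have h₁₂ := hdiff h1 h1 h0
  have h₁₃ := hdiff h1 h0 h1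
  have h₂₃ := hdiff h0 h1 h1
  have h₁₂₃ := hdiff h1 h1 h1
  simp only [mul_one, mul_zero, neg_zero, zero_div, zero_smul, add_zero, zero_add, one_smul]
    at h₁ h₂ h₃ h₁₂ h₁₃ h₂₃ h₁₂₃
  rw [abs_le] at *
  constructor <;> linarith

end ThirdDifferences

section Parity

/-- The even part of `f`, normalised to vanish at the origin. -/
noncomputable def evenPart {X : Type*} [AddGroup X] (f : X → ℝ) (x : X) : ℝ :=
  (f x + f (-x)) / 2 - f 0

/-- The odd part of `f`. -/
noncomputable def oddPart {X : Type*} [AddGroup X] (f : X → ℝ) (x : X) : ℝ :=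
  (f x - f (-x)) / 2

lemma evenPart_neg {X : Type*} [AddGroup X] (f : X → ℝ) (x : X) :
    evenPart f (-x) = evenPart f x := by
  simp [evenPart, add_comm]

lemma oddPart_neg {X : Type*} [AddGroup X] (f : X → ℝ) (x : X) :
    oddPart f (-x) = -oddPart f x := by
  simp only [oddPart, neg_neg]
  ring

lemma apply_eq_add_oddPart_add_evenPart {X : Type*} [AddGroup X] (f : X → ℝ) (x : X) :
    f x = f 0 + oddPart f x + evenPart f x := by
  simp only [oddPart, evenPart]
  ring

variable {X : Type*} [NormedAddCommGroup X] [NormedSpace ℝ X] {f : X → ℝ} {δ : ℝ}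

lemma diffBound.abs_doubling_difference_le (hf : diffBound 3 (Metric.closedBall 0 1) f δ) {u : X}
    (hu : ‖u‖ ≤ 1 / 2) : |f ((2 : ℝ) • u) - 3 * f u + 3 * f 0 - f (-u)| ≤ δ := by
  refine hf.abs_third_difference_le (convex_closedBall 0 1) (h := u) (by module) (by module)
    (by module) ?_ ?_ <;> rw [mem_closedBall_zero_iff]
  · rw [norm_neg]
    linarith
  · rw [norm_smul, Real.norm_two]
    linarith

lemma diffBound.abs_evenPart_two_smul_sub_le (hf : diffBound 3 (Metric.closedBall 0 1) f δ)
    {u : X} (hu : ‖u‖ ≤ 1 / 2) : |evenPart f ((2 : ℝ) • u) - 2 ^ 2 * evenPart f u| ≤ δ := by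
  have hpos := abs_le.1 (hf.abs_doubling_difference_le hu)
  have hneg := abs_le.1 (hf.abs_doubling_difference_le ((norm_neg u).trans_le hu))
  rw [smul_neg, neg_neg] at hneg
  simp only [evenPart]
  rw [abs_le]
  constructor <;> linarith

lemma diffBound.abs_oddPart_two_smul_sub_le (hf : diffBound 3 (Metric.closedBall 0 1) f δ)
    {u : X} (hu : ‖u‖ ≤ 1 / 2) : |oddPart f ((2 : ℝ) • u) - 2 ^ 1 * oddPart f u| ≤ δ := by
  have hpos := abs_le.1 (hf.abs_doubling_difference_le hu)
  have hneg := abs_le.1 (hf.abs_doubling_difference_le ((norm_neg u).trans_le hu))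
  rw [smul_neg, neg_neg] at hneg
  simp only [oddPart]
  rw [abs_le]
  constructor <;> linarith

lemma diffBound.abs_evenPart_parallelogram_le (hf : diffBound 3 (Metric.closedBall 0 1) f δ)
    {u v : X} (hu : ‖u‖ ≤ 1 / 4) (hv : ‖v‖ ≤ 1 / 4) :
    |evenPart f (u + v) + evenPart f (u - v) - 2 * evenPart f u - 2 * evenPart f v| ≤ 7 * δ := by
  have hpos := hf.abs_mixed_difference_le (a := u) (b := v) (c := -u) (by rw [norm_neg]; linarith)
  have hneg := hf.abs_mixed_difference_le (a := -u) (b := -v) (c := u)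
    (by rw [norm_neg, norm_neg]; linarith)
  rw [add_neg_cancel_comm, add_neg_cancel, show v + -u = -(u - v) by abel] at hpos
  rw [show -u + -v + u = -v by abel, neg_add_cancel, ← neg_add, neg_add_eq_sub] at hneg
  simp only [evenPart]
  rw [abs_le] at *
  constructor <;> linarith

lemma diffBound.abs_oddPart_add_sub_sub_le (hf : diffBound 3 (Metric.closedBall 0 1) f δ)
    {u v : X} (hu : ‖u‖ ≤ 1 / 8) (hv : ‖v‖ ≤ 1 / 8) :
    |oddPart f (u + v) - oddPart f u - oddPart f v| ≤ 7 / 2 * δ := by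
  have hmixed := hf.abs_mixed_difference_le (a := u) (b := v) (c := -(u + v))
    (by rw [norm_neg]; linarith [norm_add_le u v])
  rw [add_neg_cancel, show u + -(u + v) = -v by abel, show v + -(u + v) = -u by abel] at hmixed
  simp only [oddPart]
  rw [abs_le] at *
  constructor <;> linarith

end Parity

section Rays

lemma le_div_one_sub_of_forall_le_mul_add {α : Type*} {S : Set α} {g : α → ℝ}
    (hg : BddAbove (g '' S)) {r c : ℝ} (hr : r < 1)
    (hstep : ∀ K, (∀ x ∈ S, g x ≤ K) → ∀ x ∈ S, g x ≤ r * K + c) {x : α} (hx : x ∈ S) :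
    g x ≤ c / (1 - r) := by
  let K := sSup (g '' S)
  have hK : ∀ y ∈ S, g y ≤ K := fun y hy => le_csSup hg (Set.mem_image_of_mem g hy)
  have hKK : K ≤ r * K + c := csSup_le (Set.Nonempty.image g ⟨x, hx⟩)
    (Set.forall_mem_image.2 (hstep K hK))
  refine (hK x hx).trans ((le_div_iff₀ (sub_pos.2 hr)).2 ?_)
  linarith

lemma abs_le_of_doubling_of_folding {ψ : ℝ → ℝ} {q m r δ η : ℝ}
    (hψ : BddAbove ((fun t => |ψ t|) '' Set.Icc 0 1)) (hη : 0 ≤ η) (hq : 0 < q) (hr : r < 1)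
    (hqr : 1 ≤ r * q) (hmr : m ≤ r * q)
    (hdouble : ∀ s ∈ Set.Icc (0 : ℝ) (1 / 2), |ψ (2 * s) - q * ψ s| ≤ δ)
    (hfold : ∀ K, (∀ s ∈ Set.Icc (0 : ℝ) (1 / 2), |ψ s| ≤ K) →
      ∀ t ∈ Set.Icc (1 / 2 : ℝ) 1, |ψ t| ≤ m * K + η) {t : ℝ} (ht : t ∈ Set.Icc (0 : ℝ) 1) :
    |ψ t| ≤ (r * δ + η) / (1 - r) := by
  refine le_div_one_sub_of_forall_le_mul_add hψ hr (fun K hK t ht => ?_) ht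
  have hhalf : ∀ s ∈ Set.Icc (0 : ℝ) (1 / 2), |ψ s| ≤ (K + δ) / q := fun s hs => by
    have hdiff := abs_le.1 (hdouble s hs)
    have hK2s := abs_le.1 (hK (2 * s) ⟨by linarith [hs.1], by linarith [hs.2]⟩)
    rw [le_div_iff₀' hq, ← abs_of_pos hq, ← abs_mul, abs_le]
    constructor <;> linarith
  have hKδ : 0 ≤ (K + δ) / q := (abs_nonneg _).trans (hhalf 0 (by simp))
  have hscale : ∀ {p}, p ≤ r * q → p * ((K + δ) / q) ≤ r * (K + δ) := fun hp =>
    (mul_le_mul_of_nonneg_right hp hKδ).trans_eq (by field_simp)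
  rcases le_total t (1 / 2) with h | h
  · linarith [hhalf t ⟨ht.1, h⟩, hscale hqr]
  · linarith [hfold _ hhalf t ⟨h, ht.2⟩, hscale hmr]

/-- The deviation of `f` from homogeneity of degree `d` along the ray through `y`. -/
noncomputable def homogeneityDefect {X : Type*} [SMul ℝ X] (d : ℕ) (f : X → ℝ) (y : X) (t : ℝ) :
    ℝ :=
  f (t • y) - t ^ d * f y

lemma homogeneityDefect_one {X : Type*} [MulAction ℝ X] (d : ℕ) (f : X → ℝ) (y : X) :
    homogeneityDefect d f y 1 = 0 := by
  simp [homogeneityDefect]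

lemma homogeneityDefect_two_mul_sub {X : Type*} [MulAction ℝ X] (d : ℕ) (f : X → ℝ) (y : X)
    (s : ℝ) :
    homogeneityDefect d f y (2 * s) - 2 ^ d * homogeneityDefect d f y s =
      f ((2 : ℝ) • s • y) - 2 ^ d * f (s • y) := by
  simp only [homogeneityDefect, smul_smul, mul_pow]
  ring

variable {X : Type*} [NormedAddCommGroup X] [NormedSpace ℝ X] {f : X → ℝ} {δ : ℝ}

lemma norm_smul_le_of_mem_Icc {c t R : ℝ} {y : X} (ht : t ∈ Set.Icc 0 c) (hy : ‖y‖ ≤ R) :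
    ‖t • y‖ ≤ c * R := by
  rw [norm_smul, Real.norm_of_nonneg ht.1]
  exact mul_le_mul ht.2 hy (norm_nonneg y) (ht.1.trans ht.2)

lemma bddAbove_abs_homogeneityDefect {M R : ℝ}
    (hM : ∀ x ∈ Metric.closedBall (0 : X) R, |f x| ≤ M) (d : ℕ) {y : X} (hy : ‖y‖ ≤ R) :
    BddAbove ((fun t => |homogeneityDefect d f y t|) '' Set.Icc 0 1) := by
  refine ⟨M + M, Set.forall_mem_image.2 fun t ht => (abs_sub _ _).trans (add_le_add ?_ ?_)⟩
  · refine hM _ (mem_closedBall_zero_iff.2 ?_)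
    simpa only [one_mul] using norm_smul_le_of_mem_Icc ht hy
  · rw [abs_mul, abs_of_nonneg (pow_nonneg ht.1 d)]
    exact (mul_le_of_le_one_left (abs_nonneg _) (pow_le_one₀ ht.1 ht.2)).trans
      (hM y (mem_closedBall_zero_iff.2 hy))

lemma diffBound.abs_homogeneityDefect_evenPart_fold_le
    (hf : diffBound 3 (Metric.closedBall 0 1) f δ) {y : X} (hy : ‖y‖ ≤ 1 / 4) {t : ℝ}
    (ht : t ∈ Set.Icc (1 / 2) 1) :
    |homogeneityDefect 2 (evenPart f) y t + homogeneityDefect 2 (evenPart f) y (1 - t)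
      - 2 * homogeneityDefect 2 (evenPart f) y (1 / 2)
      - 2 * homogeneityDefect 2 (evenPart f) y (t - 1 / 2)| ≤ 7 * δ := by
  have hhalf : ∀ s ∈ Set.Icc (0 : ℝ) (1 / 2), ‖s • y‖ ≤ 1 / 4 := fun s hs =>
    (norm_smul_le_of_mem_Icc hs hy).trans (by norm_num)
  have hpar := hf.abs_evenPart_parallelogram_le (hhalf (1 / 2) ⟨by norm_num, le_rfl⟩)
    (hhalf (t - 1 / 2) ⟨by linarith [ht.1], by linarith [ht.2]⟩)
  rw [← add_smul, ← sub_smul, add_sub_cancel, show (1 / 2 - (t - 1 / 2) : ℝ) = 1 - t by ring]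
    at hpar
  convert hpar using 2
  simp only [homogeneityDefect]
  ring

lemma diffBound.abs_homogeneityDefect_oddPart_fold_le
    (hf : diffBound 3 (Metric.closedBall 0 1) f δ) {y : X} (hy : ‖y‖ ≤ 1 / 4) {t : ℝ}
    (ht : t ∈ Set.Icc (1 / 2) 1) :
    |homogeneityDefect 1 (oddPart f) y t - homogeneityDefect 1 (oddPart f) y (1 / 2)
      - homogeneityDefect 1 (oddPart f) y (t - 1 / 2)| ≤ 7 / 2 * δ := by
  have hhalf : ∀ s ∈ Set.Icc (0 : ℝ) (1 / 2), ‖s • y‖ ≤ 1 / 8 := fun s hs =>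
    (norm_smul_le_of_mem_Icc hs hy).trans (by norm_num)
  have hadd := hf.abs_oddPart_add_sub_sub_le (hhalf (1 / 2) ⟨by norm_num, le_rfl⟩)
    (hhalf (t - 1 / 2) ⟨by linarith [ht.1], by linarith [ht.2]⟩)
  rw [← add_smul, add_sub_cancel] at hadd
  convert hadd using 2
  simp only [homogeneityDefect]
  ring

lemma diffBound.abs_homogeneityDefect_evenPart_le
    (hf : diffBound 3 (Metric.closedBall 0 1) f δ) {M : ℝ}
    (hM : ∀ x ∈ Metric.closedBall (0 : X) (1 / 4), |evenPart f x| ≤ M) {y : X}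
    (hy : ‖y‖ ≤ 1 / 4) {t : ℝ} (ht : t ∈ Set.Icc (0 : ℝ) 1) :
    |homogeneityDefect 2 (evenPart f) y t| ≤ 33 * δ := by
  have hδ : 0 ≤ δ := hf.nonneg ⟨0, by simp⟩
  have hdouble : ∀ s ∈ Set.Icc (0 : ℝ) (1 / 2), |homogeneityDefect 2 (evenPart f) y (2 * s)
      - 2 ^ 2 * homogeneityDefect 2 (evenPart f) y s| ≤ δ := fun s hs => by
    rw [homogeneityDefect_two_mul_sub]
    exact hf.abs_evenPart_two_smul_sub_le ((norm_smul_le_of_mem_Icc hs hy).trans (by norm_num))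
  have hhalf := abs_le.1 (hdouble (1 / 2) ⟨by norm_num, le_rfl⟩)
  rw [mul_one_div_cancel two_ne_zero, homogeneityDefect_one] at hhalf
  refine (abs_le_of_doubling_of_folding (m := 3) (r := 3 / 4) (η := 15 / 2 * δ)
    (bddAbove_abs_homogeneityDefect hM 2 hy) (by positivity) (by norm_num) (by norm_num)
    (by norm_num) (by norm_num) hdouble (fun K hK t ht => ?_) ht).trans_eq (by ring)
  have hfold := abs_le.1 (hf.abs_homogeneityDefect_evenPart_fold_le hy ht)
  have hleft := abs_le.1 (hK (1 - t) ⟨by linarith [ht.2], by linarith [ht.1]⟩)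
  have hright := abs_le.1 (hK (t - 1 / 2) ⟨by linarith [ht.1], by linarith [ht.2]⟩)
  rw [abs_le]
  constructor <;> linarith

lemma diffBound.abs_homogeneityDefect_oddPart_le
    (hf : diffBound 3 (Metric.closedBall 0 1) f δ) {M : ℝ}
    (hM : ∀ x ∈ Metric.closedBall (0 : X) (1 / 4), |oddPart f x| ≤ M) {y : X}
    (hy : ‖y‖ ≤ 1 / 4) {t : ℝ} (ht : t ∈ Set.Icc (0 : ℝ) 1) :
    |homogeneityDefect 1 (oddPart f) y t| ≤ 9 * δ := by
  have hδ : 0 ≤ δ := hf.nonneg ⟨0, by simp⟩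
  have hdouble : ∀ s ∈ Set.Icc (0 : ℝ) (1 / 2), |homogeneityDefect 1 (oddPart f) y (2 * s)
      - 2 ^ 1 * homogeneityDefect 1 (oddPart f) y s| ≤ δ := fun s hs => by
    rw [homogeneityDefect_two_mul_sub]
    exact hf.abs_oddPart_two_smul_sub_le ((norm_smul_le_of_mem_Icc hs hy).trans (by norm_num))
  have hhalf := abs_le.1 (hdouble (1 / 2) ⟨by norm_num, le_rfl⟩)
  rw [mul_one_div_cancel two_ne_zero, homogeneityDefect_one] at hhalf
  refine (abs_le_of_doubling_of_folding (m := 1) (r := 1 / 2) (η := 4 * δ)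
    (bddAbove_abs_homogeneityDefect hM 1 hy) (by positivity) (by norm_num) (by norm_num)
    (by norm_num) (by norm_num) hdouble (fun K hK t ht => ?_) ht).trans_eq (by ring)
  have hfold := abs_le.1 (hf.abs_homogeneityDefect_oddPart_fold_le hy ht)
  have hright := abs_le.1 (hK (t - 1 / 2) ⟨by linarith [ht.1], by linarith [ht.2]⟩)
  rw [abs_le]
  constructor <;> linarith

end Rays

section RadialExtension

variable {X : Type*} [NormedAddCommGroup X] [NormedSpace ℝ X] {f F : X → ℝ} {d : ℕ} {r C δ : ℝ}

/-- The extension to all of `X`, homogeneous of degree `d` along rays, of the restriction of `f`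
to the sphere of radius `r` around the origin. -/
noncomputable def radialExtension (r : ℝ) (d : ℕ) (f : X → ℝ) (x : X) : ℝ :=
  (‖x‖ / r) ^ d * f ((‖x‖ / r)⁻¹ • x)

lemma norm_inv_norm_div_smul_le (hr : 0 ≤ r) (x : X) : ‖(‖x‖ / r)⁻¹ • x‖ ≤ r := by
  rcases eq_or_ne x 0 with rfl | hx
  · simpa using hr
  · rw [norm_smul, norm_inv, Real.norm_of_nonneg (by positivity), inv_div,
      div_mul_cancel₀ _ (norm_ne_zero_iff.2 hx)]

lemma norm_div_smul_inv_smul (hr : r ≠ 0) (x : X) : (‖x‖ / r) • (‖x‖ / r)⁻¹ • x = x := by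
  rcases eq_or_ne x 0 with rfl | hx
  · simp
  · exact smul_inv_smul₀ (div_ne_zero (norm_ne_zero_iff.2 hx) hr) x

lemma radialExtension_smul (hd : d ≠ 0) (hf : ∀ x, f (-x) = (-1) ^ d * f x) (s : ℝ) (x : X) :
    radialExtension r d f (s • x) = s ^ d * radialExtension r d f x := by
  rcases eq_or_ne s 0 with rfl | hs
  · simp [radialExtension, hd]
  have hpoint : (‖s • x‖ / r)⁻¹ • s • x = (|s|⁻¹ * s) • (‖x‖ / r)⁻¹ • x := by
    rw [norm_smul, Real.norm_eq_abs, smul_smul, smul_smul, mul_div_assoc, mul_inv]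
    ring_nf
  rw [radialExtension, radialExtension, hpoint, norm_smul, Real.norm_eq_abs, mul_div_assoc,
    mul_pow]
  rcases abs_choice s with h | h
  · rw [h, inv_mul_cancel₀ hs, one_smul, mul_assoc]
  · rw [h, inv_neg, neg_mul, inv_mul_cancel₀ hs, neg_one_smul, hf, neg_pow, mul_assoc, mul_assoc]
    have hsign : ((-1) ^ d * (-1) ^ d : ℝ) = 1 := by rw [← mul_pow]; simp
    linear_combination (s ^ d * (‖x‖ / r) ^ d * f ((‖x‖ / r)⁻¹ • x)) * hsign

lemma abs_radialExtension_le (hr : 0 ≤ r) (d : ℕ) {M : ℝ}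
    (hM : ∀ x ∈ Metric.closedBall (0 : X) r, |f x| ≤ M) (x : X) :
    |radialExtension r d f x| ≤ M / r ^ d * ‖x‖ ^ d := by
  rw [radialExtension, abs_mul, abs_of_nonneg (by positivity), div_pow, div_mul_eq_mul_div,
    div_mul_eq_mul_div, mul_comm M]
  gcongr
  exact hM _ (mem_closedBall_zero_iff.2 (norm_inv_norm_div_smul_le hr x))

lemma measurable_radialExtension [SecondCountableTopology X] [MeasurableSpace X] [BorelSpace X]
    (hr : 0 ≤ r) (d : ℕ) (hf : Measurable ((Metric.closedBall (0 : X) r).domRestrict f)) :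
    Measurable (radialExtension r d f) := by
  let p : X → Metric.closedBall (0 : X) r := fun x =>
    ⟨(‖x‖ / r)⁻¹ • x, mem_closedBall_zero_iff.2 (norm_inv_norm_div_smul_le hr x)⟩
  have hp : Measurable p := Measurable.subtype_mk (by fun_prop)
  exact ((measurable_norm.div_const r).pow_const d).mul (hf.comp hp)

lemma abs_sub_radialExtension_le_of_homogeneityDefect (hr : 0 < r)
    (hray : ∀ y : X, ‖y‖ ≤ r → ∀ t ∈ Set.Icc (0 : ℝ) 1, |homogeneityDefect d f y t| ≤ C) {x : X}
    (hx : ‖x‖ ≤ r) : |f x - radialExtension r d f x| ≤ C := by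
  simpa only [homogeneityDefect, norm_div_smul_inv_smul hr.ne'] using!
    hray _ (norm_inv_norm_div_smul_le hr.le x) (‖x‖ / r) ⟨by positivity, (div_le_one hr).2 hx⟩

lemma abs_sub_le_of_two_smul (hF : ∀ (s : ℝ) x, F (s • x) = s ^ d * F x)
    (hdouble : ∀ u, ‖u‖ ≤ r → |f ((2 : ℝ) • u) - 2 ^ d * f u| ≤ δ)
    (hC : ∀ u, ‖u‖ ≤ r → |f u - F u| ≤ C) {x : X} (hx : ‖x‖ ≤ 2 * r) :
    |f x - F x| ≤ 2 ^ d * C + δ := by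
  obtain ⟨u, rfl⟩ : ∃ u, x = (2 : ℝ) • u := ⟨(2 : ℝ)⁻¹ • x, (smul_inv_smul₀ two_ne_zero x).symm⟩
  have hu : ‖u‖ ≤ r := by
    rw [norm_smul, Real.norm_two] at hx
    linarith
  calc |f ((2 : ℝ) • u) - F ((2 : ℝ) • u)|
      = |2 ^ d * (f u - F u) + (f ((2 : ℝ) • u) - 2 ^ d * f u)| := by
        rw [hF]
        ring_nf
    _ ≤ |2 ^ d * (f u - F u)| + |f ((2 : ℝ) • u) - 2 ^ d * f u| := abs_add_le _ _
    _ ≤ 2 ^ d * C + δ := by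
        rw [abs_mul, abs_of_pos (by positivity)]
        gcongr
        exacts [hC u hu, hdouble u hu]

lemma abs_le_mul_norm_div_pow_of_homogeneous (hF : ∀ (s : ℝ) x, F (s • x) = s ^ d * F x)
    (hr : 0 < r) (hC : ∀ x, ‖x‖ ≤ r → |F x| ≤ C) (x : X) : |F x| ≤ C * (‖x‖ / r) ^ d := by
  rw [← norm_div_smul_inv_smul hr.ne' x, hF, norm_div_smul_inv_smul hr.ne', abs_mul,
    abs_of_nonneg (by positivity), mul_comm]
  gcongr
  exact hC _ (norm_inv_norm_div_smul_le hr.le x)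

lemma IsQuasiQuadratic.of_homogeneous (hF : ∀ (s : ℝ) x, F (s • x) = s ^ 2 * F x) (hr : 0 < r)
    (hC₀ : 0 ≤ C)
    (hC : ∀ u v, ‖u‖ ≤ r → ‖v‖ ≤ r → |F (u + v) + F (u - v) - 2 * F u - 2 * F v| ≤ C) :
    IsQuasiQuadratic (C / r ^ 2) F := by
  intro u v
  have hmax := abs_le_mul_norm_div_pow_of_homogeneous (d := 2)
    (F := fun z : X × X => F (z.1 + z.2) + F (z.1 - z.2) - 2 * F z.1 - 2 * F z.2)
    (fun s z => by
      simp only [Prod.smul_fst, Prod.smul_snd, ← smul_add, ← smul_sub, hF]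
      ring)
    hr (fun z hz => hC _ _ ((norm_fst_le z).trans hz) ((norm_snd_le z).trans hz)) (u, v)
  have hsq : max ‖u‖ ‖v‖ ^ 2 ≤ ‖u‖ ^ 2 + ‖v‖ ^ 2 := by
    rcases max_choice ‖u‖ ‖v‖ with h | h <;> rw [h] <;> nlinarith [sq_nonneg ‖u‖, sq_nonneg ‖v‖]
  refine hmax.trans ?_
  rw [Prod.norm_mk, div_pow, mul_div_assoc', div_mul_eq_mul_div]
  gcongr

lemma IsQuasiAdditive.of_homogeneous (hF : ∀ (s : ℝ) x, F (s • x) = s ^ 1 * F x) (hr : 0 < r)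
    (hC₀ : 0 ≤ C) (hC : ∀ u v, ‖u‖ ≤ r → ‖v‖ ≤ r → |F (u + v) - F u - F v| ≤ C) :
    IsQuasiAdditive (C / r) F := by
  intro u v
  have hmax := abs_le_mul_norm_div_pow_of_homogeneous (d := 1)
    (F := fun z : X × X => F (z.1 + z.2) - F z.1 - F z.2)
    (fun s z => by
      simp only [Prod.smul_fst, Prod.smul_snd, ← smul_add, hF]
      ring)
    hr (fun z hz => hC _ _ ((norm_fst_le z).trans hz) ((norm_snd_le z).trans hz)) (u, v)
  refine hmax.trans ?_
  rw [Prod.norm_mk, pow_one, mul_div_assoc', div_mul_eq_mul_div]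
  gcongr
  exact max_le_add_of_nonneg (norm_nonneg u) (norm_nonneg v)

end RadialExtension

section HomogeneousParts

variable {X : Type*} [NormedAddCommGroup X] {f : X → ℝ} {r M : ℝ}

lemma abs_evenPart_le (hr : 0 ≤ r) (hM : ∀ x ∈ Metric.closedBall (0 : X) r, |f x| ≤ M) {x : X}
    (hx : x ∈ Metric.closedBall (0 : X) r) : |evenPart f x| ≤ 2 * M := by
  have hpos := abs_le.1 (hM x hx)
  have hneg := abs_le.1 (hM (-x) (by simpa using hx))
  have hzero := abs_le.1 (hM 0 (by simpa using hr))
  rw [evenPart, abs_le]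
  constructor <;> linarith

lemma abs_oddPart_le (hM : ∀ x ∈ Metric.closedBall (0 : X) r, |f x| ≤ M) {x : X}
    (hx : x ∈ Metric.closedBall (0 : X) r) : |oddPart f x| ≤ M := by
  have hpos := abs_le.1 (hM x hx)
  have hneg := abs_le.1 (hM (-x) (by simpa using hx))
  rw [oddPart, abs_le]
  constructor <;> linarith

lemma measurable_domRestrict_evenPart [MeasurableSpace X] [BorelSpace X]
    (hf : Measurable ((Metric.closedBall (0 : X) r).domRestrict f)) :
    Measurable ((Metric.closedBall (0 : X) r).domRestrict (evenPart f)) := by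
  let reflect : Metric.closedBall (0 : X) r → Metric.closedBall (0 : X) r := fun x =>
    ⟨-x, mem_closedBall_zero_iff.2 ((norm_neg _).trans_le (mem_closedBall_zero_iff.1 x.2))⟩
  have hreflect : Measurable reflect := Measurable.subtype_mk (by fun_prop)
  exact ((hf.add (hf.comp hreflect)).div_const 2).sub_const (f 0)

variable [NormedSpace ℝ X] {δ T : ℝ}

lemma diffBound.isQuasiQuadratic_of_abs_evenPart_sub_le
    (hf : diffBound 3 (Metric.closedBall 0 1) f δ) {F : X → ℝ}
    (hF : ∀ (s : ℝ) x, F (s • x) = s ^ 2 * F x)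
    (hnear : ∀ x, ‖x‖ ≤ 1 / 4 → |evenPart f x - F x| ≤ 33 * δ) :
    IsQuasiQuadratic (13120 * δ) F := by
  have hδ : 0 ≤ δ := hf.nonneg ⟨0, by simp⟩
  convert IsQuasiQuadratic.of_homogeneous hF (r := 1 / 8) (C := 205 * δ) (by norm_num)
    (by positivity) fun u v hu hv => ?_ using 1
  · ring
  have hpar := abs_le.1
    (hf.abs_evenPart_parallelogram_le (hu.trans (by norm_num)) (hv.trans (by norm_num)))
  have hadd := abs_le.1 (hnear (u + v) (by linarith [norm_add_le u v]))
  have hsub := abs_le.1 (hnear (u - v) (by linarith [norm_sub_le u v]))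
  have hu := abs_le.1 (hnear u (by linarith))
  have hv := abs_le.1 (hnear v (by linarith))
  rw [abs_le]
  constructor <;> linarith

lemma diffBound.isQuasiAdditive_of_abs_oddPart_sub_le
    (hf : diffBound 3 (Metric.closedBall 0 1) f δ) {F : X → ℝ}
    (hF : ∀ (s : ℝ) x, F (s • x) = s ^ 1 * F x)
    (hnear : ∀ x, ‖x‖ ≤ 1 / 4 → |oddPart f x - F x| ≤ 9 * δ) :
    IsQuasiAdditive (244 * δ) F := by
  have hδ : 0 ≤ δ := hf.nonneg ⟨0, by simp⟩
  convert IsQuasiAdditive.of_homogeneous hF (r := 1 / 8) (C := 61 / 2 * δ) (by norm_num)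
    (by positivity) fun u v hu hv => ?_ using 1
  · ring
  have hadditive := abs_le.1 (hf.abs_oddPart_add_sub_sub_le hu hv)
  have hadd := abs_le.1 (hnear (u + v) (by linarith [norm_add_le u v]))
  have hu := abs_le.1 (hnear u (by linarith))
  have hv := abs_le.1 (hnear v (by linarith))
  rw [abs_le]
  constructor <;> linarith

theorem diffBound.exists_quadraticForm_abs_evenPart_sub_le [FiniteDimensional ℝ X]
    [MeasurableSpace X] [BorelSpace X] (hf : diffBound 3 (Metric.closedBall 0 1) f δ)
    (hX : HasType2Const X T)
    (hmeas : Measurable ((Metric.closedBall (0 : X) (1 / 4)).domRestrict f))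
    (hM : ∀ x ∈ Metric.closedBall (0 : X) (1 / 4), |f x| ≤ M) {k : ℕ}
    (hk : Module.finrank ℝ X * Module.finrank ℝ X + 1 ≤ 2 ^ k) :
    ∃ Q : QuadraticForm ℝ X, ∀ x ∈ Metric.closedBall (0 : X) 1,
      |evenPart f x - Q x| ≤ (533 + k * 6560 * T ^ 2) * δ := by
  have hδ : 0 ≤ δ := hf.nonneg ⟨0, by simp⟩
  have := FiniteDimensional.proper ℝ X
  let F := radialExtension (1 / 4) 2 (evenPart f)
  have hEven : ∀ x ∈ Metric.closedBall (0 : X) (1 / 4), |evenPart f x| ≤ 2 * M := fun x =>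
    abs_evenPart_le (by norm_num) hM
  have hhom : ∀ (s : ℝ) x, F (s • x) = s ^ 2 * F x :=
    radialExtension_smul two_ne_zero fun x => by rw [evenPart_neg, neg_one_sq, one_mul]
  have hnear : ∀ x, ‖x‖ ≤ 1 / 4 → |evenPart f x - F x| ≤ 33 * δ := fun x =>
    abs_sub_radialExtension_le_of_homogeneityDefect (by norm_num) fun y hy t =>
      hf.abs_homogeneityDefect_evenPart_le hEven hy
  have hhalf : ∀ x, ‖x‖ ≤ 1 / 2 → |evenPart f x - F x| ≤ 133 * δ := fun x hx =>
    (abs_sub_le_of_two_smul hhom (fun u hu => hf.abs_evenPart_two_smul_sub_le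
      (hu.trans (by norm_num))) hnear (hx.trans_eq (by norm_num))).trans_eq (by ring)
  obtain ⟨Q, hQ⟩ := hX.exists_quadraticForm_abs_sub_le (by positivity)
    (measurable_radialExtension (by norm_num) 2 (measurable_domRestrict_evenPart hmeas))
    (abs_radialExtension_le (by norm_num) 2 hEven)
    (hf.isQuasiQuadratic_of_abs_evenPart_sub_le hhom hnear) hhom hk
  refine ⟨Q, fun x hx => (abs_sub_le _ (F x) _).trans ?_⟩
  have hball := abs_sub_le_of_two_smul hhom (fun u hu => hf.abs_evenPart_two_smul_sub_le hu) hhalf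
    ((mem_closedBall_zero_iff.1 hx).trans_eq (by norm_num))
  linarith [hQ x hx]

theorem diffBound.exists_dual_abs_oddPart_sub_le [FiniteDimensional ℝ X]
    (hf : diffBound 3 (Metric.closedBall 0 1) f δ)
    (hM : ∀ x ∈ Metric.closedBall (0 : X) (1 / 4), |f x| ≤ M) {k : ℕ}
    (hk : Module.finrank ℝ X + 1 ≤ 2 ^ k) :
    ∃ g : Module.Dual ℝ X, ∀ x ∈ Metric.closedBall (0 : X) 1,
      |oddPart f x - g x| ≤ (39 + k * 244) * δ := by
  have hδ : 0 ≤ δ := hf.nonneg ⟨0, by simp⟩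
  let F := radialExtension (1 / 4) 1 (oddPart f)
  have hhom : ∀ (s : ℝ) x, F (s • x) = s ^ 1 * F x :=
    radialExtension_smul one_ne_zero fun x => by rw [oddPart_neg, pow_one, neg_one_mul]
  have hnear : ∀ x, ‖x‖ ≤ 1 / 4 → |oddPart f x - F x| ≤ 9 * δ := fun x =>
    abs_sub_radialExtension_le_of_homogeneityDefect (by norm_num) fun y hy t =>
      hf.abs_homogeneityDefect_oddPart_le (fun z => abs_oddPart_le hM) hy
  have hhalf : ∀ x, ‖x‖ ≤ 1 / 2 → |oddPart f x - F x| ≤ 19 * δ := fun x hx =>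
    (abs_sub_le_of_two_smul hhom (fun u hu => hf.abs_oddPart_two_smul_sub_le
      (hu.trans (by norm_num))) hnear (hx.trans_eq (by norm_num))).trans_eq (by ring)
  obtain ⟨g, hg⟩ := (hf.isQuasiAdditive_of_abs_oddPart_sub_le hhom hnear).exists_dual_abs_sub_le
    (by positivity) (fun s x => (hhom s x).trans (by rw [pow_one])) hk
  refine ⟨g, fun x hx => (abs_sub_le _ (F x) _).trans ?_⟩
  have hball := abs_sub_le_of_two_smul hhom (fun u hu => hf.abs_oddPart_two_smul_sub_le hu) hhalf
    ((mem_closedBall_zero_iff.1 hx).trans_eq (by norm_num))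
  linarith [hg x hx]

end HomogeneousParts

lemma HasType2Const.one_le {X : Type*} [NormedAddCommGroup X] [NormedSpace ℝ X] [Nontrivial X]
    {T : ℝ} (hX : HasType2Const X T) : 1 ≤ T := by
  obtain ⟨x, hx⟩ := exists_ne (0 : X)
  have hnorm : ∀ s : Bool, ‖(if s then (1 : ℝ) else -1) • x‖ = ‖x‖ := fun s => by
    cases s <;> simp
  have hone := hX 1 fun _ => x
  simp only [univ_unique, sum_singleton, hnorm, sum_const, card_singleton, one_smul,
    card_univ, Fintype.card_pi_const, Fintype.card_bool, nsmul_eq_mul, Nat.cast_pow,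
    Nat.cast_ofNat] at hone
  rw [mul_div_cancel_left₀ _ (by positivity), Real.sqrt_sq (norm_nonneg x)] at hone
  exact le_of_mul_le_mul_right ((one_mul _).trans_le hone) (norm_pos_iff.2 hx)

lemma exists_mul_self_add_one_le_two_pow {n : ℕ} (hn : 1 ≤ n) :
    ∃ k : ℕ, n * n + 1 ≤ 2 ^ k ∧ k * Real.log 2 ≤ 3 * Real.log (n + 1) := by
  let k := Nat.clog 2 (n * n + 1)
  have hclog : 2 ^ k < 2 * (n * n + 1) := by
    have hk : 0 < k := Nat.clog_pos one_lt_two (by nlinarith)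
    rw [← Nat.sub_add_cancel hk, pow_succ']
    gcongr
    exact Nat.pow_pred_clog_lt_self one_lt_two (by nlinarith)
  have hpow : (2 : ℝ) ^ k ≤ (n + 1) ^ 3 := by
    exact_mod_cast hclog.le.trans (by nlinarith [Nat.zero_le (n ^ 3), Nat.mul_le_mul hn hn])
  refine ⟨k, Nat.le_pow_clog one_lt_two _, ?_⟩
  simpa only [Real.log_pow, Nat.cast_ofNat] using Real.log_le_log (by positivity) hpow

lemma whitney_three_constant_le {n k : ℕ} (hn : 1 ≤ n)
    (hk : k * Real.log 2 ≤ 3 * Real.log (n + 1)) {T : ℝ} (hT : 1 ≤ T) :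
    39 + k * 244 + (533 + k * 6560 * T ^ 2) ≤ 35000 * T ^ 2 * Real.log (n + 1) := by
  have hlog : Real.log 2 ≤ Real.log (n + 1) :=
    Real.log_le_log two_pos (by linarith [(mod_cast hn : (1 : ℝ) ≤ n)])
  have htwo : 0.69 < Real.log 2 := by linarith [Real.log_two_gt_d9]
  have hk' : k ≤ 4.4 * Real.log (n + 1) := by nlinarith [Nat.cast_nonneg (α := ℝ) k]
  calc 39 + k * 244 + (533 + k * 6560 * T ^ 2)
      = (572 + k * 244) * 1 + k * 6560 * T ^ 2 := by ring
    _ ≤ (572 + k * 244) * T ^ 2 + k * 6560 * T ^ 2 := by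
        gcongr
        exact one_le_pow₀ hT
    _ = T ^ 2 * (572 + 6804 * k) := by ring
    _ ≤ T ^ 2 * (35000 * Real.log (n + 1)) := by
        gcongr
        linarith
    _ = 35000 * T ^ 2 * Real.log (n + 1) := by ring

theorem whitney_three_type2_upper_bound_general {X : Type*} [NormedAddCommGroup X]
    [NormedSpace ℝ X] [FiniteDimensional ℝ X] [MeasurableSpace X] [BorelSpace X] {T : ℝ}
    (hX : HasType2Const X T) {f : X → ℝ} {M δ : ℝ}
    (hmeas : Measurable ((Metric.closedBall (0 : X) 1).domRestrict f))
    (hM : ∀ x ∈ Metric.closedBall (0 : X) 1, |f x| ≤ M)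
    (hf : diffBound 3 (Metric.closedBall 0 1) f δ) :
    ∃ (c : ℝ) (g : X →ₗ[ℝ] ℝ) (B : X →ₗ[ℝ] X →ₗ[ℝ] ℝ), (∀ x y, B x y = B y x) ∧
      ∀ x ∈ Metric.closedBall (0 : X) 1, |f x - (c + g x + B x x)| ≤
        35000 * T ^ 2 * Real.log (Module.finrank ℝ X + 1) * δ := by
  obtain _ | _ := subsingleton_or_nontrivial X
  · exact ⟨f 0, 0, 0, by simp, fun x _ => by
      simp [Subsingleton.elim x 0, Module.finrank_zero_of_subsingleton]⟩
  have hn : 1 ≤ Module.finrank ℝ X := Module.finrank_pos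
  have hsub : Metric.closedBall (0 : X) (1 / 4) ⊆ Metric.closedBall 0 1 :=
    Metric.closedBall_subset_closedBall (by norm_num)
  obtain ⟨k, hk, hklog⟩ := exists_mul_self_add_one_le_two_pow hn
  obtain ⟨Q, hQ⟩ := hf.exists_quadraticForm_abs_evenPart_sub_le hX
    (hmeas.comp (measurable_inclusion hsub)) (fun x hx => hM x (hsub hx)) hk
  obtain ⟨g, hg⟩ := hf.exists_dual_abs_oddPart_sub_le (fun x hx => hM x (hsub hx))
    ((Nat.add_le_add_right (Nat.le_mul_self _) 1).trans hk)
  refine ⟨f 0, g, QuadraticMap.associated Q, QuadraticMap.associated_isSymm ℝ Q, fun x hx => ?_⟩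
  rw [QuadraticMap.associated_eq_self_apply]
  calc |f x - (f 0 + g x + Q x)|
      = |(oddPart f x - g x) + (evenPart f x - Q x)| := by
        rw [apply_eq_add_oddPart_add_evenPart f x]
        ring_nf
    _ ≤ (39 + k * 244) * δ + (533 + k * 6560 * T ^ 2) * δ :=
        (abs_add_le _ _).trans (add_le_add (hg x hx) (hQ x hx))
    _ ≤ 35000 * T ^ 2 * Real.log (Module.finrank ℝ X + 1) * δ := by
        rw [← add_mul]
        exact mul_le_mul_of_nonneg_right (whitney_three_constant_le hn hklog hX.one_le)
          (hf.nonneg ⟨0, by simp⟩)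

/-- Upper bound of Theorem 4.5: `w₃(X) ≤ C T₂(X)² log(n+1)`. -/
theorem whitney_three_type2_upper_bound :
    ∃ C : ℝ, ∀ n : ℕ, 1 ≤ n →
      ∀ (X : Type) [NormedAddCommGroup X] [NormedSpace ℝ X], FiniteDimensional ℝ X →
        Module.finrank ℝ X = n → ∀ T : ℝ, 1 ≤ T → HasType2Const X T →
          ∀ f : X → ℝ, ContinuousOn f (Metric.closedBall 0 1) →
            diffBound 3 (Metric.closedBall 0 1) f 1 →
            ∃ (c : ℝ) (g : X →ₗ[ℝ] ℝ) (B : X →ₗ[ℝ] X →ₗ[ℝ] ℝ), (∀ x y, B x y = B y x) ∧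
              ∀ x ∈ Metric.closedBall (0 : X) 1,
                |f x - (c + g x + B x x)| ≤ C * T ^ 2 * Real.log (n + 1) := by
  refine ⟨35000, ?_⟩
  rintro _ - X _ _ _ rfl T - hX f hcont hf
  have := FiniteDimensional.proper ℝ X
  borelize X
  obtain ⟨M, hM⟩ := (isCompact_closedBall (0 : X) 1).exists_bound_of_continuousOn hcont
  simpa only [mul_one] using
    whitney_three_type2_upper_bound_general hX hcont.domRestrict.measurable hM hf
end

section
/- For every integer m ≥ 2 there is a constant C = C(m) such that for every n ≥ 1, every norm ‖·‖ on ℝⁿ with closed unit ball B, and every continuous function f : B → ℝ with ω_m(f;B) ≤ 1, there exists a polynomial φ on ℝⁿ of total degree at most m−1 with sup_{x∈B} |f(x) − φ(x)| ≤ C n^{m/2 − 1} log(n+1). (Corollary 5.6: w_m^{(s)}(n) ≤ C n^{m/2−1} log(n+1).) -/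
open Finset

/-- A norm on `ι → ℝ`, given as a function with the norm axioms. -/
def IsNormFn {ι : Type*} [Fintype ι] (N : (ι → ℝ) → ℝ) : Prop :=
  (∀ x, 0 ≤ N x) ∧ (∀ x, N x = 0 ↔ x = 0) ∧ (∀ (a : ℝ) (x), N (a • x) = |a| * N x) ∧
  (∀ x y, N (x + y) ≤ N x + N y)

/-!
Sampling `f` along the dyadic dilations `f (2⁻ⁱ ·)` and interpolating (Lagrange) splits `f` into
parts that are approximately homogeneous of degrees `k = 0, …, m - 1`. For such a part `h`, the
bound on the `m`-th differences improves, by changing the step to a multiple of itself, to one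
on the differences of order `k + 1`, and `h` is up to a bounded error a multiple of its own pure
`k`-th difference `x ↦ Δ_{tx}^k h (0)`. The latter is the diagonal of the mixed difference
`(y₁, …, y_k) ↦ Δ_{ty₁} ⋯ Δ_{ty_k} h (0)`, which is additive in each variable up to a bounded
error, because its defect of additivity is a mixed difference of order `k + 1`.

It remains to approximate a quasi-additive function of `k` variables by a multilinear one. For one
variable, the Hahn–Banach and Carathéodory theorems give an error `O(log n)`. Each further variable
is expanded in a tight frame of unit vectors with `2n` elements, obtained from a determinant
maximizing configuration, which costs a factor `√(2n)`. As `k ≤ m - 1`, at most `m - 2` such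
factors occur.
-/

namespace Whitney

open Module Polynomial Metric

universe u

section CoeffNorm

/-- The `ℓ¹` norm of the coefficients of a polynomial; it controls the values of a polynomial in an
operator, or in an element of an algebra, by the values of the powers. -/
noncomputable def coeffNorm (P : ℝ[X]) : ℝ := ∑ i ∈ P.support, |P.coeff i|

theorem coeffNorm_nonneg (P : ℝ[X]) : 0 ≤ coeffNorm P := sum_nonneg fun _ _ => abs_nonneg _

theorem abs_map_le_coeffNorm_mul (φ : ℝ[X] →ₗ[ℝ] ℝ) {P : ℝ[X]} {M : ℝ}
    (h : ∀ i ≤ P.natDegree, |φ (X ^ i)| ≤ M) : |φ P| ≤ coeffNorm P * M := by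
  have expansion : φ P = ∑ i ∈ P.support, P.coeff i * φ (X ^ i) := by
    conv_lhs => rw [P.as_sum_support_C_mul_X_pow]
    simp only [map_sum, ← smul_eq_C_mul, map_smul, smul_eq_mul]
  rw [expansion, coeffNorm, sum_mul]
  refine (abs_sum_le_sum_abs _ _).trans (sum_le_sum fun i hi => ?_)
  rw [abs_mul]
  exact mul_le_mul_of_nonneg_left (h i (le_natDegree_of_mem_supp i hi)) (abs_nonneg _)

end CoeffNorm

section Pairing

variable {E : Type*}

/-- The point mass at `v`, as an element of the group algebra of `E`. Since `dirac (u + v)` is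
`dirac u * dirac v`, finite differences become products: `Δ_h^m` is `(dirac h - 1) ^ m`. -/
noncomputable def dirac (v : E) : AddMonoidAlgebra ℝ E := AddMonoidAlgebra.single v 1

/-- The integral of `f` against a finitely supported signed measure on `E`, as a bilinear form. -/
noncomputable def pair : (E → ℝ) →ₗ[ℝ] AddMonoidAlgebra ℝ E →ₗ[ℝ] ℝ :=
  LinearMap.lcomp ℝ ℝ (AddMonoidAlgebra.coeffLinearEquiv ℝ).toLinearMap ∘ₗ
    (Finsupp.llift ℝ ℝ ℝ E).toLinearMap

@[simp]
theorem pair_dirac (f : E → ℝ) (v : E) : pair f (dirac v) = f v := by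
  simp [pair, dirac, AddMonoidAlgebra.coeffLinearEquiv]

variable [AddCommGroup E]

theorem dirac_add (u v : E) : dirac (u + v) = dirac u * dirac v := by
  simp [dirac, AddMonoidAlgebra.single_mul_single]

theorem dirac_zero : dirac (0 : E) = 1 := rfl

theorem dirac_sum {ι : Type*} (s : Finset ι) (v : ι → E) :
    dirac (∑ i ∈ s, v i) = ∏ i ∈ s, dirac (v i) := by
  classical
  induction s using Finset.induction_on with
  | empty => rfl
  | insert i s hi ih => rw [sum_insert hi, prod_insert hi, dirac_add, ih]

theorem dirac_natCast_smul [Module ℝ E] (j : ℕ) (v : E) : dirac ((j : ℝ) • v) = dirac v ^ j := by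
  rw [Nat.cast_smul_eq_nsmul, ← card_range j, ← sum_const, dirac_sum, prod_const]

end Pairing

section Differences

variable {E : Type*} [AddCommGroup E] [Module ℝ E] {K : Set E} {f : E → ℝ} {m : ℕ} {c : ℝ}

theorem pair_dirac_mul_sub_one_pow (f : E → ℝ) (m : ℕ) (x h : E) :
    pair f (dirac x * (dirac h - 1) ^ m) =
      ∑ j ∈ range (m + 1), (-1 : ℝ) ^ (m - j) * (m.choose j : ℝ) * f (x + (j : ℝ) • h) := by
  rw [sub_eq_add_neg, add_pow, mul_sum, map_sum]
  refine sum_congr rfl fun j _ => ?_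
  have regroup : dirac x * (dirac h ^ j * (-1) ^ (m - j) * (m.choose j : AddMonoidAlgebra ℝ E)) =
      ((-1 : ℝ) ^ (m - j) * (m.choose j : ℝ)) • dirac (x + (j : ℝ) • h) := by
    rw [dirac_add, dirac_natCast_smul, Algebra.smul_def]
    simp only [map_mul, map_pow, map_neg, map_one, map_natCast]
    ring
  rw [regroup, map_smul, pair_dirac, smul_eq_mul]

theorem diffBound_iff_abs_pair_le : diffBound m K f c ↔ ∀ x h : E,
    (∀ j ≤ m, x + (j : ℝ) • h ∈ K) → |pair f (dirac x * (dirac h - 1) ^ m)| ≤ c := by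
  simp only [diffBound, pair_dirac_mul_sub_one_pow]

theorem _root_.diffBound.nonneg_s17 (hf : diffBound m K f c) (h0 : (0 : E) ∈ K) : 0 ≤ c :=
  (abs_nonneg _).trans (hf 0 0 fun j _ => by simpa)

theorem _root_.diffBound.mono {c' : ℝ} (hf : diffBound m K f c) (hc : c ≤ c') :
    diffBound m K f c' :=
  fun x h hx => (hf x h hx).trans hc

theorem pair_comp_smul (f : E → ℝ) (t : ℝ) (m : ℕ) (x h : E) :
    pair (fun y => f (t • y)) (dirac x * (dirac h - 1) ^ m) =
      pair f (dirac (t • x) * (dirac (t • h) - 1) ^ m) := by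
  simp only [pair_dirac_mul_sub_one_pow, smul_add, smul_comm t]

theorem abs_pair_dirac_mul_sub_one_pow_le {M : ℝ} {x h : E}
    (hf : ∀ j ≤ m, |f (x + (j : ℝ) • h)| ≤ M) :
    |pair f (dirac x * (dirac h - 1) ^ m)| ≤ 2 ^ m * M := by
  rw [pair_dirac_mul_sub_one_pow, ← Nat.cast_ofNat (n := 2), ← Nat.cast_pow,
    ← Nat.sum_range_choose m, Nat.cast_sum, sum_mul]
  refine (abs_sum_le_sum_abs _ _).trans (sum_le_sum fun j hj => ?_)
  simp only [abs_mul, abs_pow, abs_neg, abs_one, one_pow, one_mul, Nat.abs_cast]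
  exact mul_le_mul_of_nonneg_left (hf j (Nat.lt_succ_iff.mp (mem_range.mp hj))) (Nat.cast_nonneg _)

theorem monic_X_sub_one_pow (m : ℕ) : ((X - 1 : ℝ[X]) ^ m).Monic :=
  (by simpa using monic_X_sub_C (1 : ℝ) : (X - 1 : ℝ[X]).Monic).pow m

theorem _root_.diffBound.abs_pair_aeval_le (hf : diffBound m K f c) {Q : ℝ[X]}
    (hQ : (X - 1) ^ m ∣ Q) {x h : E} (hx : ∀ j ≤ Q.natDegree, x + (j : ℝ) • h ∈ K) :
    |pair f (dirac x * aeval (dirac h) Q)| ≤ coeffNorm (Q /ₘ (X - 1) ^ m) * c := by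
  obtain ⟨R, rfl⟩ := hQ
  rw [mul_divByMonic_cancel_left _ (monic_X_sub_one_pow m)]
  rcases eq_or_ne R 0 with rfl | hR
  · simp [coeffNorm]
  have natDegree_eq : ((X - 1 : ℝ[X]) ^ m * R).natDegree = m + R.natDegree := by
    rw [(monic_X_sub_one_pow m).natDegree_mul' hR, natDegree_pow, ← C_1, natDegree_X_sub_C, mul_one]
  refine abs_map_le_coeffNorm_mul (pair f ∘ₗ LinearMap.mulLeft ℝ (dirac x) ∘ₗ
    (aeval (dirac h)).toLinearMap ∘ₗ LinearMap.mulLeft ℝ ((X - 1) ^ m)) fun i hi => ?_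
  have shift : dirac x * aeval (dirac h) ((X - 1) ^ m * X ^ i : ℝ[X]) =
      dirac (x + (i : ℝ) • h) * (dirac h - 1) ^ m := by
    simp only [map_mul, map_pow, map_sub, map_one, aeval_X, dirac_add, dirac_natCast_smul]
    ring
  simp only [LinearMap.comp_apply, LinearMap.mulLeft_apply, AlgHom.toLinearMap_apply, shift]
  refine diffBound_iff_abs_pair_le.mp hf _ _ fun j hj => ?_
  rw [add_assoc, ← add_smul, ← Nat.cast_add]
  exact hx _ (by omega)

end Differences

section Dilation

variable {E : Type*} [AddCommGroup E] [Module ℝ E] {K : Set E} {f : E → ℝ} {a c M : ℝ} {k m : ℕ}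

/-- The operator `f ↦ f (· / 2)`. -/
noncomputable def dilate : Module.End ℝ (E → ℝ) := LinearMap.funLeft ℝ ℝ fun x : E => (2⁻¹ : ℝ) • x

theorem dilate_apply (f : E → ℝ) (x : E) : dilate f x = f ((2⁻¹ : ℝ) • x) := rfl

theorem dilate_pow_apply (i : ℕ) (f : E → ℝ) (x : E) :
    (dilate ^ i) f x = f ((2⁻¹ : ℝ) ^ i • x) := by
  induction i generalizing x with
  | zero => simp
  | succ i ih => rw [pow_succ', Module.End.mul_apply, dilate_apply, ih, smul_smul, pow_succ]

theorem smul_inv_two_pow_mem (hK : StarConvex ℝ 0 K) {x : E} (hx : x ∈ K) (i : ℕ) :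
    (2⁻¹ : ℝ) ^ i • x ∈ K :=
  hK.smul_mem hx (by positivity) (pow_le_one₀ (by norm_num) (by norm_num))

theorem natCast_smul_inv_two_pow_smul_mem (hK : StarConvex ℝ 0 K) {x : E} (hx : x ∈ K) {i j : ℕ}
    (hj : j ≤ 2 ^ i) : (j : ℝ) • (2⁻¹ : ℝ) ^ i • x ∈ K := by
  rw [smul_smul]
  refine hK.smul_mem hx (by positivity) ?_
  rw [inv_pow, ← div_eq_mul_inv, div_le_one (by positivity)]
  exact_mod_cast hj

theorem abs_pair_aeval_dilate_le {μ : AddMonoidAlgebra ℝ E} {P : ℝ[X]}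
    (h : ∀ i, |pair ((dilate ^ i) f) μ| ≤ M) : |pair (aeval dilate P f) μ| ≤ coeffNorm P * M :=
  abs_map_le_coeffNorm_mul
    (pair.flip μ ∘ₗ LinearMap.applyₗ f ∘ₗ (aeval (R := ℝ) (dilate (E := E))).toLinearMap)
    fun i _ => by simpa using h i

theorem abs_aeval_dilate_le (hK : StarConvex ℝ 0 K) (hf : ∀ x ∈ K, |f x| ≤ M) (P : ℝ[X]) {x : E}
    (hx : x ∈ K) : |aeval dilate P f x| ≤ coeffNorm P * M := by
  rw [← pair_dirac (aeval dilate P f)]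
  refine abs_pair_aeval_dilate_le fun i => ?_
  rw [pair_dirac, dilate_pow_apply]
  exact hf _ (smul_inv_two_pow_mem hK hx i)

theorem _root_.diffBound.aeval_dilate (hK : StarConvex ℝ 0 K) (hf : diffBound m K f c) (P : ℝ[X]) :
    diffBound m K (aeval dilate P f) (coeffNorm P * c) := by
  rw [diffBound_iff_abs_pair_le] at hf ⊢
  intro x h hx
  refine abs_pair_aeval_dilate_le fun i => ?_
  rw [show (dilate ^ i) f = fun y => f ((2⁻¹ : ℝ) ^ i • y) from funext (dilate_pow_apply i f),
    pair_comp_smul]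
  refine hf _ _ fun j hj => ?_
  rw [smul_comm, ← smul_add]
  exact smul_inv_two_pow_mem hK (hx j hj) i

/-- On `K`, the function `f` is homogeneous of degree `k` under halving, up to an error `a`. -/
def QuasiHom (k : ℕ) (K : Set E) (f : E → ℝ) (a : ℝ) : Prop :=
  ∀ x ∈ K, |f ((2⁻¹ : ℝ) • x) - (2⁻¹ : ℝ) ^ k * f x| ≤ a

theorem QuasiHom.mono (hf : QuasiHom k K f a) (ha : a ≤ c) : QuasiHom k K f c :=
  fun x hx => (hf x hx).trans ha

theorem QuasiHom.abs_aeval_dilate_sub_le (hK : StarConvex ℝ 0 K) (hf : QuasiHom k K f a) (P : ℝ[X])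
    {x : E} (hx : x ∈ K) :
    |aeval dilate P f x - P.eval ((2⁻¹ : ℝ) ^ k) * f x| ≤
      coeffNorm (P /ₘ (X - C ((2⁻¹ : ℝ) ^ k))) * a := by
  set R := P /ₘ (X - C ((2⁻¹ : ℝ) ^ k))
  have division : P = R * (X - C ((2⁻¹ : ℝ) ^ k)) + C (P.eval ((2⁻¹ : ℝ) ^ k)) := by
    conv_lhs => rw [← modByMonic_add_div P (X - C ((2⁻¹ : ℝ) ^ k)), modByMonic_X_sub_C_eq_C_eval]
    ring
  have value : aeval dilate P f x - P.eval ((2⁻¹ : ℝ) ^ k) * f x =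
      aeval dilate R (aeval dilate (X - C ((2⁻¹ : ℝ) ^ k)) f) x := by
    conv_lhs => rw [division]
    simp [Module.End.mul_apply]
  rw [value]
  refine abs_aeval_dilate_le hK (fun y hy => ?_) R hx
  simpa [dilate_apply] using hf y hy

end Dilation

section DyadicNodal

/-- The monic polynomial with roots `1, 1/2, …, 1/2^(l-1)`. -/
noncomputable def dyadicNodal (l : ℕ) : ℝ[X] := Lagrange.nodal (range l) fun i => (2⁻¹ : ℝ) ^ i

theorem dyadicNodal_succ (l : ℕ) :
    dyadicNodal (l + 1) = (X - C ((2⁻¹ : ℝ) ^ l)) * dyadicNodal l := by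
  simp only [dyadicNodal, Lagrange.nodal, prod_range_succ, mul_comm]

theorem eval_dyadicNodal_ne_zero (k : ℕ) : (dyadicNodal k).eval ((2⁻¹ : ℝ) ^ k) ≠ 0 := by
  refine Lagrange.eval_nodal_not_at_node fun i hi h => (mem_range.mp hi).ne ?_
  exact (pow_right_injective₀ (by norm_num) (by norm_num) h).symm

/-- Applying `dyadicNodal l` to the dilation operator gives a combination of values of `f` at
multiples of `x / 2 ^ l`; this is the generating polynomial of that combination. -/
noncomputable def dyadicPoly : ℕ → ℝ[X]
  | 0 => X
  | l + 1 => dyadicPoly l - C ((2⁻¹ : ℝ) ^ l) * expand ℝ 2 (dyadicPoly l)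

theorem natDegree_dyadicPoly_le (l : ℕ) : (dyadicPoly l).natDegree ≤ 2 ^ l := by
  induction l with
  | zero => simp [dyadicPoly]
  | succ l ih =>
    refine (natDegree_sub_le _ _).trans (max_le (ih.trans (Nat.pow_le_pow_right two_pos l.le_succ))
      ((natDegree_C_mul_le _ _).trans ?_))
    rw [natDegree_expand, pow_succ]
    exact Nat.mul_le_mul_right 2 ih

theorem X_sub_one_pow_succ_dvd {r : ℕ} {R : ℝ[X]} (h : R.eval 1 = 0) :
    (X - 1 : ℝ[X]) ^ (r + 1) ∣ (X - 1) ^ r * R := by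
  rw [pow_succ]
  exact mul_dvd_mul_left _ (by simpa using dvd_iff_isRoot.mpr (show IsRoot R 1 from h))

theorem X_sub_one_pow_dvd_dyadicPoly (l : ℕ) : (X - 1) ^ l ∣ dyadicPoly l := by
  induction l with
  | zero => simp
  | succ l ih =>
    obtain ⟨R, hR⟩ := ih
    have X_sq_sub_one_pow : (X ^ 2 - 1 : ℝ[X]) ^ l = (X - 1) ^ l * (X + 1) ^ l := by
      rw [← mul_pow]; ring
    have factored : dyadicPoly (l + 1) =
        (X - 1) ^ l * (R - C ((2⁻¹ : ℝ) ^ l) * ((X + 1) ^ l * expand ℝ 2 R)) := by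
      simp only [dyadicPoly, hR, map_mul, map_pow, map_sub, expand_X, map_one, X_sq_sub_one_pow]
      ring
    rw [factored]
    refine X_sub_one_pow_succ_dvd ?_
    simp only [eval_sub, eval_mul, eval_C, eval_pow, eval_add, eval_X, eval_one, expand_eval,
      one_pow]
    rw [← mul_assoc, ← mul_pow]
    norm_num

theorem exists_X_sub_one_pow_succ_dvd_sub {r : ℕ} {Q : ℝ[X]} (h : (X - 1) ^ r ∣ Q) :
    ∃ ρ : ℝ, (X - 1) ^ (r + 1) ∣ Q - C ρ * (X - 1) ^ r := by
  obtain ⟨R, rfl⟩ := h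
  refine ⟨R.eval 1, ?_⟩
  rw [mul_comm (C _), ← mul_sub]
  exact X_sub_one_pow_succ_dvd (by simp)

variable {E : Type*} [AddCommGroup E] [Module ℝ E]

theorem aeval_dilate_dyadicNodal (f : E → ℝ) (l : ℕ) (x : E) :
    aeval dilate (dyadicNodal l) f x =
      pair f (aeval (dirac ((2⁻¹ : ℝ) ^ l • x)) (dyadicPoly l)) := by
  induction l generalizing x with
  | zero => simp [dyadicNodal, dyadicPoly]
  | succ l ih =>
    have halving : dirac ((2⁻¹ : ℝ) ^ (l + 1) • x) ^ 2 = dirac ((2⁻¹ : ℝ) ^ l • x) := by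
      rw [← dirac_natCast_smul, smul_smul, pow_succ', ← mul_assoc, Nat.cast_ofNat,
        mul_inv_cancel₀ two_ne_zero, one_mul]
    calc aeval dilate (dyadicNodal (l + 1)) f x
        = aeval dilate (dyadicNodal l) f ((2⁻¹ : ℝ) • x)
          - (2⁻¹ : ℝ) ^ l * aeval dilate (dyadicNodal l) f x := by
          simp [dyadicNodal_succ, Module.End.mul_apply, dilate_apply]
      _ = _ := by
          rw [ih, ih, smul_smul, ← pow_succ, dyadicPoly, map_sub, map_sub, ← smul_eq_C_mul,
            map_smul, map_smul, expand_aeval, halving, smul_eq_mul]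

variable {K : Set E} {f : E → ℝ} {c : ℝ} {m : ℕ}

theorem _root_.diffBound.abs_aeval_dilate_dyadicNodal_le (hK : StarConvex ℝ 0 K)
    (hf : diffBound m K f c) {x : E} (hx : x ∈ K) :
    |aeval dilate (dyadicNodal m) f x| ≤ coeffNorm (dyadicPoly m /ₘ (X - 1) ^ m) * c := by
  rw [aeval_dilate_dyadicNodal, ← one_mul (aeval _ _), ← dirac_zero]
  refine hf.abs_pair_aeval_le (X_sub_one_pow_dvd_dyadicPoly m) fun j hj => ?_
  rw [zero_add]
  exact natCast_smul_inv_two_pow_smul_mem hK hx (hj.trans (natDegree_dyadicPoly_le m))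

theorem natDegree_dyadicPoly_sub_le (k : ℕ) (ρ : ℝ) :
    (dyadicPoly k - C ρ * (X - 1) ^ k).natDegree ≤ 2 ^ k := by
  refine (natDegree_sub_le _ _).trans (max_le (natDegree_dyadicPoly_le k) ?_)
  refine (natDegree_C_mul_le _ _).trans ?_
  rw [natDegree_pow, ← C_1, natDegree_X_sub_C, mul_one]
  exact k.lt_two_pow_self.le

theorem _root_.diffBound.abs_aeval_dilate_dyadicNodal_sub_le (hK : StarConvex ℝ 0 K)
    (hf : diffBound (m + 1) K f c) {ρ : ℝ}
    (hρ : (X - 1) ^ (m + 1) ∣ dyadicPoly m - C ρ * (X - 1) ^ m)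
    {x : E} (hx : x ∈ K) :
    |aeval dilate (dyadicNodal m) f x - ρ * pair f ((dirac ((2⁻¹ : ℝ) ^ m • x) - 1) ^ m)| ≤
      coeffNorm ((dyadicPoly m - C ρ * (X - 1) ^ m) /ₘ (X - 1) ^ (m + 1)) * c := by
  have as_pair : aeval dilate (dyadicNodal m) f x -
      ρ * pair f ((dirac ((2⁻¹ : ℝ) ^ m • x) - 1) ^ m) = pair f (dirac 0 *
        aeval (dirac ((2⁻¹ : ℝ) ^ m • x)) (dyadicPoly m - C ρ * (X - 1) ^ m)) := by
    rw [aeval_dilate_dyadicNodal, dirac_zero, one_mul, map_sub, map_sub, ← smul_eq_C_mul, map_smul,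
      map_smul, smul_eq_mul]
    simp only [map_pow, map_sub (aeval _), aeval_X, map_one (aeval _)]
  rw [as_pair]
  refine hf.abs_pair_aeval_le hρ fun j hj => ?_
  rw [zero_add]
  exact natCast_smul_inv_two_pow_smul_mem hK hx (hj.trans (natDegree_dyadicPoly_sub_le m ρ))

theorem exists_abs_sub_mul_pair_sub_one_pow_le (k : ℕ) : ∃ σ C : ℝ, 0 ≤ C ∧
    ∀ {E : Type u} [AddCommGroup E] [Module ℝ E] {K : Set E} {f : E → ℝ} {a : ℝ},
      StarConvex ℝ 0 K → QuasiHom k K f a → diffBound (k + 1) K f a → ∀ x ∈ K,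
        |f x - σ * pair f ((dirac ((2⁻¹ : ℝ) ^ (3 * k + 2) • x) - 1) ^ k)| ≤ C * a := by
  obtain ⟨ρ, hρ⟩ := exists_X_sub_one_pow_succ_dvd_sub (X_sub_one_pow_dvd_dyadicPoly k)
  set v : ℝ := 2⁻¹ ^ k
  set P : ℝ[X] := dyadicNodal k * X ^ (2 * k + 2)
  set A := coeffNorm (P /ₘ (X - C v))
  set B := coeffNorm ((dyadicPoly k - C ρ * (X - 1) ^ k) /ₘ (X - 1) ^ (k + 1))
  have P_ne : P.eval v ≠ 0 := by
    simpa [P] using ⟨eval_dyadicNodal_ne_zero k, fun h => absurd h (by positivity)⟩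
  refine ⟨ρ / P.eval v, (A + B) / |P.eval v|,
    div_nonneg (add_nonneg (coeffNorm_nonneg _) (coeffNorm_nonneg _)) (abs_nonneg _), ?_⟩
  intro E _ _ K f a hK hhom hf x hx
  set D := pair f ((dirac ((2⁻¹ : ℝ) ^ (3 * k + 2) • x) - 1) ^ k)
  have near_value : |aeval dilate P f x - P.eval v * f x| ≤ A * a :=
    hhom.abs_aeval_dilate_sub_le hK P hx
  have near_difference : |aeval dilate P f x - ρ * D| ≤ B * a := by
    have value : aeval dilate P f x =
        aeval dilate (dyadicNodal k) f ((2⁻¹ : ℝ) ^ (2 * k + 2) • x) := by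
      rw [show P = X ^ (2 * k + 2) * dyadicNodal k from mul_comm _ _, map_mul,
        Module.End.mul_apply, map_pow, aeval_X, dilate_pow_apply]
    have shrunk := hf.abs_aeval_dilate_dyadicNodal_sub_le hK hρ
      (smul_inv_two_pow_mem hK hx (2 * k + 2))
    rwa [← value, smul_smul, ← pow_add, show k + (2 * k + 2) = 3 * k + 2 by ring] at shrunk
  have combined : |P.eval v * (f x - ρ / P.eval v * D)| ≤ (A + B) * a := by
    have split : P.eval v * (f x - ρ / P.eval v * D) =
        (aeval dilate P f x - ρ * D) - (aeval dilate P f x - P.eval v * f x) := by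
      field_simp
      ring
    rw [split, add_mul]
    linarith [abs_sub (aeval dilate P f x - ρ * D) (aeval dilate P f x - P.eval v * f x)]
  rwa [abs_mul, ← le_div_iff₀' (abs_pos.mpr P_ne), ← div_mul_eq_mul_div] at combined

end DyadicNodal

section HomogPart

variable {m k : ℕ}

theorem X_sub_C_mul_basis (hk : k ∈ range m) :
    (X - C ((2⁻¹ : ℝ) ^ k)) * Lagrange.basis (range m) (fun i => (2⁻¹ : ℝ) ^ i) k =
      C (Lagrange.nodalWeight (range m) (fun i => (2⁻¹ : ℝ) ^ i) k) * dyadicNodal m := by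
  rw [Lagrange.basis_eq_prod_sub_inv_mul_nodal_div hk, ← Lagrange.nodal_erase_eq_nodal_div hk,
    dyadicNodal, Lagrange.nodal_eq_mul_nodal_erase hk]
  ring

variable {E : Type*} [AddCommGroup E] [Module ℝ E] {K : Set E} {f : E → ℝ} {c : ℝ}

/-- The part of `f` that is nearly homogeneous of degree `k`: the value at the dilation operator of
the Lagrange polynomial which is `1` at `2⁻¹ ^ k` and `0` at the other `2⁻¹ ^ i`, `i < m`. -/
noncomputable def homogPart (m k : ℕ) (f : E → ℝ) : E → ℝ :=
  aeval dilate (Lagrange.basis (range m) (fun i => (2⁻¹ : ℝ) ^ i) k) f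

theorem sum_homogPart (hm : m ≠ 0) (f : E → ℝ) : ∑ k ∈ range m, homogPart m k f = f := by
  have injOn : Set.InjOn (fun i => (2⁻¹ : ℝ) ^ i) (range m) :=
    (pow_right_injective₀ (by norm_num) (by norm_num)).injOn
  simp only [homogPart, ← LinearMap.sum_apply, ← map_sum,
    Lagrange.sum_basis injOn (nonempty_range_iff.mpr hm), map_one, Module.End.one_apply]

theorem _root_.diffBound.quasiHom_homogPart (hK : StarConvex ℝ 0 K) (hf : diffBound m K f c)
    (hk : k < m) : QuasiHom k K (homogPart m k f)
      (|Lagrange.nodalWeight (range m) (fun i => (2⁻¹ : ℝ) ^ i) k| *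
        (coeffNorm (dyadicPoly m /ₘ (X - 1) ^ m) * c)) := by
  intro x hx
  have defect := congrArg (fun P => aeval dilate P f x) (X_sub_C_mul_basis (mem_range.mpr hk))
  simp only [map_mul, map_sub, Module.End.mul_apply, aeval_X, aeval_C, LinearMap.sub_apply,
    Pi.sub_apply, dilate_apply, Module.algebraMap_end_apply, Pi.smul_apply, smul_eq_mul] at defect
  rw [homogPart, defect, abs_mul]
  exact mul_le_mul_of_nonneg_left (hf.abs_aeval_dilate_dyadicNodal_le hK hx) (abs_nonneg _)

end HomogPart

section StepChange

variable {E : Type*} [AddCommGroup E] [Module ℝ E] {K : Set E} {f : E → ℝ} {a c : ℝ} {k r : ℕ}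

theorem X_sub_one_pow_succ_dvd_X_pow_sub_one_pow (r M : ℕ) :
    (X - 1 : ℝ[X]) ^ (r + 1) ∣ (X ^ M - 1) ^ r - C ((M : ℝ) ^ r) * (X - 1) ^ r := by
  have factored : (X ^ M - 1 : ℝ[X]) ^ r - C ((M : ℝ) ^ r) * (X - 1) ^ r =
      (X - 1) ^ r * ((∑ i ∈ range M, X ^ i) ^ r - C ((M : ℝ) ^ r)) := by
    rw [← mul_geom_sum X M, mul_pow]
    ring
  rw [factored]
  exact X_sub_one_pow_succ_dvd (by simp [eval_finsetSum])

theorem natDegree_X_pow_sub_one_pow_sub_le (r : ℕ) {M : ℕ} (hM : M ≠ 0) :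
    ((X ^ M - 1 : ℝ[X]) ^ r - C ((M : ℝ) ^ r) * (X - 1) ^ r).natDegree ≤ M * r := by
  refine (natDegree_sub_le _ _).trans (max_le ?_ ((natDegree_C_mul_le _ _).trans ?_))
  · rw [natDegree_pow, ← C_1, natDegree_X_pow_sub_C, mul_comm]
  · rw [natDegree_pow, ← C_1, natDegree_X_sub_C, mul_one]
    exact Nat.le_mul_of_pos_left _ (Nat.pos_of_ne_zero hM)

theorem _root_.diffBound.abs_pair_step_sub_le (hf : diffBound (r + 1) K f c) {M : ℕ} (hM : M ≠ 0)
    {x h : E} (hx : ∀ j ≤ M * r, x + (j : ℝ) • h ∈ K) :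
    |pair f (dirac x * (dirac ((M : ℝ) • h) - 1) ^ r) -
        (M : ℝ) ^ r * pair f (dirac x * (dirac h - 1) ^ r)| ≤
      coeffNorm (((X ^ M - 1) ^ r - C ((M : ℝ) ^ r) * (X - 1) ^ r) /ₘ (X - 1) ^ (r + 1)) * c := by
  have as_pair : pair f (dirac x * (dirac ((M : ℝ) • h) - 1) ^ r) -
      (M : ℝ) ^ r * pair f (dirac x * (dirac h - 1) ^ r) = pair f (dirac x *
        aeval (dirac h) ((X ^ M - 1) ^ r - C ((M : ℝ) ^ r) * (X - 1) ^ r)) := by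
    rw [map_sub (aeval _), mul_sub, map_sub, ← smul_eq_C_mul, map_smul, mul_smul_comm, map_smul,
      smul_eq_mul, dirac_natCast_smul]
    simp only [map_pow, map_sub (aeval _), aeval_X, map_one (aeval _)]
  rw [as_pair]
  exact hf.abs_pair_aeval_le (X_sub_one_pow_succ_dvd_X_pow_sub_one_pow r M)
    fun j hj => hx j (hj.trans (natDegree_X_pow_sub_one_pow_sub_le r hM))

theorem QuasiHom.abs_pair_dilate_sub_le (hK : StarConvex ℝ 0 K) (hf : QuasiHom k K f a) (s : ℕ)
    {x h : E} (hx : ∀ j ≤ r, x + (j : ℝ) • h ∈ K) :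
    |pair f (dirac ((2⁻¹ : ℝ) ^ s • x) * (dirac ((2⁻¹ : ℝ) ^ s • h) - 1) ^ r) -
        ((2⁻¹ : ℝ) ^ s) ^ k * pair f (dirac x * (dirac h - 1) ^ r)| ≤
      2 ^ r * (coeffNorm (X ^ s /ₘ (X - C ((2⁻¹ : ℝ) ^ k))) * a) := by
  rw [← pair_comp_smul, ← smul_eq_mul (a := _ ^ k), ← LinearMap.smul_apply, ← map_smul,
    ← LinearMap.sub_apply, ← map_sub]
  refine abs_pair_dirac_mul_sub_one_pow_le fun j hj => ?_
  have pointwise := hf.abs_aeval_dilate_sub_le hK (X ^ s) (hx j hj)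
  rwa [map_pow, aeval_X, dilate_pow_apply, eval_pow, eval_X, ← pow_mul, mul_comm k,
    pow_mul] at pointwise

end StepChange

section LoweringTheOrder

theorem le_two_mul_of_self_improving {ι : Type*} {g : ι → ℝ} {d : ℝ} (hg : BddAbove (Set.range g))
    (h : ∀ A, (∀ i, g i ≤ A) → ∀ i, g i ≤ A / 2 + d) (i : ι) : g i ≤ 2 * d := by
  have : Nonempty ι := ⟨i⟩
  have improved : ⨆ i, g i ≤ (⨆ i, g i) / 2 + d := ciSup_le (h _ (le_ciSup hg))
  linarith [le_ciSup hg i]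

theorem starConvex_closedBall {E : Type*} [SeminormedAddCommGroup E] [NormedSpace ℝ E] {R : ℝ}
    (hR : 0 ≤ R) : StarConvex ℝ 0 (closedBall (0 : E) R) :=
  (convex_closedBall 0 R).starConvex (mem_closedBall_self hR)

theorem smul_add_natCast_smul_mem_closedBall {E : Type*} [SeminormedAddCommGroup E]
    [NormedSpace ℝ E] {x h : E} {r M i : ℕ} {t : ℝ} (hM : M ≠ 0)
    (hx : x ∈ closedBall (0 : E) 1) (hxh : x + (r : ℝ) • h ∈ closedBall (0 : E) 1)
    (hi : i ≤ M * r) (ht : t * (4 * M) = 1) :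
    t • x + (i : ℝ) • (t • h) ∈ closedBall (0 : E) 1 := by
  rw [mem_closedBall_zero_iff] at *
  have one_le_M : (1 : ℝ) ≤ M := by exact_mod_cast Nat.one_le_iff_ne_zero.mpr hM
  have t_nonneg : 0 ≤ t := by
    rw [eq_div_of_mul_eq (by positivity) ht]
    positivity
  have norm_rh : r * ‖h‖ ≤ 2 := by
    have := norm_sub_le (x + (r : ℝ) • h) x
    rw [add_sub_cancel_left, norm_smul, Real.norm_natCast] at this
    linarith
  have norm_ih : ‖(i : ℝ) • h‖ ≤ 2 * M :=
    calc ‖(i : ℝ) • h‖ = i * ‖h‖ := by rw [norm_smul, Real.norm_natCast]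
      _ ≤ (M * r) * ‖h‖ := by gcongr; exact_mod_cast hi
      _ = M * (r * ‖h‖) := mul_assoc _ _ _
      _ ≤ M * 2 := by gcongr
      _ = 2 * M := mul_comm _ _
  calc ‖t • x + (i : ℝ) • (t • h)‖ = t * ‖x + (i : ℝ) • h‖ := by
        rw [smul_comm _ t, ← smul_add, norm_smul, Real.norm_of_nonneg t_nonneg]
    _ ≤ t * (4 * M) := by gcongr; linarith [norm_add_le x ((i : ℝ) • h)]
    _ = 1 := ht

theorem four_mul_pow_le_half_pow {k r : ℕ} (hkr : k < r) :
    (4 * 2 ^ (2 * k + 1) : ℝ) ^ k ≤ (2 ^ (2 * k + 1)) ^ r / 2 := by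
  have exponents : (4 * 2 ^ (2 * k + 1) : ℝ) ^ k * 2 = (2 ^ (2 * k + 1)) ^ (k + 1) := by
    rw [show (4 : ℝ) = 2 ^ 2 by norm_num, ← pow_add, ← pow_mul, ← pow_mul, ← pow_succ]
    congr 1
    ring
  have mono : ((2 : ℝ) ^ (2 * k + 1)) ^ (k + 1) ≤ (2 ^ (2 * k + 1)) ^ r :=
    pow_le_pow_right₀ (one_le_pow₀ one_le_two) hkr
  linarith

theorem abs_le_half_add_of_contraction {T t q A d e x y z : ℝ} {k : ℕ} (ht : t * T = 1)
    (hT : 0 ≤ T) (hq : T ^ k ≤ q / 2) (hz : |z| ≤ A) (hzy : |z - q * y| ≤ d)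
    (hyx : |y - t ^ k * x| ≤ e) : |x| ≤ A / 2 + (d / 2 + T ^ k * e) := by
  have q_nonneg : 0 ≤ q := by linarith [pow_nonneg hT k]
  have bound_qy : q * |y| ≤ A + d := by
    rw [← abs_of_nonneg q_nonneg, ← abs_mul]
    linarith [abs_sub_abs_le_abs_sub (q * y) z, abs_sub_comm z (q * y)]
  calc |x| = T ^ k * |t ^ k * x| := by
        rw [← abs_of_nonneg (pow_nonneg hT k), ← abs_mul, ← mul_assoc, ← mul_pow, mul_comm T, ht,
          one_pow, one_mul]
    _ ≤ T ^ k * (|y| + e) := by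
        gcongr
        linarith [abs_sub_abs_le_abs_sub (t ^ k * x) y, abs_sub_comm y (t ^ k * x)]
    _ ≤ q / 2 * |y| + T ^ k * e := by rw [mul_add]; gcongr
    _ ≤ _ := by linarith

theorem exists_diffBound_of_diffBound_succ {k r : ℕ} (hkr : k < r) : ∃ C : ℝ, 0 ≤ C ∧
    ∀ {E : Type u} [NormedAddCommGroup E] [NormedSpace ℝ E] {f : E → ℝ} {c : ℝ},
      (∃ M, ∀ x ∈ closedBall (0 : E) 1, |f x| ≤ M) → QuasiHom k (closedBall 0 1) f c →
      diffBound (r + 1) (closedBall 0 1) f c → diffBound r (closedBall 0 1) f (C * c) := by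
  set M : ℕ := 2 ^ (2 * k + 1)
  set γ := coeffNorm
    (((X ^ M - 1) ^ r - C ((M : ℝ) ^ r) * (X - 1) ^ r) /ₘ (X - 1) ^ (r + 1))
  set δ := coeffNorm (X ^ (2 * k + 3) /ₘ (X - C ((2⁻¹ : ℝ) ^ k)))
  have γ_nonneg : 0 ≤ γ := coeffNorm_nonneg _
  have δ_nonneg : 0 ≤ δ := coeffNorm_nonneg _
  refine ⟨2 * (γ / 2 + (4 * M) ^ k * (2 ^ r * δ)), by positivity, ?_⟩
  intro E _ _ f c ⟨b, hb⟩ hhom hf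
  have hB : StarConvex ℝ 0 (closedBall (0 : E) 1) := starConvex_closedBall zero_le_one
  set t : ℝ := 2⁻¹ ^ (2 * k + 3)
  have t_mul : t * (4 * M) = 1 := by
    rw [show (4 * M : ℝ) = 2 ^ (2 * k + 3) by push_cast [M]; ring, ← mul_pow,
      inv_mul_cancel₀ two_ne_zero, one_pow]
  let Admissible : Set (E × E) := {p | ∀ j ≤ r, p.1 + (j : ℝ) • p.2 ∈ closedBall (0 : E) 1}
  let g : Admissible → ℝ := fun p => |pair f (dirac p.1.1 * (dirac p.1.2 - 1) ^ r)|
  have g_bdd : BddAbove (Set.range g) := by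
    refine ⟨2 ^ r * b, Set.forall_mem_range.mpr fun p => ?_⟩
    exact abs_pair_dirac_mul_sub_one_pow_le fun j hj => hb _ (p.2 j hj)
  have contraction (A : ℝ) (hA : ∀ p, g p ≤ A) (p : Admissible) :
      g p ≤ A / 2 + (γ * c / 2 + (4 * M) ^ k * (2 ^ r * (δ * c))) := by
    obtain ⟨⟨x, h⟩, hx⟩ := p
    have points (i : ℕ) (hi : i ≤ M * r) : t • x + (i : ℝ) • (t • h) ∈ closedBall (0 : E) 1 :=
      smul_add_natCast_smul_mem_closedBall (by positivity) (by simpa using hx 0 (Nat.zero_le r))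
        (hx r le_rfl) hi t_mul
    refine abs_le_half_add_of_contraction t_mul (by positivity) ?_
      (hA ⟨(t • x, (M : ℝ) • t • h), fun j hj => ?_⟩)
      (hf.abs_pair_step_sub_le (by positivity) points)
      (hhom.abs_pair_dilate_sub_le hB (2 * k + 3) hx)
    · exact_mod_cast four_mul_pow_le_half_pow hkr
    · simpa only [Nat.cast_mul, mul_smul] using
        points (j * M) (by rw [mul_comm j]; exact Nat.mul_le_mul_left M hj)
  refine diffBound_iff_abs_pair_le.mpr fun x h hx =>
    (le_two_mul_of_self_improving g_bdd contraction ⟨(x, h), hx⟩).trans_eq ?_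
  ring

theorem exists_diffBound_of_quasiHom {k m : ℕ} (hkm : k < m) : ∃ C : ℝ, 0 ≤ C ∧
    ∀ {E : Type u} [NormedAddCommGroup E] [NormedSpace ℝ E] {f : E → ℝ} {c : ℝ},
      (∃ M, ∀ x ∈ closedBall (0 : E) 1, |f x| ≤ M) → QuasiHom k (closedBall 0 1) f c →
      diffBound m (closedBall 0 1) f c → diffBound (k + 1) (closedBall 0 1) f (C * c) := by
  induction m, hkm using Nat.le_induction with
  | base => exact ⟨1, zero_le_one, fun {_ _ _ _ _} _ _ hf => by rwa [one_mul]⟩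
  | succ m hm ih =>
    obtain ⟨C, hC, lower_to_k⟩ := ih
    obtain ⟨C', hC', lower_once⟩ := exists_diffBound_of_diffBound_succ.{u} hm
    refine ⟨C * (1 + C'), by positivity, fun {E _ _ f c} hbdd hhom hf => ?_⟩
    have c_nonneg : 0 ≤ c := hf.nonneg_s17 (mem_closedBall_self zero_le_one)
    rw [mul_assoc]
    exact lower_to_k hbdd (hhom.mono (by nlinarith))
      ((lower_once hbdd hhom hf).mono (by nlinarith))

end LoweringTheOrder

section MixedDifference

variable {ι : Type*} [Fintype ι] {E : Type*} [AddCommGroup E] {f : E → ℝ} {M : ℝ}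

/-- The mixed difference at the origin with increments `y i`, as an element of the group algebra:
`pair f (mixedDiff y)` is `Δ_{y 1} ⋯ Δ_{y k} f (0)`. -/
noncomputable def mixedDiff (y : ι → E) : AddMonoidAlgebra ℝ E := ∏ i, (dirac (y i) - 1)

theorem mixedDiff_const (k : ℕ) (h : E) : mixedDiff (fun _ : Fin k => h) = (dirac h - 1) ^ k := by
  simp [mixedDiff]

theorem mixedDiff_eq_zero {y : ι → E} {i : ι} (hi : y i = 0) : mixedDiff y = 0 :=
  prod_eq_zero (mem_univ i) (by rw [hi, dirac_zero, sub_self])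

theorem mixedDiff_update [DecidableEq ι] (y : ι → E) (i : ι) (u : E) :
    mixedDiff (Function.update y i u) = (dirac u - 1) * ∏ j ∈ univ \ {i}, (dirac (y j) - 1) := by
  rw [mixedDiff, ← prod_update_of_mem (mem_univ i)]
  exact prod_congr rfl fun j _ => Function.apply_update (fun _ v => dirac v - 1) y i u j

theorem mixedDiff_update_add_sub {k : ℕ} (y : Fin k → E) (i : Fin k) (u v : E) :
    mixedDiff (Function.update y i (u + v)) - mixedDiff (Function.update y i u) -
      mixedDiff (Function.update y i v) =
        mixedDiff (Fin.cons v (Function.update y i u) : Fin (k + 1) → E) := by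
  have expand_cons : mixedDiff (Fin.cons v (Function.update y i u) : Fin (k + 1) → E) =
      (dirac v - 1) * mixedDiff (Function.update y i u) := by
    rw [mixedDiff, Fin.prod_univ_succ]
    rfl
  simp only [expand_cons, mixedDiff_update, dirac_add]
  ring

theorem mixedDiff_eq_sum_dirac [DecidableEq ι] (y : ι → E) :
    mixedDiff y = ∑ s : Finset ι, (-1) ^ #sᶜ * dirac (∑ i ∈ s, y i) := by
  simp only [mixedDiff, sub_eq_add_neg, Fintype.prod_add, prod_const, dirac_sum, mul_comm]

theorem abs_pair_neg_one_pow_mul (f : E → ℝ) (n : ℕ) (μ : AddMonoidAlgebra ℝ E) :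
    |pair f ((-1) ^ n * μ)| = |pair f μ| := by
  rcases neg_one_pow_eq_or (AddMonoidAlgebra ℝ E) n with h | h <;> simp [h]

theorem abs_pair_sum_neg_one_pow_mul_le {n : Finset ι → ℕ} {μ : Finset ι → AddMonoidAlgebra ℝ E}
    (h : ∀ s, |pair f (μ s)| ≤ M) :
    |pair f (∑ s, (-1) ^ n s * μ s)| ≤ 2 ^ Fintype.card ι * M := by
  rw [map_sum]
  refine (abs_sum_le_sum_abs _ _).trans ?_
  simp only [abs_pair_neg_one_pow_mul]
  refine (sum_le_card_nsmul univ _ M fun s _ => h s).trans_eq ?_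
  simp [Fintype.card_finset]

theorem abs_pair_mixedDiff_le {y : ι → E} (hf : ∀ s : Finset ι, |f (∑ i ∈ s, y i)| ≤ M) :
    |pair f (mixedDiff y)| ≤ 2 ^ Fintype.card ι * M := by
  classical
  rw [mixedDiff_eq_sum_dirac]
  exact abs_pair_sum_neg_one_pow_mul_le fun s => by simpa using hf s

variable [Module ℝ E]

/-- The classical reduction of mixed differences to pure ones: in the mixed difference with
increments `(1 - j / (i + 1)) • y i`, a factor vanishes for each `j = 1, …, m`. -/
theorem neg_one_pow_mul_mixedDiff {m : ℕ} (y : Fin m → E) :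
    (-1) ^ m * mixedDiff y = ∑ s : Finset (Fin m), (-1) ^ #sᶜ *
      (dirac (∑ i ∈ s, y i) * (dirac (∑ i ∈ s, (-(i + 1 : ℝ)⁻¹) • y i) - 1) ^ m) := by
  let z (j : ℕ) (i : Fin m) : E := (1 - j * (i + 1 : ℝ)⁻¹) • y i
  have z_zero : z 0 = y := by simp [z]
  have vanishing (j : ℕ) (hj : j ∈ range m) : mixedDiff (z (j + 1)) = 0 := by
    refine mixedDiff_eq_zero (i := ⟨j, mem_range.mp hj⟩) ?_
    have : (j : ℝ) + 1 ≠ 0 := by positivity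
    simp [z, this]
  have powers (s : Finset (Fin m)) (j : ℕ) : dirac (∑ i ∈ s, y i) *
      dirac (∑ i ∈ s, (-(i + 1 : ℝ)⁻¹) • y i) ^ j = dirac (∑ i ∈ s, z j i) := by
    rw [← dirac_natCast_smul, ← dirac_add, smul_sum, ← sum_add_distrib]
    congr 2 with i
    module
  calc (-1) ^ m * mixedDiff y
      = ∑ j ∈ range (m + 1), (-1) ^ (m - j) * (m.choose j : AddMonoidAlgebra ℝ E) *
          mixedDiff (z j) := by
        rw [sum_range_succ', sum_eq_zero fun j hj => by rw [vanishing j hj, mul_zero], z_zero]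
        simp
    _ = _ := by
        simp only [mixedDiff_eq_sum_dirac, mul_sum]
        rw [sum_comm]
        refine sum_congr rfl fun s _ => ?_
        rw [sub_eq_add_neg (dirac (∑ i ∈ s, _)), add_pow, mul_sum, mul_sum]
        refine sum_congr rfl fun j _ => ?_
        rw [← powers]
        ring

theorem _root_.diffBound.abs_pair_mixedDiff_le {m : ℕ} {K : Set E} {c : ℝ} (hf : diffBound m K f c)
    {y : Fin m → E} (hy : ∀ (s : Finset (Fin m)), ∀ j ≤ m,
      ∑ i ∈ s, (1 - j * (i + 1 : ℝ)⁻¹) • y i ∈ K) :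
    |pair f (mixedDiff y)| ≤ 2 ^ m * c := by
  rw [← abs_pair_neg_one_pow_mul f m, neg_one_pow_mul_mixedDiff]
  conv_rhs => rw [← Fintype.card_fin m]
  refine abs_pair_sum_neg_one_pow_mul_le fun s => diffBound_iff_abs_pair_le.mp hf _ _ fun j hj => ?_
  convert hy s j hj using 1
  rw [smul_sum, ← sum_add_distrib]
  congr 1 with i
  module

end MixedDifference

section SmallIncrements

variable {E : Type*} [NormedAddCommGroup E] [NormedSpace ℝ E] {f : E → ℝ} {c t : ℝ} {k : ℕ}

theorem sum_smul_mem_closedBall {m : ℕ} {y : Fin m → E} {a : Fin m → ℝ} (ha : ∀ i, |a i| ≤ m)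
    (hy : ∀ i, ‖y i‖ ≤ ((m : ℝ) ^ 2)⁻¹) (s : Finset (Fin m)) :
    ∑ i ∈ s, a i • y i ∈ closedBall (0 : E) 1 := by
  rw [mem_closedBall_zero_iff]
  calc ‖∑ i ∈ s, a i • y i‖ ≤ ∑ i ∈ s, ‖a i • y i‖ := norm_sum_le _ _
    _ ≤ ∑ i : Fin m, ‖a i • y i‖ := sum_le_univ_sum_of_nonneg fun _ => norm_nonneg _
    _ ≤ ∑ _i : Fin m, m * ((m : ℝ) ^ 2)⁻¹ := by
        refine sum_le_sum fun i _ => ?_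
        rw [norm_smul, Real.norm_eq_abs]
        exact mul_le_mul (ha i) (hy i) (norm_nonneg _) (Nat.cast_nonneg _)
    _ = m ^ 2 / m ^ 2 := by rw [sum_const, card_fin, nsmul_eq_mul]; ring
    _ ≤ 1 := div_self_le_one _

theorem abs_one_sub_natCast_mul_inv_le {j m : ℕ} (hm : m ≠ 0) (hj : j ≤ m) (i : ℕ) :
    |1 - j * (i + 1 : ℝ)⁻¹| ≤ m := by
  have one_le_m : (1 : ℝ) ≤ m := by exact_mod_cast Nat.one_le_iff_ne_zero.mpr hm
  have inv_le_one : (i + 1 : ℝ)⁻¹ ≤ 1 :=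
    inv_le_one_of_one_le₀ (by linarith [i.cast_nonneg (α := ℝ)])
  have upper : j * (i + 1 : ℝ)⁻¹ ≤ m * 1 :=
    mul_le_mul (by exact_mod_cast hj) inv_le_one (by positivity) (Nat.cast_nonneg _)
  rw [abs_le]
  constructor <;> linarith [show (0 : ℝ) ≤ j * (i + 1 : ℝ)⁻¹ by positivity]

theorem _root_.diffBound.abs_pair_mixedDiff_le_of_norm_le {m : ℕ}
    (hf : diffBound m (closedBall 0 1) f c) {y : Fin m → E}
    (hy : ∀ i, ‖y i‖ ≤ ((m : ℝ) ^ 2)⁻¹) : |pair f (mixedDiff y)| ≤ 2 ^ m * c := by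
  refine hf.abs_pair_mixedDiff_le fun s j hj => sum_smul_mem_closedBall (fun i => ?_) hy s
  exact abs_one_sub_natCast_mul_inv_le (Nat.ne_of_gt (Fin.pos i)) hj i

end SmallIncrements

section QuasiAdditive

variable {E : Type*} [NormedAddCommGroup E] [NormedSpace ℝ E] {f : E → ℝ} {c t : ℝ} {k : ℕ}

/-- `F` is bounded on the unit ball, and additive there up to an error `c`. -/
structure IsQuasiAdditive (F : E → ℝ) (c : ℝ) : Prop where
  bounded : ∃ M, ∀ u ∈ closedBall (0 : E) 1, |F u| ≤ M
  defect_le : ∀ u ∈ closedBall (0 : E) 1, ∀ v ∈ closedBall (0 : E) 1,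
    u + v ∈ closedBall (0 : E) 1 → |F (u + v) - F u - F v| ≤ c

/-- `b` is quasi-additive in each variable, the others being fixed in the unit ball. -/
def IsQuasiMultiadditive (b : (Fin k → E) → ℝ) (c : ℝ) : Prop :=
  ∀ y, (∀ i, y i ∈ closedBall (0 : E) 1) → ∀ i,
    IsQuasiAdditive (fun u => b (Function.update y i u)) c

theorem _root_.diffBound.isQuasiMultiadditive (hf : diffBound (k + 1) (closedBall 0 1) f c)
    (hbdd : ∃ M, ∀ x ∈ closedBall (0 : E) 1, |f x| ≤ M) (ht : 0 ≤ t)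
    (htk : t ≤ (((k + 1 : ℕ) : ℝ) ^ 2)⁻¹) :
    IsQuasiMultiadditive (fun y : Fin k → E => pair f (mixedDiff fun i => t • y i))
      (2 ^ (k + 1) * c) := by
  obtain ⟨M, hM⟩ := hbdd
  intro y hy i
  have norm_smul_le {u : E} (hu : u ∈ closedBall (0 : E) 1) :
      ‖t • u‖ ≤ (((k + 1 : ℕ) : ℝ) ^ 2)⁻¹ := by
    rw [norm_smul, Real.norm_of_nonneg ht]
    exact (mul_le_of_le_one_right ht (mem_closedBall_zero_iff.mp hu)).trans htk
  have update_mem {u : E} (hu : u ∈ closedBall (0 : E) 1) (j : Fin k) :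
      Function.update y i u j ∈ closedBall (0 : E) 1 := by
    rcases eq_or_ne j i with rfl | hj
    · rwa [Function.update_self]
    · rw [Function.update_of_ne hj]
      exact hy j
  have smul_update (u : E) : (fun j => t • Function.update y i u j) =
      Function.update (fun j => t • y j) i (t • u) :=
    funext fun j => Function.apply_update (fun _ v => t • v) y i u j
  refine ⟨⟨2 ^ k * M, fun u hu => ?_⟩, fun u hu v hv _ => ?_⟩
  · conv_rhs => rw [← Fintype.card_fin k]
    have one_le_k : (1 : ℝ) ≤ k := by exact_mod_cast Fin.pos i
    have norm_le (j : Fin k) : ‖t • Function.update y i u j‖ ≤ ((k : ℝ) ^ 2)⁻¹ :=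
      (norm_smul_le (update_mem hu j)).trans (by gcongr; exact k.le_succ)
    refine abs_pair_mixedDiff_le fun s => hM _ ?_
    simpa using sum_smul_mem_closedBall (a := fun _ => 1) (fun _ => by rwa [abs_one]) norm_le s
  · simp only [smul_update, smul_add, ← map_sub, mixedDiff_update_add_sub]
    refine hf.abs_pair_mixedDiff_le_of_norm_le fun j => ?_
    rw [← smul_update]
    refine Fin.cases (norm_smul_le hv) (fun j => norm_smul_le (update_mem hu j)) j

end QuasiAdditive

section Homogenization

theorem IsQuasiAdditive.nonneg_s17 {E : Type*} [NormedAddCommGroup E] {F : E → ℝ} {c : ℝ}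
    (hF : IsQuasiAdditive F c) : 0 ≤ c :=
  (abs_nonneg _).trans (hF.defect_le 0 (by simp) 0 (by simp) (by simp))

variable {E : Type*} [NormedAddCommGroup E] [NormedSpace ℝ E] {F : E → ℝ} {c t : ℝ} {u : E}

theorem smul_mem_unitClosedBall (ht : t ∈ Set.Icc (0 : ℝ) 1) (hu : u ∈ closedBall (0 : E) 1) :
    t • u ∈ closedBall (0 : E) 1 :=
  (starConvex_closedBall zero_le_one).smul_mem hu ht.1 ht.2

theorem IsQuasiAdditive.abs_map_smul_sub_le (hF : IsQuasiAdditive F c)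
    (ht : t ∈ Set.Icc (0 : ℝ) 1) (hu : u ∈ closedBall (0 : E) 1) :
    |F (t • u) - t * F u| ≤ 3 * c := by
  let g (z : Set.Icc (0 : ℝ) 1 × closedBall (0 : E) 1) : ℝ :=
    |F ((z.1 : ℝ) • (z.2 : E)) - z.1 * F z.2|
  have g_bdd : BddAbove (Set.range g) := by
    obtain ⟨M, hM⟩ := hF.bounded
    refine ⟨M + M, Set.forall_mem_range.mpr fun ⟨⟨s, hs⟩, v, hv⟩ => ?_⟩
    refine (abs_sub _ _).trans (add_le_add (hM _ (smul_mem_unitClosedBall hs hv)) ?_)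
    rw [abs_mul, abs_of_nonneg hs.1]
    exact (mul_le_of_le_one_left (abs_nonneg _) hs.2).trans (hM v hv)
  have improve (A : ℝ) (hA : ∀ z, g z ≤ A) (z) : g z ≤ A / 2 + 3 / 2 * c := by
    have halve {s : ℝ} {v : E} (hs : 0 ≤ s) (hs' : s ≤ 1 / 2) (hv : v ∈ closedBall (0 : E) 1) :
        |F (s • v) - s * F v| ≤ A / 2 + c / 2 := by
      have double_mem : 2 * s ∈ Set.Icc (0 : ℝ) 1 := ⟨by linarith, by linarith⟩
      have split : s • v + s • v = (2 * s) • v := by module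
      have at_double : |F ((2 * s) • v) - 2 * s * F v| ≤ A := hA (⟨2 * s, double_mem⟩, ⟨v, hv⟩)
      have s_mem := smul_mem_unitClosedBall ⟨hs, by linarith⟩ hv
      have defect := hF.defect_le _ s_mem _ s_mem (split ▸ smul_mem_unitClosedBall double_mem hv)
      rw [split] at defect
      rw [abs_le] at *
      constructor <;> linarith
    obtain ⟨⟨s, hs⟩, v, hv⟩ := z
    change |F (s • v) - s * F v| ≤ _
    rcases le_total s (1 / 2) with hs' | hs'
    · linarith [halve hs.1 hs' hv, hF.nonneg_s17]
    · have complement := halve (s := 1 - s) (by linarith [hs.2]) (by linarith) hv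
      have split : s • v + (1 - s) • v = v := by module
      have defect := hF.defect_le _ (smul_mem_unitClosedBall hs hv) ((1 - s) • v)
        (smul_mem_unitClosedBall ⟨by linarith [hs.2], by linarith [hs.1]⟩ hv) (split.symm ▸ hv)
      rw [split] at defect
      rw [abs_le] at *
      constructor <;> linarith
  refine (le_two_mul_of_self_improving g_bdd improve (⟨t, ht⟩, ⟨u, hu⟩)).trans_eq ?_
  ring

/-- `G` is positively homogeneous, and additive up to an error `d * (‖x‖ + ‖y‖)`. -/
structure IsHomogQuasiAdditive (G : E → ℝ) (d : ℝ) : Prop where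
  nonneg_s17 : 0 ≤ d
  map_smul_of_nonneg : ∀ ⦃t : ℝ⦄, 0 ≤ t → ∀ x, G (t • x) = t * G x
  defect_le : ∀ x y, |G (x + y) - G x - G y| ≤ d * (‖x‖ + ‖y‖)

/-- The positively homogeneous function with the same values as `F` on the unit sphere. -/
noncomputable def homogenization (F : E → ℝ) (x : E) : ℝ := ‖x‖ * F (‖x‖⁻¹ • x)

theorem homogenization_smul_of_nonneg (F : E → ℝ) (ht : 0 ≤ t) (x : E) :
    homogenization F (t • x) = t * homogenization F x := by
  rcases ht.eq_or_lt with rfl | ht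
  · simp [homogenization]
  · rw [homogenization, norm_smul, Real.norm_of_nonneg ht.le, smul_smul, mul_inv_rev, mul_assoc,
      inv_mul_cancel_right₀ ht.ne', homogenization]

theorem IsQuasiAdditive.abs_homogenization_sub_le (hF : IsQuasiAdditive F c)
    (hu : u ∈ closedBall (0 : E) 1) : |homogenization F u - F u| ≤ 3 * c := by
  have norm_u_le := mem_closedBall_zero_iff.mp hu
  have unit_mem : ‖u‖⁻¹ • u ∈ closedBall (0 : E) 1 := by
    rw [mem_closedBall_zero_iff, norm_smul, norm_inv, norm_norm]
    exact inv_mul_le_one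
  have := hF.abs_map_smul_sub_le ⟨norm_nonneg u, norm_u_le⟩ unit_mem
  rcases eq_or_ne u 0 with rfl | hu0
  · simpa [homogenization] using this
  · rwa [smul_inv_smul₀ (norm_ne_zero_iff.mpr hu0), abs_sub_comm] at this

theorem IsQuasiAdditive.homogenization (hF : IsQuasiAdditive F c) :
    IsHomogQuasiAdditive (homogenization F) (10 * c) where
  nonneg_s17 := mul_nonneg (by norm_num) hF.nonneg_s17
  map_smul_of_nonneg _ ht := homogenization_smul_of_nonneg F ht
  defect_le x y := by
    rcases (add_nonneg (norm_nonneg x) (norm_nonneg y)).eq_or_lt with hs | hs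
    · have hx : x = 0 := norm_eq_zero.mp (by linarith [norm_nonneg x, norm_nonneg y])
      have hy : y = 0 := norm_eq_zero.mp (by linarith [norm_nonneg x, norm_nonneg y])
      simp [hx, hy, Whitney.homogenization]
    set s := ‖x‖ + ‖y‖
    have scaled_mem {w : E} (hw : ‖w‖ ≤ s) : s⁻¹ • w ∈ closedBall (0 : E) 1 := by
      rwa [mem_closedBall_zero_iff, norm_smul, norm_inv, Real.norm_of_nonneg hs.le,
        inv_mul_le_one₀ hs]
    have eq_mul (w : E) : Whitney.homogenization F w = s * Whitney.homogenization F (s⁻¹ • w) := by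
      rw [← homogenization_smul_of_nonneg F hs.le, smul_inv_smul₀ hs.ne']
    have hx := scaled_mem (w := x) (by linarith [norm_nonneg y])
    have hy := scaled_mem (w := y) (by linarith [norm_nonneg x])
    have hxy := scaled_mem (norm_add_le x y)
    have defect := hF.defect_le _ hx _ hy (by rwa [← smul_add])
    rw [eq_mul (x + y), eq_mul x, eq_mul y, ← mul_sub, ← mul_sub, abs_mul, abs_of_pos hs, mul_comm]
    refine mul_le_mul_of_nonneg_right ?_ hs.le
    have ex := hF.abs_homogenization_sub_le hx
    have ey := hF.abs_homogenization_sub_le hy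
    have exy := hF.abs_homogenization_sub_le hxy
    rw [smul_add] at *
    rw [abs_le] at *
    constructor <;> linarith

end Homogenization

namespace IsHomogQuasiAdditive

variable {E : Type*} [NormedAddCommGroup E] [NormedSpace ℝ E] {G : E → ℝ} {d : ℝ}

theorem map_zero (h : IsHomogQuasiAdditive G d) : G 0 = 0 := by
  simpa using h.map_smul_of_nonneg le_rfl 0

theorem abs_map_neg_add_le (h : IsHomogQuasiAdditive G d) (x : E) :
    |G (-x) + G x| ≤ 2 * d * ‖x‖ := by
  have := h.defect_le x (-x)
  rw [add_neg_cancel, h.map_zero, norm_neg, zero_sub, ← neg_add', abs_neg, add_comm] at this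
  linarith

theorem abs_map_smul_sub_le (h : IsHomogQuasiAdditive G d) (t : ℝ) (x : E) :
    |G (t • x) - t * G x| ≤ 2 * d * ‖t • x‖ := by
  rcases le_total 0 t with ht | ht
  · rw [h.map_smul_of_nonneg ht, sub_self, abs_zero]
    have := h.nonneg_s17
    positivity
  · have via_neg : G (t • x) - t * G x = -t * (G (-x) + G x) := by
      rw [← neg_smul_neg, h.map_smul_of_nonneg (neg_nonneg.mpr ht)]
      ring
    rw [via_neg, abs_mul, abs_neg, norm_smul, Real.norm_eq_abs]
    exact (mul_le_mul_of_nonneg_left (h.abs_map_neg_add_le x) (abs_nonneg t)).trans_eq (by ring)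

theorem abs_map_sum_sub_le (h : IsHomogQuasiAdditive G d) {ι : Type*} (x : ι → E) {p : ℕ}
    {s : Finset ι} (hs : #s ≤ 2 ^ p) :
    |G (∑ i ∈ s, x i) - ∑ i ∈ s, G (x i)| ≤ d * p * ∑ i ∈ s, ‖x i‖ := by
  classical
  have d_nonneg := h.nonneg_s17
  induction p generalizing s with
  | zero =>
    rcases Nat.le_one_iff_eq_zero_or_eq_one.mp hs with hs | hs
    · simp [card_eq_zero.mp hs, h.map_zero]
    · obtain ⟨i, rfl⟩ := card_eq_one.mp hs
      simp
  | succ p ih =>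
    rcases le_total #s (2 ^ p) with hs' | hs'
    · refine (ih hs').trans ?_
      gcongr
      exact p.le_succ
    obtain ⟨t, hts, ht⟩ := exists_subset_card_eq hs'
    have first := ih ht.le
    have second := ih (s := s \ t) (by
      rw [card_sdiff_of_subset hts, ht]
      rw [pow_succ] at hs
      omega)
    have defect := h.defect_le (∑ i ∈ s \ t, x i) (∑ i ∈ t, x i)
    rw [sum_sdiff hts] at defect
    rw [← sum_sdiff hts (f := fun i => G (x i)), ← sum_sdiff hts (f := fun i => ‖x i‖)]
    have defect_le : d * (‖∑ i ∈ s \ t, x i‖ + ‖∑ i ∈ t, x i‖) ≤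
        d * (∑ i ∈ s \ t, ‖x i‖ + ∑ i ∈ t, ‖x i‖) := by
      gcongr <;> exact norm_sum_le _ _
    push_cast
    rw [abs_le] at *
    constructor <;> linarith

theorem abs_map_sum_smul_sub_le (h : IsHomogQuasiAdditive G d) {ι : Type*} {x : ι → E}
    (a : ι → ℝ) {p : ℕ} {s : Finset ι} (hs : #s ≤ 2 ^ p) (hx : ∀ i ∈ s, ‖x i‖ ≤ 1) :
    |G (∑ i ∈ s, a i • x i) - ∑ i ∈ s, a i * G (x i)| ≤ d * (p + 2) * ∑ i ∈ s, |a i| := by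
  have d_nonneg := h.nonneg_s17
  have norm_le : ∑ i ∈ s, ‖a i • x i‖ ≤ ∑ i ∈ s, |a i| := sum_le_sum fun i hi => by
    rw [norm_smul, Real.norm_eq_abs]
    exact mul_le_of_le_one_right (abs_nonneg _) (hx i hi)
  calc |G (∑ i ∈ s, a i • x i) - ∑ i ∈ s, a i * G (x i)|
      ≤ |G (∑ i ∈ s, a i • x i) - ∑ i ∈ s, G (a i • x i)| +
          |∑ i ∈ s, G (a i • x i) - ∑ i ∈ s, a i * G (x i)| := abs_sub_le _ _ _
    _ ≤ d * p * ∑ i ∈ s, ‖a i • x i‖ + ∑ i ∈ s, 2 * d * ‖a i • x i‖ := by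
        refine add_le_add (h.abs_map_sum_sub_le _ hs) ?_
        rw [← sum_sub_distrib]
        exact (abs_sum_le_sum_abs _ _).trans (sum_le_sum fun i _ => h.abs_map_smul_sub_le _ _)
    _ = d * (p + 2) * ∑ i ∈ s, ‖a i • x i‖ := by rw [← mul_sum]; ring
    _ ≤ d * (p + 2) * ∑ i ∈ s, |a i| := by gcongr

variable [FiniteDimensional ℝ E]

/-- By Carathéodory's theorem, a point of the convex hull of the graph is a combination of at most
`finrank ℝ E + 2` points, so that quasi-additivity costs only a factor `p`. -/
theorem le_snd_of_mem_convexHull_graph (h : IsHomogQuasiAdditive G d) {p : ℕ}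
    (hp : Module.finrank ℝ E + 2 ≤ 2 ^ p) {z : E × ℝ}
    (hz : z ∈ convexHull ℝ (Set.range fun x => (x, G x + d * p * ‖x‖))) : G z.1 ≤ z.2 := by
  rw [convexHull_eq_union] at hz
  simp only [Set.mem_iUnion, mem_convexHull'] at hz
  obtain ⟨s, hs_graph, hs_indep, w, hw, -, rfl⟩ := hz
  have card_le : #s ≤ 2 ^ p := by
    have := hs_indep.card_le_finrank_succ
    have := Submodule.finrank_le (vectorSpan ℝ (Set.range ((↑) : s → E × ℝ)))
    rw [Module.finrank_prod, Module.finrank_self] at this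
    rw [Fintype.card_coe] at *
    omega
  have height {y : E × ℝ} (hy : y ∈ s) :
      (w y • y).2 = G (w y • y.1) + d * p * ‖w y • y.1‖ := by
    obtain ⟨x, rfl⟩ := hs_graph hy
    rw [h.map_smul_of_nonneg (hw _ hy), norm_smul, Real.norm_of_nonneg (hw _ hy), Prod.smul_snd,
      smul_eq_mul]
    ring
  have := h.abs_map_sum_sub_le (fun y : E × ℝ => w y • y.1) card_le
  rw [Prod.fst_sum, Prod.snd_sum, sum_congr rfl fun y hy => height hy, sum_add_distrib, ← mul_sum]
  simp only [Prod.smul_fst]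
  linarith [(abs_le.mp this).2]

/-- Hahn–Banach, in the form of M. Riesz's extension theorem for the cone generated by the graph. -/
theorem exists_linearMap_le (h : IsHomogQuasiAdditive G d) {p : ℕ}
    (hp : Module.finrank ℝ E + 2 ≤ 2 ^ p) :
    ∃ L : E →ₗ[ℝ] ℝ, ∀ x, L x ≤ G x + d * p * ‖x‖ := by
  let hull : Set (E × ℝ) := convexHull ℝ (Set.range fun x => (x, G x + d * p * ‖x‖))
  have hull_convex : Convex ℝ hull := convex_convexHull ℝ _
  have zero_mem_hull : (0 : E × ℝ) ∈ hull :=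
    subset_convexHull ℝ _ ⟨0, by simp [h.map_zero]⟩
  let cone : PointedCone ℝ (E × ℝ) :=
    (ConvexCone.hull ℝ hull).toPointedCone (ConvexCone.subset_hull zero_mem_hull)
  have graph_mem (x : E) : (x, G x + d * p * ‖x‖) ∈ cone :=
    ConvexCone.subset_hull (subset_convexHull ℝ _ ⟨x, rfl⟩)
  let vertical : E × ℝ →ₗ.[ℝ] ℝ :=
    ⟨LinearMap.ker (LinearMap.fst ℝ E ℝ), (LinearMap.snd ℝ E ℝ).domRestrict _⟩
  have vertical_nonneg (z : vertical.domain) (hz : (z : E × ℝ) ∈ cone) : 0 ≤ vertical z := by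
    obtain ⟨a, ha, v, hv, hvz⟩ := (ConvexCone.mem_hull_of_convex hull_convex).mp hz
    have hv_fst : v.1 = 0 := by
      have : a • v.1 = 0 := (congrArg Prod.fst hvz).trans z.2
      exact (smul_eq_zero.mp this).resolve_left ha.ne'
    have hv_snd := h.le_snd_of_mem_convexHull_graph hp hv
    rw [hv_fst, h.map_zero] at hv_snd
    exact (mul_nonneg ha.le hv_snd).trans_eq (congrArg Prod.snd hvz)
  obtain ⟨φ, hφ_vertical, hφ_cone⟩ := riesz_extension cone vertical vertical_nonneg
    fun ⟨x, r⟩ => ⟨⟨(0, G x + d * p * ‖x‖ - r), rfl⟩, by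
      simpa only [Prod.mk_add_mk, zero_add, sub_add_cancel] using graph_mem x⟩
  have φ_snd (r : ℝ) : φ (0, r) = r := hφ_vertical ⟨(0, r), rfl⟩
  refine ⟨-φ ∘ₗ LinearMap.inl ℝ E ℝ, fun x => ?_⟩
  have := hφ_cone _ (graph_mem x)
  rw [show (x, G x + d * p * ‖x‖) = (x, 0) + (0, G x + d * p * ‖x‖) by simp, map_add, φ_snd] at this
  simpa using by linarith

theorem exists_linearMap_abs_sub_le (h : IsHomogQuasiAdditive G d) {p : ℕ}
    (hp : Module.finrank ℝ E + 2 ≤ 2 ^ p) :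
    ∃ L : E →ₗ[ℝ] ℝ, ∀ x, |G x - L x| ≤ d * (p + 2) * ‖x‖ := by
  obtain ⟨L, hL⟩ := h.exists_linearMap_le hp
  refine ⟨L, fun x => abs_le.mpr ?_⟩
  have upper := hL x
  have lower := hL (-x)
  rw [map_neg, norm_neg] at lower
  have odd := abs_le.mp (h.abs_map_neg_add_le x)
  have : 0 ≤ d * ‖x‖ := mul_nonneg h.nonneg_s17 (norm_nonneg x)
  constructor <;> linarith

end IsHomogQuasiAdditive

namespace IsQuasiAdditive

variable {E : Type*} [NormedAddCommGroup E] [NormedSpace ℝ E] {F : E → ℝ} {c : ℝ}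

theorem exists_linearMap_abs_sub_le [FiniteDimensional ℝ E] (hF : IsQuasiAdditive F c) {p : ℕ}
    (hp : Module.finrank ℝ E + 2 ≤ 2 ^ p) :
    ∃ L : E →ₗ[ℝ] ℝ, ∀ x ∈ closedBall (0 : E) 1, |F x - L x| ≤ (10 * p + 23) * c := by
  obtain ⟨L, hL⟩ := hF.homogenization.exists_linearMap_abs_sub_le hp
  refine ⟨L, fun x hx => ?_⟩
  have c_nonneg := hF.nonneg_s17
  have linear : |Whitney.homogenization F x - L x| ≤ 10 * c * (p + 2) :=
    (hL x).trans (mul_le_of_le_one_right (by positivity) (mem_closedBall_zero_iff.mp hx))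
  have := hF.abs_homogenization_sub_le hx
  rw [abs_le] at *
  constructor <;> linarith

theorem abs_map_sum_smul_sub_le (hF : IsQuasiAdditive F c) {ι : Type*} [Fintype ι] {w : ι → E}
    (hw : ∀ i, w i ∈ closedBall (0 : E) 1) {a : ι → ℝ}
    (ha : ∑ i, a i • w i ∈ closedBall (0 : E) 1) {p : ℕ} (hp : Fintype.card ι ≤ 2 ^ p) :
    |F (∑ i, a i • w i) - ∑ i, a i * F (w i)| ≤ ((10 * p + 23) * ∑ i, |a i| + 3) * c := by
  have homog := hF.homogenization.abs_map_sum_smul_sub_le a (s := univ) hp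
    fun i _ => mem_closedBall_zero_iff.mp (hw i)
  have at_sum := hF.abs_homogenization_sub_le ha
  have at_terms : |∑ i, a i * Whitney.homogenization F (w i) - ∑ i, a i * F (w i)| ≤
      (∑ i, |a i|) * (3 * c) := by
    rw [← sum_sub_distrib, sum_mul]
    refine (abs_sum_le_sum_abs _ _).trans (sum_le_sum fun i _ => ?_)
    rw [← mul_sub, abs_mul]
    exact mul_le_mul_of_nonneg_left (hF.abs_homogenization_sub_le (hw i)) (abs_nonneg _)
  rw [abs_le] at *
  constructor <;> linarith

end IsQuasiAdditive

section OptimalDesign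

open Matrix

variable {ι κ : Type*} [Fintype ι] [DecidableEq ι] [Fintype κ]

theorem det_add_vecMulVec_sub_vecMulVec {R : Type*} [CommRing R] {A : Matrix ι ι R}
    (hA : IsUnit A.det) (x y : ι → R) :
    (A + vecMulVec y y - vecMulVec x x).det =
      A.det * ((1 + y ⬝ᵥ A⁻¹ *ᵥ y) * (1 - x ⬝ᵥ A⁻¹ *ᵥ x) +
        (x ⬝ᵥ A⁻¹ *ᵥ y) * (y ⬝ᵥ A⁻¹ *ᵥ x)) := by
  have rank_two : A + vecMulVec y y - vecMulVec x x = A + (of ![y, -x])ᵀ * of ![y, x] := by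
    ext i j
    simp [mul_apply, vecMulVec_apply, Fin.sum_univ_two]
    ring
  have entries : of ![y, x] * A⁻¹ * (of ![y, -x])ᵀ =
      !![y ⬝ᵥ A⁻¹ *ᵥ y, -(y ⬝ᵥ A⁻¹ *ᵥ x); x ⬝ᵥ A⁻¹ *ᵥ y, -(x ⬝ᵥ A⁻¹ *ᵥ x)] := by
    simp only [← dotProduct_neg, ← mulVec_neg]
    ext i j
    fin_cases i <;> fin_cases j <;> exact (dotProduct_mulVec _ _ _).symm
  rw [rank_two, det_add_mul _ _ hA, entries, det_fin_two]
  simp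
  ring

theorem transpose_mul_self_updateRow {ι R : Type*} [CommRing R] [DecidableEq κ]
    (X : Matrix κ ι R) (k : κ) (y : ι → R) : (X.updateRow k y)ᵀ * X.updateRow k y =
      Xᵀ * X + vecMulVec y y - vecMulVec (X k) (X k) := by
  ext i j
  simp only [Matrix.sub_apply, Matrix.add_apply, mul_apply, transpose_apply, vecMulVec_apply]
  rw [← add_sum_erase univ _ (mem_univ k),
    ← add_sum_erase univ (fun l => X l i * X l j) (mem_univ k),
    sum_congr rfl fun l hl => by rw [updateRow_ne (ne_of_mem_erase hl)], updateRow_self]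
  ring

theorem sum_dotProduct_inv_mulVec_self {X : Matrix κ ι ℝ} (hX : IsUnit (Xᵀ * X).det) :
    ∑ k, X k ⬝ᵥ (Xᵀ * X)⁻¹ *ᵥ X k = Fintype.card ι := by
  calc ∑ k, X k ⬝ᵥ (Xᵀ * X)⁻¹ *ᵥ X k = trace (X * ((Xᵀ * X)⁻¹ * Xᵀ)) := rfl
    _ = trace ((Xᵀ * X)⁻¹ * (Xᵀ * X)) := by rw [trace_mul_comm, Matrix.mul_assoc]
    _ = Fintype.card ι := by rw [nonsing_inv_mul _ hX, trace_one]

theorem sum_dotProduct_inv_mulVec_sq {X : Matrix κ ι ℝ} (hX : IsUnit (Xᵀ * X).det) (u : ι → ℝ) :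
    ∑ k, (X k ⬝ᵥ (Xᵀ * X)⁻¹ *ᵥ u) ^ 2 = u ⬝ᵥ (Xᵀ * X)⁻¹ *ᵥ u := by
  calc ∑ k, (X k ⬝ᵥ (Xᵀ * X)⁻¹ *ᵥ u) ^ 2
      = (X *ᵥ (Xᵀ * X)⁻¹ *ᵥ u) ⬝ᵥ (X *ᵥ (Xᵀ * X)⁻¹ *ᵥ u) := by simp only [sq]; rfl
    _ = (Xᵀ *ᵥ (X *ᵥ (Xᵀ * X)⁻¹ *ᵥ u)) ⬝ᵥ ((Xᵀ * X)⁻¹ *ᵥ u) := by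
        rw [dotProduct_mulVec, mulVec_transpose]
    _ = u ⬝ᵥ (Xᵀ * X)⁻¹ *ᵥ u := by
        rw [mulVec_mulVec, mulVec_mulVec, mul_nonsing_inv _ hX, one_mulVec]

theorem sum_dotProduct_inv_mulVec_smul {X : Matrix κ ι ℝ} (hX : IsUnit (Xᵀ * X).det) (u : ι → ℝ) :
    ∑ k, (X k ⬝ᵥ (Xᵀ * X)⁻¹ *ᵥ u) • X k = u := by
  calc ∑ k, (X k ⬝ᵥ (Xᵀ * X)⁻¹ *ᵥ u) • X k = Xᵀ *ᵥ (X *ᵥ (Xᵀ * X)⁻¹ *ᵥ u) := by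
        rw [mulVec_transpose, vecMul_eq_sum]; rfl
    _ = u := by rw [mulVec_mulVec, mulVec_mulVec, mul_nonsing_inv _ hX, one_mulVec]

/-- The Kiefer–Wolfowitz bound for a family of points of a compact set which maximizes
`det (Xᵀ * X)`: replacing a single point does not increase the determinant; average this over the
point that is replaced. -/
theorem exists_optimal_design {K : Set (ι → ℝ)} (hK : IsCompact K)
    (hspan : ∃ X : Matrix κ ι ℝ, (∀ k, X k ∈ K) ∧ (Xᵀ * X).det ≠ 0) :
    ∃ X : Matrix κ ι ℝ, (∀ k, X k ∈ K) ∧ IsUnit (Xᵀ * X).det ∧ ∀ y ∈ K,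
      (Fintype.card κ - Fintype.card ι + 1) * (y ⬝ᵥ (Xᵀ * X)⁻¹ *ᵥ y) ≤ Fintype.card ι := by
  obtain ⟨X₀, hX₀, hX₀_det⟩ := hspan
  have det_nonneg (X : Matrix κ ι ℝ) : 0 ≤ (Xᵀ * X).det :=
    (posSemidef_conjTranspose_mul_self X).det_nonneg
  obtain ⟨X, hX, hmax⟩ : ∃ X : Matrix κ ι ℝ, (∀ k, X k ∈ K) ∧
      ∀ Y : Matrix κ ι ℝ, (∀ k, Y k ∈ K) → (Yᵀ * Y).det ≤ (Xᵀ * X).det := by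
    have det_continuous : Continuous fun X : Matrix κ ι ℝ => (Xᵀ * X).det := by fun_prop
    obtain ⟨X, hX, hmax⟩ := (isCompact_univ_pi fun _ : κ => hK).exists_isMaxOn
      ⟨X₀, fun k _ => hX₀ k⟩ det_continuous.continuousOn
    exact ⟨X, fun k => hX k trivial, fun Y hY => hmax fun k _ => hY k⟩
  have det_pos : 0 < (Xᵀ * X).det :=
    ((det_nonneg X₀).lt_of_ne' hX₀_det).trans_le (hmax X₀ hX₀)
  have hX_unit := det_pos.ne'.isUnit
  have inv_symm : ((Xᵀ * X)⁻¹)ᵀ = (Xᵀ * X)⁻¹ := by simp [transpose_nonsing_inv]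
  refine ⟨X, hX, hX_unit, fun y hy => ?_⟩
  have exchange (k : κ) : (1 + y ⬝ᵥ (Xᵀ * X)⁻¹ *ᵥ y) * (1 - X k ⬝ᵥ (Xᵀ * X)⁻¹ *ᵥ X k) +
      (X k ⬝ᵥ (Xᵀ * X)⁻¹ *ᵥ y) ^ 2 ≤ 1 := by
    classical
    have le_max := hmax (X.updateRow k y) fun l => by
      rcases eq_or_ne l k with rfl | hl
      · rwa [updateRow_self]
      · rw [updateRow_ne hl]
        exact hX l
    have symm : y ⬝ᵥ (Xᵀ * X)⁻¹ *ᵥ X k = X k ⬝ᵥ (Xᵀ * X)⁻¹ *ᵥ y := by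
      rw [dotProduct_mulVec, ← mulVec_transpose, inv_symm, dotProduct_comm]
    rw [transpose_mul_self_updateRow, det_add_vecMulVec_sub_vecMulVec hX_unit, symm] at le_max
    rw [sq]
    exact le_of_mul_le_mul_left (by rwa [mul_one]) det_pos
  have average := sum_le_sum fun k (_ : k ∈ univ) => exchange k
  rw [sum_add_distrib, ← mul_sum, sum_sub_distrib, sum_dotProduct_inv_mulVec_self hX_unit,
    sum_dotProduct_inv_mulVec_sq hX_unit] at average
  simp only [sum_const, card_univ, nsmul_eq_mul, mul_one] at average
  linarith

/-- Vectors `w k` of the unit ball with coordinate functionals `l k` whose squares sum to at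
most `1` on the unit ball: the reconstruction `u = ∑ k, l k u • w k` costs only `√(card κ)` in `ℓ¹`,
where a basis would cost the dimension. -/
structure UnitFrame (κ E : Type*) [Fintype κ] [NormedAddCommGroup E] [NormedSpace ℝ E] where
  w : κ → E
  l : κ → E →ₗ[ℝ] ℝ
  w_mem : ∀ k, w k ∈ closedBall (0 : E) 1
  sum_smul : ∀ u, ∑ k, l k u • w k = u
  sum_sq_le : ∀ u ∈ closedBall (0 : E) 1, ∑ k, l k u ^ 2 ≤ 1

end OptimalDesign

section Frame

open Matrix

variable {E : Type*} [NormedAddCommGroup E] [NormedSpace ℝ E]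

theorem UnitFrame.sum_abs_le {κ : Type*} [Fintype κ] (W : UnitFrame κ E) {u : E}
    (hu : u ∈ closedBall (0 : E) 1) : ∑ k, |W.l k u| ≤ √(Fintype.card κ) := by
  refine Real.le_sqrt_of_sq_le ?_
  have cauchy_schwarz := sq_sum_le_card_mul_sum_sq (s := univ) (f := fun k => |W.l k u|)
  simp only [sq_abs, card_univ] at cauchy_schwarz
  exact cauchy_schwarz.trans (mul_le_of_le_one_right (Nat.cast_nonneg _) (W.sum_sq_le u hu))

theorem UnitFrame.abs_sum_mul_sub_sum_mul_le {κ : Type*} [Fintype κ] (W : UnitFrame κ E) {u : E}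
    (hu : u ∈ closedBall (0 : E) 1) {a b : κ → ℝ} {ε : ℝ} (hε : 0 ≤ ε)
    (hab : ∀ k, |a k - b k| ≤ ε) :
    |∑ k, W.l k u * a k - ∑ k, W.l k u * b k| ≤ √(Fintype.card κ) * ε := by
  rw [← sum_sub_distrib]
  calc |∑ k, (W.l k u * a k - W.l k u * b k)| ≤ ∑ k, |W.l k u| * ε := by
        refine (abs_sum_le_sum_abs _ _).trans (sum_le_sum fun k _ => ?_)
        rw [← mul_sub, abs_mul]
        exact mul_le_mul_of_nonneg_left (hab k) (abs_nonneg _)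
    _ ≤ √(Fintype.card κ) * ε := by
        rw [← sum_mul]
        exact mul_le_mul_of_nonneg_right (W.sum_abs_le hu) hε

variable (E) in
theorem exists_basis_mem_closedBall [FiniteDimensional ℝ E] :
    ∃ b : Module.Basis (Fin (Module.finrank ℝ E)) ℝ E, ∀ i, b i ∈ closedBall (0 : E) 1 := by
  let b := Module.finBasis ℝ E
  have norm_ne_zero (i) : ‖b i‖⁻¹ ≠ 0 := inv_ne_zero (norm_ne_zero_iff.mpr (b.ne_zero i))
  refine ⟨b.isUnitSMul fun i => (norm_ne_zero i).isUnit, fun i => ?_⟩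
  rw [Module.Basis.isUnitSMul_apply, mem_closedBall_zero_iff, norm_smul, norm_inv, norm_norm]
  exact inv_mul_le_one

theorem nonempty_unitFrame {ι : Type*} [Fintype ι] {b : Module.Basis ι ℝ E}
    (hb : ∀ i, b i ∈ closedBall (0 : E) 1) : Nonempty (UnitFrame (ι ⊕ ι) E) := by
  classical
  have := Module.Finite.of_basis b
  have := FiniteDimensional.proper ℝ E
  let e : E ≃ₗ[ℝ] (ι → ℝ) := b.equivFun
  have compact : IsCompact (e '' closedBall 0 1) :=
    (isCompact_closedBall 0 1).image e.toLinearMap.continuous_of_finiteDimensional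
  have spanning : ∃ X : Matrix (ι ⊕ ι) ι ℝ,
      (∀ k, X k ∈ e '' closedBall 0 1) ∧ (Xᵀ * X).det ≠ 0 := by
    refine ⟨fromRows 1 1, ?_, ?_⟩
    · rintro (i | i) <;>
        exact ⟨b i, hb i, by ext j; simp [e, one_apply]⟩
    · rw [transpose_fromRows, fromCols_mul_fromRows, transpose_one, Matrix.mul_one, ← two_smul ℝ,
        det_smul, det_one]
      positivity
  obtain ⟨X, hX, hX_unit, hX_le⟩ := exists_optimal_design compact spanning
  let l (k : ι ⊕ ι) : E →ₗ[ℝ] ℝ :=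
    LinearMap.proj k ∘ₗ (X * (Xᵀ * X)⁻¹).mulVecLin ∘ₗ e.toLinearMap
  have l_apply (k) (u : E) : l k u = X k ⬝ᵥ (Xᵀ * X)⁻¹ *ᵥ e u := by
    change ((X * (Xᵀ * X)⁻¹) *ᵥ e u) k = _
    rw [← mulVec_mulVec]
    rfl
  exact ⟨{
    w := fun k => e.symm (X k)
    l := l
    w_mem := fun k => by
      obtain ⟨x, hx, hxk⟩ := hX k
      rwa [← hxk, e.symm_apply_apply]
    sum_smul := fun u => by
      simp only [l_apply, ← map_smul, ← map_sum, sum_dotProduct_inv_mulVec_smul hX_unit,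
        e.symm_apply_apply]
    sum_sq_le := fun u hu => by
      simp only [l_apply, sum_dotProduct_inv_mulVec_sq hX_unit]
      have kiefer_wolfowitz := hX_le (e u) ⟨u, hu, rfl⟩
      rw [Fintype.card_sum, Nat.cast_add] at kiefer_wolfowitz
      refine le_of_mul_le_mul_left (a := (Fintype.card ι + 1 : ℝ)) ?_ (by positivity)
      linarith }⟩

end Frame

section MultilinearApproximation

variable {κ E : Type*} [Fintype κ] [NormedAddCommGroup E] {k p : ℕ} {c : ℝ}
  {b : (Fin (k + 1) → E) → ℝ}

theorem cons_mem_unitClosedBall {u : E} {y : Fin k → E} (hu : u ∈ closedBall (0 : E) 1)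
    (hy : ∀ i, y i ∈ closedBall (0 : E) 1) (i : Fin (k + 1)) :
    (Fin.cons u y : Fin (k + 1) → E) i ∈ closedBall (0 : E) 1 :=
  Fin.cases hu hy i

namespace IsQuasiMultiadditive

theorem comp_cons (hb : IsQuasiMultiadditive b c) {u : E} (hu : u ∈ closedBall (0 : E) 1) :
    IsQuasiMultiadditive (fun y : Fin k → E => b (Fin.cons u y)) c := by
  intro y hy i
  simp only [Fin.cons_update]
  exact hb _ (cons_mem_unitClosedBall hu hy) _

theorem isQuasiAdditive_cons (hb : IsQuasiMultiadditive b c) {y : Fin k → E}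
    (hy : ∀ i, y i ∈ closedBall (0 : E) 1) : IsQuasiAdditive (fun u => b (Fin.cons u y)) c := by
  simpa only [Fin.update_cons_zero] using
    hb _ (cons_mem_unitClosedBall (mem_closedBall_self zero_le_one) hy) 0

variable [NormedSpace ℝ E]

theorem abs_sub_frame_sum_le (hb : IsQuasiMultiadditive b c) (W : UnitFrame κ E)
    (hκ : Fintype.card κ ≤ 2 ^ p) {x : Fin (k + 1) → E} (hx : ∀ i, x i ∈ closedBall (0 : E) 1) :
    |b x - ∑ j, W.l j (x 0) * b (Fin.cons (W.w j) (Fin.tail x))| ≤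
      ((10 * p + 23) * √(Fintype.card κ) + 3) * c := by
  have head := hb.isQuasiAdditive_cons fun i => hx i.succ
  have c_nonneg : 0 ≤ c := head.nonneg_s17
  have expansion := head.abs_map_sum_smul_sub_le W.w_mem (a := fun j => W.l j (x 0))
    (by rw [W.sum_smul]; exact hx 0) hκ
  rw [W.sum_smul] at expansion
  refine (le_of_eq_of_le ?_ expansion).trans (by gcongr; exact W.sum_abs_le (hx 0))
  congr 3
  exact (Fin.cons_self_tail x).symm

/-- Expanding the first variable in a frame costs a factor `√(card κ)`; Hahn–Banach handles the
last variable, so that only `k` such factors arise from `k + 1` variables. -/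
theorem exists_multilinearMap_succ [Nonempty κ] [FiniteDimensional ℝ E]
    (hb : IsQuasiMultiadditive b c) (W : UnitFrame κ E) (hκ : Fintype.card κ ≤ 2 ^ p)
    (hE : Module.finrank ℝ E + 2 ≤ 2 ^ p) :
    ∃ L : MultilinearMap ℝ (fun _ : Fin (k + 1) => E) ℝ,
      ∀ x, (∀ i, x i ∈ closedBall (0 : E) 1) →
        |b x - L x| ≤ 36 * (k + 1) * √(Fintype.card κ) ^ k * p * c := by
  have one_le_p : (1 : ℝ) ≤ p := by
    rcases p with _ | p
    · omega
    · simp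
  have c_nonneg : 0 ≤ c :=
    (hb 0 (fun _ => mem_closedBall_self zero_le_one) 0).nonneg_s17
  induction k with
  | zero =>
    obtain ⟨L, hL⟩ :=
      (hb.isQuasiAdditive_cons (y := ![]) fun i => i.elim0).exists_linearMap_abs_sub_le hE
    refine ⟨MultilinearMap.ofSubsingleton ℝ _ _ (0 : Fin 1) L, fun x hx => ?_⟩
    have x_eq : x = Fin.cons (x 0) ![] := by
      ext i
      rw [Subsingleton.elim (α := Fin 1) i 0, Fin.cons_zero]
    rw [MultilinearMap.ofSubsingleton_apply_apply]
    conv_lhs => rw [x_eq]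
    refine (hL (x 0) (hx 0)).trans ?_
    rw [Nat.cast_zero, zero_add, pow_zero, mul_one, mul_one]
    gcongr
    linarith
  | succ k ih =>
    set q := √(Fintype.card κ)
    have one_le_q : 1 ≤ q := Real.one_le_sqrt.mpr (by exact_mod_cast Fintype.card_pos)
    choose L hL using fun j => ih (hb.comp_cons (W.w_mem j))
    let L' : MultilinearMap ℝ (fun _ : Fin (k + 2) => E) ℝ :=
      LinearMap.uncurryLeft (M := fun _ : Fin (k + 2) => E) (∑ j, (W.l j).smulRight (L j))
    refine ⟨L', fun x hx => ?_⟩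
    have L'_apply : L' x = ∑ j, W.l j (x 0) * L j (Fin.tail x) := by
      simp [L', LinearMap.uncurryLeft_apply, LinearMap.sum_apply]
    set ε := 36 * (k + 1) * q ^ k * p * c
    have replaced : |∑ j, W.l j (x 0) * b (Fin.cons (W.w j) (Fin.tail x)) - L' x| ≤ q * ε := by
      rw [L'_apply]
      exact W.abs_sum_mul_sub_sum_mul_le (hx 0) (by positivity) fun j => hL j _ fun i => hx i.succ
    have expanded := hb.abs_sub_frame_sum_le W hκ hx
    calc |b x - L' x| ≤ ((10 * p + 23) * q + 3) * c + q * ε :=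
          (abs_sub_le _ _ _).trans (add_le_add expanded replaced)
      _ ≤ 36 * (q ^ (k + 1) * p) * c + q * ε := by
          have q_le : q * p ≤ q ^ (k + 1) * p := by
            gcongr
            exact le_self_pow₀ one_le_q k.succ_ne_zero
          have : q ≤ q * p := le_mul_of_one_le_right (by positivity) one_le_p
          gcongr
          linarith
      _ = _ := by push_cast [ε]; ring

theorem exists_multilinearMap [Nonempty κ] [FiniteDimensional ℝ E] {b : (Fin k → E) → ℝ}
    (hb : IsQuasiMultiadditive b c) (W : UnitFrame κ E) (hκ : Fintype.card κ ≤ 2 ^ p)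
    (hE : Module.finrank ℝ E + 2 ≤ 2 ^ p) :
    ∃ L : MultilinearMap ℝ (fun _ : Fin k => E) ℝ, ∀ x, (∀ i, x i ∈ closedBall (0 : E) 1) →
      |b x - L x| ≤ 36 * k * √(Fintype.card κ) ^ (k - 1) * p * c := by
  rcases k with _ | k
  · refine ⟨MultilinearMap.constOfIsEmpty ℝ _ (b ![]), fun x _ => ?_⟩
    rw [MultilinearMap.constOfIsEmpty_apply, Subsingleton.elim x ![]]
    simp
  · simpa using hb.exists_multilinearMap_succ W hκ hE

end IsQuasiMultiadditive

end MultilinearApproximation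

theorem exists_mvPolynomial_eval_eq_multilinearMap {ι R : Type*} [Finite ι] [CommRing R] {k : ℕ}
    (L : MultilinearMap R (fun _ : Fin k => ι → R) R) :
    ∃ P : MvPolynomial ι R, P.totalDegree ≤ k ∧ ∀ x, MvPolynomial.eval x P = L fun _ => x := by
  classical
  have := Fintype.ofFinite ι
  refine ⟨∑ r : Fin k → ι, MvPolynomial.C (L fun i => Pi.single (r i) 1) *
    ∏ i, MvPolynomial.X (r i), ?_, fun x => ?_⟩
  · refine MvPolynomial.totalDegree_finsetSum_le fun r _ =>
      (MvPolynomial.totalDegree_mul _ _).trans ?_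
    rw [MvPolynomial.totalDegree_C, zero_add]
    refine (MvPolynomial.totalDegree_finsetProd _ _).trans
      ((sum_le_card_nsmul _ _ 1 fun i _ => ?_).trans_eq (by simp))
    exact (MvPolynomial.totalDegree_monomial_le _ _).trans (by simp)
  · conv_rhs => rw [pi_eq_sum_univ' x, L.map_sum]
    simp only [L.map_smul_univ, smul_eq_mul, map_sum, map_mul, map_prod, MvPolynomial.eval_C,
      MvPolynomial.eval_X, mul_comm]

section Rate

/-- The dimension dependence of the Whitney constant of order `m`. -/
noncomputable def whitneyRate (m n : ℕ) : ℝ := (n : ℝ) ^ ((m : ℝ) / 2 - 1) * Real.log (n + 1)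

variable {m n k : ℕ}

theorem log_two_le_log_add_one (hn : 1 ≤ n) : Real.log 2 ≤ Real.log (n + 1) := by
  have : (1 : ℝ) ≤ n := by exact_mod_cast hn
  exact Real.log_le_log two_pos (by linarith)

theorem one_le_inv_log_two_mul_whitneyRate (hm : 2 ≤ m) (hn : 1 ≤ n) :
    1 ≤ (Real.log 2)⁻¹ * whitneyRate m n := by
  have two_le_m : (2 : ℝ) ≤ m := by exact_mod_cast hm
  have one_le_rpow : (1 : ℝ) ≤ (n : ℝ) ^ ((m : ℝ) / 2 - 1) :=
    Real.one_le_rpow (by exact_mod_cast hn) (by linarith)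
  have log_two_pos : 0 < Real.log 2 := Real.log_pos one_lt_two
  have log_le := log_two_le_log_add_one hn
  rw [le_inv_mul_iff₀ log_two_pos, mul_one]
  exact log_le.trans (le_mul_of_one_le_left (log_two_pos.le.trans log_le) one_le_rpow)

theorem natLog_add_two_le (hn : 1 ≤ n) :
    ((Nat.log 2 (n + 1) + 2 : ℕ) : ℝ) ≤ 3 / Real.log 2 * Real.log (n + 1) := by
  have log_two_pos : 0 < Real.log 2 := Real.log_pos one_lt_two
  have natLog_le : (Nat.log 2 (n + 1) : ℝ) ≤ Real.log (n + 1) / Real.log 2 := by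
    simpa [Real.logb] using Real.natLog_le_logb (n + 1) 2
  have one_le : 1 ≤ Real.log (n + 1) / Real.log 2 :=
    (one_le_div log_two_pos).mpr (log_two_le_log_add_one hn)
  rw [div_mul_eq_mul_div, mul_div_assoc]
  push_cast
  linarith

theorem two_mul_add_two_le_two_pow (n : ℕ) : 2 * n + 2 ≤ 2 ^ (Nat.log 2 (n + 1) + 2) := by
  have := Nat.lt_pow_succ_log_self one_lt_two (n + 1)
  rw [pow_succ]
  omega

theorem sqrt_pow_eq_rpow (hm : 2 ≤ m) (n : ℕ) :
    √(n : ℝ) ^ (m - 2) = (n : ℝ) ^ ((m : ℝ) / 2 - 1) := by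
  rw [Real.sqrt_eq_rpow, ← Real.rpow_natCast, ← Real.rpow_mul n.cast_nonneg, Nat.cast_sub hm]
  congr 1
  push_cast
  ring

theorem sqrt_pow_mul_natLog_le (hm : 2 ≤ m) (hkm : k < m) (hn : 1 ≤ n) :
    √(n + n : ℝ) ^ (k - 1) * (Nat.log 2 (n + 1) + 2 : ℕ) ≤
      √2 ^ (m - 2) * (3 / Real.log 2) * whitneyRate m n := by
  have one_le_n : (1 : ℝ) ≤ n := by exact_mod_cast hn
  calc √(n + n : ℝ) ^ (k - 1) * (Nat.log 2 (n + 1) + 2 : ℕ)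
      ≤ √(n + n : ℝ) ^ (m - 2) * (3 / Real.log 2 * Real.log (n + 1)) := by
        have exponent_le : k - 1 ≤ m - 2 := by omega
        gcongr
        · exact Real.one_le_sqrt.mpr (by linarith)
        · exact natLog_add_two_le hn
    _ = √2 ^ (m - 2) * (3 / Real.log 2) * whitneyRate m n := by
        rw [← two_mul, Real.sqrt_mul zero_le_two, mul_pow, sqrt_pow_eq_rpow hm, whitneyRate]
        ring

end Rate

section UnitBall

variable {E : Type*} [NormedAddCommGroup E] [NormedSpace ℝ E] [FiniteDimensional ℝ E]
  [Nontrivial E] {f : E → ℝ} {c t : ℝ} {k m : ℕ}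

theorem _root_.diffBound.exists_multilinearMap_abs_pair_sub_le (hm : 2 ≤ m) (hkm : k < m)
    (hf : diffBound (k + 1) (closedBall 0 1) f c)
    (hbdd : ∃ M, ∀ x ∈ closedBall (0 : E) 1, |f x| ≤ M) (ht : 0 ≤ t)
    (htk : t ≤ (((k + 1 : ℕ) : ℝ) ^ 2)⁻¹) :
    ∃ L : MultilinearMap ℝ (fun _ : Fin k => E) ℝ, ∀ x ∈ closedBall (0 : E) 1,
      |pair f ((dirac (t • x) - 1) ^ k) - L fun _ => x| ≤
        36 * k * (√2 ^ (m - 2) * (3 / Real.log 2) * whitneyRate m (finrank ℝ E)) *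
          (2 ^ (k + 1) * c) := by
  obtain ⟨b, hb⟩ := exists_basis_mem_closedBall E
  obtain ⟨W⟩ := nonempty_unitFrame hb
  have : Nonempty (Fin (finrank ℝ E)) := ⟨⟨0, finrank_pos⟩⟩
  have := two_mul_add_two_le_two_pow (finrank ℝ E)
  have card_eq : Fintype.card (Fin (finrank ℝ E) ⊕ Fin (finrank ℝ E)) =
      finrank ℝ E + finrank ℝ E := by simp
  obtain ⟨L, hL⟩ := (hf.isQuasiMultiadditive hbdd ht htk).exists_multilinearMap W
    (p := Nat.log 2 (finrank ℝ E + 1) + 2) (by omega) (by omega)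
  have c_nonneg : 0 ≤ c := hf.nonneg_s17 (mem_closedBall_self zero_le_one)
  refine ⟨L, fun x hx => ?_⟩
  have approx := hL (fun _ => x) fun _ => hx
  rw [mixedDiff_const, card_eq, Nat.cast_add (finrank ℝ E) (finrank ℝ E),
    mul_assoc (36 * (k : ℝ))] at approx
  refine approx.trans ?_
  gcongr 36 * k * ?_ * (2 ^ (k + 1) * c)
  exact sqrt_pow_mul_natLog_le hm hkm finrank_pos

theorem inv_two_pow_le_inv_sq (k : ℕ) :
    (2⁻¹ : ℝ) ^ (3 * k + 2) ≤ (((k + 1 : ℕ) : ℝ) ^ 2)⁻¹ := by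
  rw [inv_pow]
  have : (k + 1) ^ 2 ≤ 2 ^ (3 * k + 2) :=
    calc (k + 1) ^ 2 ≤ (2 ^ k) ^ 2 := Nat.pow_le_pow_left k.lt_two_pow_self 2
      _ ≤ 2 ^ (3 * k + 2) := by rw [← pow_mul]; exact Nat.pow_le_pow_right two_pos (by omega)
  gcongr
  exact_mod_cast this

end UnitBall

theorem exists_multilinearMap_abs_sub_le_of_quasiHom {k m : ℕ} (hm : 2 ≤ m) (hkm : k < m) :
    ∃ D : ℝ, ∀ {E : Type u} [NormedAddCommGroup E] [NormedSpace ℝ E]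
      [FiniteDimensional ℝ E] [Nontrivial E] {f : E → ℝ} {c : ℝ},
      (∃ M, ∀ x ∈ closedBall (0 : E) 1, |f x| ≤ M) → QuasiHom k (closedBall 0 1) f c →
      diffBound m (closedBall 0 1) f c →
      ∃ L : MultilinearMap ℝ (fun _ : Fin k => E) ℝ, ∀ x ∈ closedBall (0 : E) 1,
        |f x - L fun _ => x| ≤ D * whitneyRate m (finrank ℝ E) * c := by
  obtain ⟨C₁, hC₁, lower_order⟩ := exists_diffBound_of_quasiHom.{u} hkm
  obtain ⟨σ, C₂, hC₂, approx⟩ := exists_abs_sub_mul_pair_sub_one_pow_le.{u} k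
  let D₁ := C₂ * (C₁ + 1) * (Real.log 2)⁻¹
  let D₂ := |σ| * (36 * k) * (√2 ^ (m - 2) * (3 / Real.log 2)) * (2 ^ (k + 1) * (C₁ + 1))
  refine ⟨D₁ + D₂, fun {E} _ _ _ _ {f c} hbdd hhom hf => ?_⟩
  have c_nonneg : 0 ≤ c := hf.nonneg_s17 (mem_closedBall_self zero_le_one)
  have hhom' : QuasiHom k (closedBall 0 1) f ((C₁ + 1) * c) := hhom.mono (by nlinarith)
  have hf' : diffBound (k + 1) (closedBall 0 1) f ((C₁ + 1) * c) :=
    (lower_order hbdd hhom hf).mono (by linarith)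
  obtain ⟨L, hL⟩ := hf'.exists_multilinearMap_abs_pair_sub_le hm hkm hbdd (by positivity)
    (inv_two_pow_le_inv_sq k)
  refine ⟨σ • L, fun x hx => ?_⟩
  set n := finrank ℝ E
  set Δ := pair f ((dirac ((2⁻¹ : ℝ) ^ (3 * k + 2) • x) - 1) ^ k)
  have pure_part : |f x - σ * Δ| ≤ D₁ * whitneyRate m n * c :=
    calc |f x - σ * Δ| ≤ C₂ * ((C₁ + 1) * c) :=
          approx (starConvex_closedBall zero_le_one) hhom' hf' x hx
      _ ≤ C₂ * ((C₁ + 1) * c) * ((Real.log 2)⁻¹ * whitneyRate m n) :=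
          le_mul_of_one_le_right (by positivity) (one_le_inv_log_two_mul_whitneyRate hm finrank_pos)
      _ = D₁ * whitneyRate m n * c := by ring
  have multilinear_part : |σ * (Δ - L fun _ => x)| ≤ D₂ * whitneyRate m n * c :=
    calc |σ * (Δ - L fun _ => x)|
        ≤ |σ| * (36 * k * (√2 ^ (m - 2) * (3 / Real.log 2) * whitneyRate m n) *
            (2 ^ (k + 1) * ((C₁ + 1) * c))) := by
          rw [abs_mul]
          exact mul_le_mul_of_nonneg_left (hL x hx) (abs_nonneg σ)
      _ = D₂ * whitneyRate m n * c := by ring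
  calc |f x - σ * L fun _ => x| = |(f x - σ * Δ) + σ * (Δ - L fun _ => x)| := by ring_nf
    _ ≤ D₁ * whitneyRate m n * c + D₂ * whitneyRate m n * c :=
        (abs_add_le _ _).trans (add_le_add pure_part multilinear_part)
    _ = (D₁ + D₂) * whitneyRate m n * c := by ring

theorem exists_multilinearMap_abs_homogPart_sub_le {k m : ℕ} (hm : 2 ≤ m) (hkm : k < m) :
    ∃ D : ℝ, ∀ {E : Type u} [NormedAddCommGroup E] [NormedSpace ℝ E]
      [FiniteDimensional ℝ E] [Nontrivial E] {f : E → ℝ} {c : ℝ},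
      (∃ M, ∀ x ∈ closedBall (0 : E) 1, |f x| ≤ M) → diffBound m (closedBall 0 1) f c →
      ∃ L : MultilinearMap ℝ (fun _ : Fin k => E) ℝ, ∀ x ∈ closedBall (0 : E) 1,
        |homogPart m k f x - L fun _ => x| ≤ D * whitneyRate m (finrank ℝ E) * c := by
  obtain ⟨D, approx⟩ := exists_multilinearMap_abs_sub_le_of_quasiHom.{u} hm hkm
  let A₁ := |Lagrange.nodalWeight (range m) (fun i => (2⁻¹ : ℝ) ^ i) k| *
    coeffNorm (dyadicPoly m /ₘ (X - 1) ^ m)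
  let A₂ := coeffNorm (Lagrange.basis (range m) (fun i => (2⁻¹ : ℝ) ^ i) k)
  have A₁_nonneg : 0 ≤ A₁ := mul_nonneg (abs_nonneg _) (coeffNorm_nonneg _)
  have A₂_nonneg : 0 ≤ A₂ := coeffNorm_nonneg _
  refine ⟨D * (A₁ + A₂), fun {E} _ _ _ _ {f c} ⟨M, hM⟩ hf => ?_⟩
  have ball_starConvex : StarConvex ℝ (0 : E) (closedBall 0 1) := starConvex_closedBall zero_le_one
  have c_nonneg : 0 ≤ c := hf.nonneg_s17 (mem_closedBall_self zero_le_one)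
  have part_quasiHom : QuasiHom k (closedBall 0 1) (homogPart m k f) ((A₁ + A₂) * c) := by
    refine (hf.quasiHom_homogPart ball_starConvex hkm).mono ?_
    rw [← mul_assoc]
    exact mul_le_mul_of_nonneg_right (le_add_of_nonneg_right A₂_nonneg) c_nonneg
  have part_diffBound : diffBound m (closedBall 0 1) (homogPart m k f) ((A₁ + A₂) * c) :=
    (hf.aeval_dilate ball_starConvex _).mono
      (mul_le_mul_of_nonneg_right (le_add_of_nonneg_left A₁_nonneg) c_nonneg)
  obtain ⟨L, hL⟩ := approx
    ⟨_, fun x hx => abs_aeval_dilate_le ball_starConvex hM _ hx⟩ part_quasiHom part_diffBound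
  exact ⟨L, fun x hx => (hL x hx).trans_eq (by ring)⟩

theorem exists_sum_multilinearMap_abs_sub_le {m : ℕ} (hm : 2 ≤ m) :
    ∃ C : ℝ, ∀ {E : Type u} [NormedAddCommGroup E] [NormedSpace ℝ E]
      [FiniteDimensional ℝ E] [Nontrivial E] {f : E → ℝ} {c : ℝ},
      (∃ M, ∀ x ∈ closedBall (0 : E) 1, |f x| ≤ M) → diffBound m (closedBall 0 1) f c →
      ∃ L : ∀ k : Fin m, MultilinearMap ℝ (fun _ : Fin k => E) ℝ, ∀ x ∈ closedBall (0 : E) 1,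
        |f x - ∑ k, L k fun _ => x| ≤ C * whitneyRate m (finrank ℝ E) * c := by
  choose D approx using fun k : Fin m =>
    exists_multilinearMap_abs_homogPart_sub_le.{u} hm k.isLt
  refine ⟨∑ k, D k, fun {E} _ _ _ _ {f c} hbdd hf => ?_⟩
  choose L hL using fun k => approx k hbdd hf
  refine ⟨L, fun x hx => ?_⟩
  have f_eq : f x = ∑ k : Fin m, homogPart m k f x := by
    conv_lhs => rw [← sum_homogPart (by omega : m ≠ 0) f, Finset.sum_apply,
      ← Fin.sum_univ_eq_sum_range (fun k => homogPart m k f x)]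
  rw [f_eq, ← sum_sub_distrib, sum_mul, sum_mul]
  exact (abs_sum_le_sum_abs _ _).trans (sum_le_sum fun k _ => hL k x hx)

section Coordinates

theorem _root_.diffBound.comp_linearMap {E E' : Type*} [AddCommGroup E] [Module ℝ E]
    [AddCommGroup E'] [Module ℝ E'] {K : Set E} {K' : Set E'} {f : E → ℝ} {c : ℝ} {m : ℕ}
    (hf : diffBound m K f c) (T : E' →ₗ[ℝ] E) (hT : Set.MapsTo T K' K) :
    diffBound m K' (f ∘ T) c := by
  intro x h hxh
  simpa using hf (T x) (T h) fun j hj => by simpa using hT (hxh j hj)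

variable {ι : Type u} [Fintype ι] {N : (ι → ℝ) → ℝ}

theorem _root_.IsNormFn.exists_linearEquiv (hN : IsNormFn N) :
    ∃ (E : Type u) (_ : NormedAddCommGroup E) (_ : NormedSpace ℝ E) (e : (ι → ℝ) ≃ₗ[ℝ] E),
      ∀ x, ‖e x‖ = N x := by
  obtain ⟨nonneg_s17, eq_zero_iff, map_smul, add_le⟩ := hN
  let _ : Norm (ι → ℝ) := ⟨N⟩
  have core : NormedSpace.Core ℝ (ι → ℝ) :=
    { norm_nonneg := nonneg_s17
      norm_smul := map_smul
      norm_triangle := add_le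
      norm_eq_zero_iff := eq_zero_iff }
  let group := NormedAddCommGroup.ofCore core
  exact ⟨ι → ℝ, group, @NormedSpace.ofCore ℝ _ _ group.toSeminormedAddCommGroup _ core,
    LinearEquiv.refl ℝ _, fun _ => rfl⟩

theorem _root_.IsNormFn.isCompact_unitBall (hN : IsNormFn N) : IsCompact {x | N x ≤ 1} := by
  obtain ⟨E, _, _, e, he⟩ := hN.exists_linearEquiv
  have : FiniteDimensional ℝ E := e.finiteDimensional
  have : ProperSpace E := FiniteDimensional.proper ℝ E
  have : {x | N x ≤ 1} = e.symm '' closedBall 0 1 := by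
    ext x
    simp [e.symm.image_eq_preimage_symm, he]
  rw [this]
  exact (isCompact_closedBall 0 1).image e.symm.toLinearMap.continuous_of_finiteDimensional

theorem exists_mvPolynomial_eval_eq_sum_multilinearMap {ι R E : Type*} [Finite ι] [CommRing R]
    [AddCommGroup E] [Module R E] {m : ℕ} (L : ∀ k : Fin m, MultilinearMap R (fun _ : Fin k => E) R)
    (T : (ι → R) →ₗ[R] E) :
    ∃ P : MvPolynomial ι R, P.totalDegree ≤ m - 1 ∧
      ∀ x, MvPolynomial.eval x P = ∑ k, L k fun _ => T x := by
  choose P degree_le eval_eq using fun k =>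
    exists_mvPolynomial_eval_eq_multilinearMap ((L k).compLinearMap fun _ => T)
  refine ⟨∑ k, P k, MvPolynomial.totalDegree_finsetSum_le fun k _ => ?_, fun x => ?_⟩
  · exact (degree_le k).trans (Nat.le_sub_one_of_lt k.isLt)
  · simp only [map_sum, eval_eq, MultilinearMap.compLinearMap_apply]

end Coordinates

end Whitney


open Whitney in
theorem whitney_m_symmetric_upper_bound_general (m : ℕ) (hm : 2 ≤ m) :
    ∃ C : ℝ, ∀ n : ℕ, 1 ≤ n →
      ∀ N : (Fin n → ℝ) → ℝ, IsNormFn N →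
        ∀ f : (Fin n → ℝ) → ℝ, (∃ M, ∀ x, N x ≤ 1 → |f x| ≤ M) →
          ∀ c : ℝ, diffBound m {x | N x ≤ 1} f c →
            ∃ P : MvPolynomial (Fin n) ℝ, P.totalDegree ≤ m - 1 ∧
              ∀ x, N x ≤ 1 →
                |f x - MvPolynomial.eval x P| ≤
                  C * (n : ℝ) ^ ((m : ℝ) / 2 - 1) * Real.log (n + 1) * c := by
  obtain ⟨C, approx⟩ := exists_sum_multilinearMap_abs_sub_le.{0} hm
  refine ⟨C, fun n hn N hN f ⟨M, hM⟩ c hf => ?_⟩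
  obtain ⟨E, _, _, e, he⟩ := hN.exists_linearEquiv
  have : FiniteDimensional ℝ E := e.finiteDimensional
  have finrank_eq : Module.finrank ℝ E = n := by rw [← e.finrank_eq, Module.finrank_fin_fun]
  have : Nontrivial E := Module.nontrivial_of_finrank_pos (R := ℝ) (by omega)
  have mem_ball_iff (x : Fin n → ℝ) : e x ∈ Metric.closedBall 0 1 ↔ N x ≤ 1 := by
    rw [mem_closedBall_zero_iff, he]
  have symm_mapsTo : Set.MapsTo e.symm (Metric.closedBall 0 1) {x | N x ≤ 1} := fun u hu =>
    (mem_ball_iff _).mp (by rwa [e.apply_symm_apply])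
  obtain ⟨L, hL⟩ := approx ⟨M, fun u hu => hM _ (symm_mapsTo hu)⟩
    (hf.comp_linearMap e.symm.toLinearMap symm_mapsTo)
  obtain ⟨P, degree_le, eval_eq⟩ := exists_mvPolynomial_eval_eq_sum_multilinearMap L e.toLinearMap
  refine ⟨P, degree_le, fun x hx => ?_⟩
  simpa [eval_eq, finrank_eq, whitneyRate, mul_assoc] using hL (e x) ((mem_ball_iff x).mpr hx)

/-- Corollary 5.6: `w_m^{(s)}(n) ≤ C n^{m/2−1} log(n+1)`. -/
theorem whitney_m_symmetric_upper_bound (m : ℕ) (hm : 2 ≤ m) :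
    ∃ C : ℝ, ∀ n : ℕ, 1 ≤ n →
      ∀ N : (Fin n → ℝ) → ℝ, IsNormFn N →
        ∀ f : (Fin n → ℝ) → ℝ, ContinuousOn f {x | N x ≤ 1} → diffBound m {x | N x ≤ 1} f 1 →
          ∃ P : MvPolynomial (Fin n) ℝ, P.totalDegree ≤ m - 1 ∧
            ∀ x, N x ≤ 1 →
              |f x - MvPolynomial.eval x P| ≤
                C * (n : ℝ) ^ ((m : ℝ) / 2 - 1) * Real.log (n + 1) := by
  obtain ⟨C, approx⟩ := whitney_m_symmetric_upper_bound_general m hm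
  exact ⟨C, fun n hn N hN f hf hd => by
    simpa using approx n hn N hN f (hN.isCompact_unitBall.exists_bound_of_continuousOn hf) 1 hd⟩
end
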